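/- arXiv:2402.04650 — 3 statements merged into one kernel-verified Lean document; each statement's English description precedes it below -/
import Mathlib

section
/- Let μ be a probability measure on ℝ^d and let μ_T be its forward marginal at time T. Then KL(μ_T ‖ γ_{σ²}) ≤ exp(−(1/σ²) ∫₀^T β(s) ds) · KL(μ ‖ γ_{σ²}), the inequality holding in [0, ∞]. -/
open MeasureTheory Real Set
open scoped ENNReal Classical

noncomputable section

/-- Density of the Gaussian measure `N(0, σ² I_d)` on `ℝ^d` (here `σ2 = σ²`). -/
def gaussDensity (d : ℕ) (σ2 : ℝ) (x : EuclideanSpace ℝ (Fin d)) : ℝ :=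
  (2 * π * σ2) ^ (-(d : ℝ) / 2) * Real.exp (-‖x‖ ^ 2 / (2 * σ2))

/-- The Gaussian measure `γ_{σ²} = N(0, σ² I_d)` on `ℝ^d`. -/
def gaussMeasure (d : ℕ) (σ2 : ℝ) : Measure (EuclideanSpace ℝ (Fin d)) :=
  volume.withDensity fun x => ENNReal.ofReal (gaussDensity d σ2 x)

/-- Kullback–Leibler divergence `KL(μ‖ν) ∈ [0,∞]`: equal to `∫ log(dμ/dν) dμ` when `μ ≪ ν`
(and the integral makes sense), and `+∞` otherwise. -/
def KL {E : Type*} [MeasurableSpace E] (μ ν : Measure E) : ℝ≥0∞ :=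
  if μ ≪ ν ∧ Integrable (fun x => Real.log (μ.rnDeriv ν x).toReal) μ then
    ENNReal.ofReal (∫ x, Real.log (μ.rnDeriv ν x).toReal ∂μ)
  else ⊤

/-- `m_t = exp(−(1/(2σ²)) ∫₀^t β(s) ds)` (here `σ2 = σ²`). -/
def mcoef (σ2 : ℝ) (β : ℝ → ℝ) (t : ℝ) : ℝ :=
  Real.exp (-(1 / (2 * σ2)) * ∫ s in (0:ℝ)..t, β s)

/-- `σ_t = (σ²(1 − m_t²))^{1/2}` (here `σ2 = σ²`). -/
def scoef (σ2 : ℝ) (β : ℝ → ℝ) (t : ℝ) : ℝ :=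
  Real.sqrt (σ2 * (1 - mcoef σ2 β t ^ 2))

/-- The forward marginal `μ_t`: the law of `m_t X + σ_t Z` where `X ∼ μ` and
`Z ∼ N(0, I_d)` are independent. -/
def forwardMarginal (d : ℕ) (σ2 : ℝ) (β : ℝ → ℝ) (μ : Measure (EuclideanSpace ℝ (Fin d)))
    (t : ℝ) : Measure (EuclideanSpace ℝ (Fin d)) :=
  Measure.map (fun p : EuclideanSpace ℝ (Fin d) × EuclideanSpace ℝ (Fin d) =>
    mcoef σ2 β t • p.1 + scoef σ2 β t • p.2) (μ.prod (gaussMeasure d 1))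

lemma log_one_add_le {b : ℝ} (hb : -1 < b) : Real.log (1 + b) ≤ b - b ^ 2 / 2 + b ^ 3 / 3 := by
  have hd : ∀ x : ℝ, -1 < x → HasDerivAt (fun x : ℝ => x - x ^ 2 / 2 + x ^ 3 / 3 - Real.log (1 + x))
      (x ^ 3 / (1 + x)) x := by
    intro x hx
    have h1 : (1 + x) ≠ 0 := by linarith
    have h := (((hasDerivAt_id x).sub (((hasDerivAt_id x).pow 2).div_const 2)).add
      (((hasDerivAt_id x).pow 3).div_const 3)).sub (((hasDerivAt_id x).const_add 1).log h1)
    refine h.congr_deriv ?_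
    simp
    field_simp
    ring
  have key : 0 ≤ b - b ^ 2 / 2 + b ^ 3 / 3 - Real.log (1 + b) := by
    rcases le_total 0 b with h | h
    · have hm : MonotoneOn (fun x : ℝ => x - x ^ 2 / 2 + x ^ 3 / 3 - Real.log (1 + x)) (Icc 0 b) := by
        apply monotoneOn_of_deriv_nonneg (convex_Icc 0 b)
        · intro x hx; exact (hd x (by linarith [hx.1])).continuousAt.continuousWithinAt
        · intro x hx; rw [interior_Icc] at hx
          exact (hd x (by linarith [hx.1])).differentiableAt.differentiableWithinAt
        · intro x hx; rw [interior_Icc] at hx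
          rw [(hd x (by linarith [hx.1])).deriv]
          have := hx.1
          positivity
      have := hm ⟨le_refl _, h⟩ ⟨h, le_refl _⟩ h
      simpa using this
    · have hm : AntitoneOn (fun x : ℝ => x - x ^ 2 / 2 + x ^ 3 / 3 - Real.log (1 + x)) (Icc b 0) := by
        apply antitoneOn_of_deriv_nonpos (convex_Icc b 0)
        · intro x hx; exact (hd x (by linarith [hx.1])).continuousAt.continuousWithinAt
        · intro x hx; rw [interior_Icc] at hx
          exact (hd x (by linarith [hx.1])).differentiableAt.differentiableWithinAt
        · intro x hx; rw [interior_Icc] at hx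
          rw [(hd x (by linarith [hx.1])).deriv]
          apply div_nonpos_of_nonpos_of_nonneg
          · have := hx.2
            nlinarith [sq_nonneg x]
          · linarith [hx.1]
      have := hm ⟨le_refl _, h⟩ ⟨h, le_refl _⟩ h
      simpa using this
  linarith

lemma mul_log_one_add_ge {a : ℝ} (ha : -1 < a) :
    a + a ^ 2 / 2 - a ^ 3 / 6 ≤ (1 + a) * Real.log (1 + a) := by
  have hd1 : ∀ x : ℝ, -1 < x → HasDerivAt (fun x : ℝ => Real.log (1 + x) - x + x ^ 2 / 2)
      (x ^ 2 / (1 + x)) x := by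
    intro x hx
    have h1 : (1 + x) ≠ 0 := by linarith
    have h := ((((hasDerivAt_id x).const_add 1).log h1).sub (hasDerivAt_id x)).add
      (((hasDerivAt_id x).pow 2).div_const 2)
    refine h.congr_deriv ?_
    simp
    field_simp
    ring
  have hm1 : MonotoneOn (fun x : ℝ => Real.log (1 + x) - x + x ^ 2 / 2) (Ioi (-1)) := by
    apply monotoneOn_of_deriv_nonneg (convex_Ioi _)
    · intro x hx; exact (hd1 x hx).continuousAt.continuousWithinAt
    · intro x hx; rw [interior_Ioi] at hx
      exact (hd1 x hx).differentiableAt.differentiableWithinAt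
    · intro x hx; rw [interior_Ioi] at hx
      rw [(hd1 x hx).deriv]
      have : 0 < 1 + x := by have := mem_Ioi.1 hx; linarith
      positivity
  have hd : ∀ x : ℝ, -1 < x → HasDerivAt
      (fun x : ℝ => (1 + x) * Real.log (1 + x) - (x + x ^ 2 / 2 - x ^ 3 / 6))
      (Real.log (1 + x) - x + x ^ 2 / 2) x := by
    intro x hx
    have h1 : (1 + x) ≠ 0 := by linarith
    have h := (((hasDerivAt_id x).const_add 1).mul (((hasDerivAt_id x).const_add 1).log h1)).sub
      (((hasDerivAt_id x).add (((hasDerivAt_id x).pow 2).div_const 2)).sub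
      (((hasDerivAt_id x).pow 3).div_const 6))
    refine h.congr_deriv ?_
    simp
    field_simp
    ring
  have key : 0 ≤ (1 + a) * Real.log (1 + a) - (a + a ^ 2 / 2 - a ^ 3 / 6) := by
    rcases le_total 0 a with h | h
    · have hm : MonotoneOn (fun x : ℝ => (1 + x) * Real.log (1 + x) - (x + x ^ 2 / 2 - x ^ 3 / 6))
          (Icc 0 a) := by
        apply monotoneOn_of_deriv_nonneg (convex_Icc 0 a)
        · intro x hx; exact (hd x (by linarith [hx.1])).continuousAt.continuousWithinAt
        · intro x hx; rw [interior_Icc] at hx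
          exact (hd x (by linarith [hx.1])).differentiableAt.differentiableWithinAt
        · intro x hx; rw [interior_Icc] at hx
          rw [(hd x (by linarith [hx.1])).deriv]
          have := hm1 (show (0:ℝ) ∈ Ioi (-1) by simp) (show x ∈ Ioi (-1) from by
            simp only [mem_Ioi]; linarith [hx.1]) hx.1.le
          simpa using this
      have := hm ⟨le_refl _, h⟩ ⟨h, le_refl _⟩ h
      simpa using this
    · have hm : AntitoneOn (fun x : ℝ => (1 + x) * Real.log (1 + x) - (x + x ^ 2 / 2 - x ^ 3 / 6))
          (Icc a 0) := by
        apply antitoneOn_of_deriv_nonpos (convex_Icc a 0)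
        · intro x hx; exact (hd x (by linarith [hx.1])).continuousAt.continuousWithinAt
        · intro x hx; rw [interior_Icc] at hx
          exact (hd x (by linarith [hx.1])).differentiableAt.differentiableWithinAt
        · intro x hx; rw [interior_Icc] at hx
          rw [(hd x (by linarith [hx.1])).deriv]
          have := hm1 (show x ∈ Ioi (-1) from by
            simp only [mem_Ioi]; linarith [hx.1]) (show (0:ℝ) ∈ Ioi (-1) by simp)  hx.2.le
          simpa using this
      have := hm ⟨le_refl _, h⟩ ⟨h, le_refl _⟩ h
      simpa using this
  linarith

lemma pointwise_step {ρ ρ' a b lz lw s e q : ℝ} (hρ : ρ ^ 2 + ρ' ^ 2 = 1)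
    (ha1 : -1 < a) (hb1 : -1 < b) (hbs : b = ρ * lz + ρ' * lw + s) (he0 : 0 ≤ e) (he1 : e ≤ 1)
    (hq : 1 ≤ q) (ha : |a| ≤ e * q) (hb : |b| ≤ e * q) (hl : |ρ * lz + ρ' * lw| ≤ e * q)
    (hs : |s| ≤ e ^ 2 * q ^ 2) :
    (1 + a) * Real.log (1 + b) - ρ ^ 2 * ((1 + a) * Real.log (1 + a)) ≤
      b - ρ ^ 2 * a + ρ' ^ 2 / 2 * (lz ^ 2 - lw ^ 2) - ρ * ρ' * (lz * lw) + ρ' * (a * lw)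
        + 4 * e ^ 3 * q ^ 4 := by
  have h1 := mul_le_mul_of_nonneg_left (log_one_add_le hb1) (show 0 ≤ 1 + a by linarith)
  have h2 := mul_le_mul_of_nonneg_left (mul_log_one_add_ge ha1) (sq_nonneg ρ)
  have hρ1 : ρ ^ 2 ≤ 1 := by nlinarith [sq_nonneg ρ']
  set Q := e * q with hQ
  have hQ0 : 0 ≤ Q := by positivity
  have abs3 : ∀ x y z : ℝ, |x| ≤ Q → |y| ≤ Q → |z| ≤ Q → |x * y * z| ≤ Q ^ 3 := by
    intro x y z hx hy hz
    rw [abs_mul, abs_mul]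
    calc |x| * |y| * |z| ≤ Q * Q * Q := by gcongr
      _ = Q ^ 3 := by ring
  have e1 := (abs_le.1 (abs3 b b b hb hb hb)).2
  have e2 := (abs_le.1 (abs3 a b b ha hb hb)).1
  have e3 : a * b * b * b ≤ Q ^ 4 := by
    refine (le_abs_self _).trans ?_
    rw [abs_mul]
    calc |a * b * b| * |b| ≤ Q ^ 3 * Q := by gcongr; exact abs3 a b b ha hb hb
      _ = Q ^ 4 := by ring
  have e4 : ρ ^ 2 * (a * a * a) ≤ Q ^ 3 := by
    have := (abs3 a a a ha ha ha)
    calc ρ ^ 2 * (a * a * a) ≤ ρ ^ 2 * |a * a * a| := by gcongr; exact le_abs_self _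
      _ ≤ 1 * Q ^ 3 := by gcongr
      _ = Q ^ 3 := by ring
  have hQ2 : e ^ 2 * q ^ 2 = Q ^ 2 := by rw [hQ]; ring
  rw [hQ2] at hs
  have e5 : a * s ≤ Q ^ 3 := by
    refine (le_abs_self _).trans ?_
    rw [abs_mul]
    calc |a| * |s| ≤ Q * Q ^ 2 := by gcongr
      _ = Q ^ 3 := by ring
  have e6 : -((ρ * lz + ρ' * lw) * s) ≤ Q ^ 3 := by
    refine (neg_le_abs _).trans ?_
    rw [abs_mul]
    calc |ρ * lz + ρ' * lw| * |s| ≤ Q * Q ^ 2 := by gcongr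
      _ = Q ^ 3 := by ring
  have e7 : Q ^ 3 ≤ e ^ 3 * q ^ 4 := by
    rw [hQ, mul_pow]; gcongr; norm_num
  have e8 : Q ^ 4 ≤ e ^ 3 * q ^ 4 := by
    rw [hQ, mul_pow]
    have : e ^ 4 ≤ e ^ 3 := pow_le_pow_of_le_one he0 he1 (by norm_num)
    gcongr
  have hE : 0 ≤ e ^ 3 * q ^ 4 := by positivity
  have quad : a * b - b ^ 2 / 2 - ρ ^ 2 * (a ^ 2 / 2) ≤
      ρ' ^ 2 / 2 * (lz ^ 2 - lw ^ 2) - ρ * ρ' * (lz * lw) + ρ' * (a * lw) + 2 * Q ^ 3 := by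
    have hsq : 0 ≤ (ρ * a - lz) ^ 2 := sq_nonneg _
    have hid : a * b - b ^ 2 / 2 - ρ ^ 2 * (a ^ 2 / 2) = ρ' ^ 2 / 2 * (lz ^ 2 - lw ^ 2) - ρ * ρ' * (lz * lw) + ρ' * (a * lw)
        + a * s + (-((ρ * lz + ρ' * lw) * s)) - s ^ 2 / 2 - (ρ * a - lz) ^ 2 / 2
        + (1 - ρ ^ 2 - ρ' ^ 2) * lz ^ 2 / 2 := by
      rw [hbs]; ring
    have : 1 - ρ ^ 2 - ρ' ^ 2 = 0 := by linarith
    rw [hid, this]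
    nlinarith [sq_nonneg s]
  nlinarith

section Gauss
set_option linter.unusedSectionVars false
open ProbabilityTheory

variable {E : Type*} [NormedAddCommGroup E] [NormedSpace ℝ E] [FiniteDimensional ℝ E]
  [MeasurableSpace E] [BorelSpace E]

lemma gauss_rot (ν : Measure E) [IsGaussian ν] (h0 : ν[id] = 0) {a b : ℝ} (hab : a ^ 2 + b ^ 2 = 1) :
    Measure.map (fun p : E × E => (a • p.1 + b • p.2, (-b) • p.1 + a • p.2)) (ν.prod ν)
      = ν.prod ν := by
  have hc : CompleteSpace E := FiniteDimensional.complete ℝ E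
  have hs : SecondCountableTopology E := by
    have := FiniteDimensional.proper_real E
    infer_instance
  obtain ⟨θ, hθa, hθb⟩ : ∃ θ : ℝ, Real.cos θ = a ∧ Real.sin θ = b := by
    refine ⟨Complex.arg (⟨a, b⟩ : ℂ), ?_, ?_⟩
    · have hn : ‖(⟨a, b⟩ : ℂ)‖ = 1 := by
        rw [Complex.norm_def, Complex.normSq_mk]
        rw [Real.sqrt_eq_one]; linarith [sq a, sq b]
      rw [Complex.cos_arg, hn]
      · simp
      · intro h; rw [h] at hn; simp at hn
    · have hn : ‖(⟨a, b⟩ : ℂ)‖ = 1 := by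
        rw [Complex.norm_def, Complex.normSq_mk]
        rw [Real.sqrt_eq_one]; linarith [sq a, sq b]
      rw [Complex.sin_arg, hn]; simp
  have h := IsGaussian.map_rotation_eq_self (μ := ν) h0 θ
  convert! h using 2
  ext p <;> simp [ContinuousLinearMap.rotation_apply, hθa, hθb]

lemma gauss_comb (ν : Measure E) [IsGaussian ν] (h0 : ν[id] = 0) {a b : ℝ} (hab : a ^ 2 + b ^ 2 = 1) :
    Measure.map (fun p : E × E => a • p.1 + b • p.2) (ν.prod ν) = ν := by
  have hs : SecondCountableTopology E := by
    have := FiniteDimensional.proper_real E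
    infer_instance
  have h := gauss_rot ν h0 hab
  have h2 := congrArg (Measure.map Prod.fst) h
  rw [Measure.map_map (by fun_prop) (by fun_prop)] at h2
  rw [Measure.map_fst_prod] at h2
  simpa [Function.comp_def] using h2

/-- heat semigroup property -/
lemma gauss_heat (ν : Measure E) [IsGaussian ν] (h0 : ν[id] = 0) {s t r : ℝ}
    (hr : s ^ 2 + t ^ 2 = r ^ 2) (hr0 : 0 < r) (φ : E → ℝ) (hφ : Continuous φ) (C : ℝ) (hC : ∀ x, |φ x| ≤ C) :
    ∫ p, φ (r • p) ∂ν = ∫ p, ∫ p', φ (s • p + t • p') ∂ν ∂ν := by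
  have hs : SecondCountableTopology E := by
    have := FiniteDimensional.proper_real E
    infer_instance
  have hab : (s / r) ^ 2 + (t / r) ^ 2 = 1 := by
    rw [div_pow, div_pow, ← add_div, hr, div_self (by positivity)]
  have h := gauss_comb ν h0 hab
  conv_lhs => rw [← h]
  rw [integral_map (by fun_prop) (by fun_prop), integral_prod]
  · congr 1; ext p; congr 1; ext p'
    congr 1
    rw [smul_add, smul_smul, smul_smul, mul_div_cancel₀ _ hr0.ne', mul_div_cancel₀ _ hr0.ne']
  · exact Integrable.of_bound (by fun_prop) C (Filter.Eventually.of_forall fun p => hC _)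

structure Nice (c C K : ℝ) (F : E → ℝ) (L : E → (E →L[ℝ] ℝ)) : Prop where
  lb : ∀ x, c ≤ F x
  ub : ∀ x, F x ≤ C
  lip : ∀ x y, |F x - F y| ≤ K * ‖x - y‖
  Lb : ∀ x, ‖L x‖ ≤ K
  Llip : ∀ x y, ‖L x - L y‖ ≤ K * ‖x - y‖
  taylor : ∀ x v, |F (x + v) - F x - L x v| ≤ K * ‖v‖ ^ 2

lemma Nice.cont {c C K : ℝ} {F : E → ℝ} {L : E → (E →L[ℝ] ℝ)} (h : Nice c C K F L) : Continuous F := by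
  have : LipschitzWith (Real.toNNReal K) F := by
    apply LipschitzWith.of_dist_le_mul
    intro x y
    rw [Real.dist_eq, dist_eq_norm]
    exact (h.lip x y).trans (by gcongr; exact Real.le_coe_toNNReal K)
  exact this.continuous

lemma Nice.contL {c C K : ℝ} {F : E → ℝ} {L : E → (E →L[ℝ] ℝ)} (h : Nice c C K F L) : Continuous L := by
  have : LipschitzWith (Real.toNNReal K) L := by
    apply LipschitzWith.of_dist_le_mul
    intro x y
    rw [dist_eq_norm, dist_eq_norm]
    exact (h.Llip x y).trans (by gcongr; exact Real.le_coe_toNNReal K)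
  exact this.continuous

lemma Nice.K_nonneg {c C K : ℝ} {F : E → ℝ} {L : E → (E →L[ℝ] ℝ)} (h : Nice c C K F L) : 0 ≤ K :=
  (norm_nonneg _).trans (h.Lb 0)

lemma Nice.abs_le {c C K : ℝ} {F : E → ℝ} {L : E → (E →L[ℝ] ℝ)} (h : Nice c C K F L) (hc : 0 < c) (x : E) :
    |F x| ≤ C := by
  rw [abs_of_pos (hc.trans_le (h.lb x))]; exact h.ub x

lemma Nice.avg {c C K : ℝ} {F : E → ℝ} {L : E → (E →L[ℝ] ℝ)} (h : Nice c C K F L) (hc : 0 < c)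
    (ν : Measure E) [IsProbabilityMeasure ν] {r : ℝ} (hr : |r| ≤ 1) (s : ℝ) :
    Nice c C K (fun x => ∫ w, F (r • x + s • w) ∂ν) (fun x => r • ∫ w, L (r • x + s • w) ∂ν) := by
  have hs : SecondCountableTopology E := by
    have := FiniteDimensional.proper_real E
    infer_instance
  have hF := h.cont
  have hL := h.contL
  have iF : ∀ x, Integrable (fun w => F (r • x + s • w)) ν := fun x =>
    Integrable.of_bound (by fun_prop) C (Filter.Eventually.of_forall fun p => h.abs_le hc _)
  have iL : ∀ x, Integrable (fun w => L (r • x + s • w)) ν := fun x =>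
    Integrable.of_bound (by
      have : Continuous (fun w => L (r • x + s • w)) := by fun_prop
      exact this.aestronglyMeasurable) K (Filter.Eventually.of_forall fun p => h.Lb _)
  have hK := h.K_nonneg
  have hrx : ∀ x : E, ‖r • x‖ ≤ ‖x‖ := by
    intro x
    rw [norm_smul, Real.norm_eq_abs]
    exact mul_le_of_le_one_left (norm_nonneg _) hr
  refine ⟨fun x => ?_, fun x => ?_, fun x y => ?_, fun x => ?_, fun x y => ?_, fun x v => ?_⟩
  · have := integral_mono (μ := ν) (integrable_const c) (iF x) (fun w => h.lb _)
    simpa using this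
  · have := integral_mono (μ := ν) (iF x) (integrable_const C) (fun w => h.ub _)
    simpa using this
  · rw [← integral_sub (iF x) (iF y)]
    have := norm_integral_le_of_norm_le_const (μ := ν) (C := K * ‖x - y‖)
      (f := fun w => F (r • x + s • w) - F (r • y + s • w)) (Filter.Eventually.of_forall fun w => by
        rw [Real.norm_eq_abs]
        refine (h.lip _ _).trans ?_
        gcongr
        rw [add_sub_add_right_eq_sub, ← smul_sub]
        exact hrx _)
    simpa using this
  · rw [norm_smul, Real.norm_eq_abs]
    have := norm_integral_le_of_norm_le_const (μ := ν) (C := K)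
      (f := fun w => L (r • x + s • w)) (Filter.Eventually.of_forall fun w => h.Lb _)
    refine (mul_le_of_le_one_left (norm_nonneg _) hr).trans ?_
    simpa using this
  · have e0 : (r • ∫ w, L (r • x + s • w) ∂ν) - (r • ∫ w, L (r • y + s • w) ∂ν) =
        r • ∫ w, (L (r • x + s • w) - L (r • y + s • w)) ∂ν := by
      rw [integral_sub (iL x) (iL y)]
      exact (smul_sub r _ _).symm
    rw [e0, norm_smul, Real.norm_eq_abs]
    refine (mul_le_of_le_one_left (norm_nonneg _) hr).trans ?_
    have := norm_integral_le_of_norm_le_const (μ := ν) (C := K * ‖x - y‖)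
      (f := fun w => L (r • x + s • w) - L (r • y + s • w)) (Filter.Eventually.of_forall fun w => by
        refine (h.Llip _ _).trans ?_
        gcongr
        rw [add_sub_add_right_eq_sub, ← smul_sub]
        exact hrx _)
    simpa using this
  · have e1 : (r • ∫ w, L (r • x + s • w) ∂ν) v = ∫ w, L (r • x + s • w) (r • v) ∂ν := by
      have e2 := ContinuousLinearMap.integral_apply (iL x) v
      have e3 : (r • ∫ w, L (r • x + s • w) ∂ν) v = r * (∫ w, L (r • x + s • w) ∂ν) v := rfl
      rw [e3, e2, ← integral_const_mul]
      simp
    have iD : Integrable (fun w => F (r • (x + v) + s • w) - F (r • x + s • w)) ν :=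
      (iF (x + v)).sub (iF x)
    rw [e1, ← integral_sub (iF _) (iF _), ← integral_sub iD]
    · have := norm_integral_le_of_norm_le_const (μ := ν) (C := K * ‖v‖ ^ 2)
        (f := fun w => F (r • (x + v) + s • w) - F (r • x + s • w) - L (r • x + s • w) (r • v))
        (Filter.Eventually.of_forall fun w => by
          have h1 := h.taylor (r • x + s • w) (r • v)
          rw [Real.norm_eq_abs, show r • (x + v) + s • w = r • x + s • w + r • v by
            rw [smul_add]; abel]
          refine h1.trans ?_
          gcongr
          exact hrx v)
      simpa using this
    · exact (iL x).apply_continuousLinearMap _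

end Gauss

section Gauss
set_option linter.unusedSectionVars false
open ProbabilityTheory

variable {E : Type*} [NormedAddCommGroup E] [NormedSpace ℝ E] [FiniteDimensional ℝ E]
  [MeasurableSpace E] [BorelSpace E]

def Bfun (ρ u v : ℝ) : ℝ := u * Real.log v - ρ ^ 2 * (u * Real.log u)

/-- weight -/
def Sfun (ν : Measure E) (p : E × E) : ℝ :=
  1 + ‖p.1‖ + ‖p.2‖ + (∫ z, ‖z‖ ∂ν) + ∫ z, ‖z‖ ^ 2 ∂ν

lemma second_countable_of_fd : SecondCountableTopology E := by
  have := FiniteDimensional.proper_real E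
  infer_instance

lemma integrable_Sfun (ν : Measure E) [IsGaussian ν] :
    Integrable (fun p => Sfun ν p ^ 4) (ν.prod ν) := by
  have hs : SecondCountableTopology E := second_countable_of_fd
  have hc : CompleteSpace E := FiniteDimensional.complete ℝ E
  have hid : MemLp (fun z : E => ‖z‖) 4 ν := (IsGaussian.memLp_id ν 4 (by simp)).norm
  have h1 : MemLp (fun p : E × E => ‖p.1‖) 4 (ν.prod ν) := hid.comp_fst ν
  have h2 : MemLp (fun p : E × E => ‖p.2‖) 4 (ν.prod ν) := hid.comp_snd ν
  have h3 : MemLp (Sfun ν) 4 (ν.prod ν) := by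
    have := ((((memLp_const (μ := ν.prod ν) (p := 4) (1:ℝ)).add h1).add h2).add
      (memLp_const (∫ z, ‖z‖ ∂ν))).add (memLp_const (∫ z, ‖z‖ ^ 2 ∂ν))
    exact this
  have := h3.integrable_norm_pow (p := 4) (by norm_num)
  refine this.congr (Filter.Eventually.of_forall fun p => ?_)
  simp only [Real.norm_eq_abs]
  exact (Even.pow_abs (by decide) _)

lemma int8 {α : Type*} [MeasurableSpace α] {P : Measure α} [IsProbabilityMeasure P]
    {f1 f2 f3 f4 f5 f6 f7 f8 : α → ℝ} (h1 : Integrable f1 P) (h2 : Integrable f2 P)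
    (h3 : Integrable f3 P) (h4 : Integrable f4 P) (h5 : Integrable f5 P) (h6 : Integrable f6 P)
    (h7 : Integrable f7 P) (h8 : Integrable f8 P) (a1 a2 a3 a4 a5 a6 a7 a8 a9 : ℝ) :
    Integrable (fun p => a1 * f1 p + a2 * f2 p + a3 * f3 p + a4 * f4 p + a5 * f5 p + a6 * f6 p
      + a7 * f7 p + a8 * f8 p + a9) P ∧
    ∫ p, (a1 * f1 p + a2 * f2 p + a3 * f3 p + a4 * f4 p + a5 * f5 p + a6 * f6 p
      + a7 * f7 p + a8 * f8 p + a9) ∂P = a1 * ∫ p, f1 p ∂P + a2 * ∫ p, f2 p ∂P + a3 * ∫ p, f3 p ∂P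
      + a4 * ∫ p, f4 p ∂P + a5 * ∫ p, f5 p ∂P + a6 * ∫ p, f6 p ∂P + a7 * ∫ p, f7 p ∂P
      + a8 * ∫ p, f8 p ∂P + a9 := by
  refine ⟨by fun_prop, ?_⟩
  rw [integral_add (by fun_prop) (by fun_prop), integral_add (by fun_prop) (by fun_prop),
    integral_add (by fun_prop) (by fun_prop), integral_add (by fun_prop) (by fun_prop),
    integral_add (by fun_prop) (by fun_prop), integral_add (by fun_prop) (by fun_prop),
    integral_add (by fun_prop) (by fun_prop), integral_add (by fun_prop) (by fun_prop)]
  simp only [integral_const_mul, integral_const, probReal_univ, one_smul]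

lemma Bfun_bound {ρ c C u v : ℝ} (hc : 0 < c) (hu : c ≤ u) (hu' : u ≤ C) (hv : c ≤ v) (hv' : v ≤ C) :
    |Bfun ρ u v| ≤ C * (|Real.log c| + |Real.log C|) + ρ ^ 2 * (C * (|Real.log c| + |Real.log C|)) := by
  have hl : ∀ w, c ≤ w → w ≤ C → |Real.log w| ≤ |Real.log c| + |Real.log C| := by
    intro w h1 h2
    have e1 := Real.log_le_log hc h1
    have e2 := Real.log_le_log (hc.trans_le h1) h2
    rw [abs_le]
    constructor
    · linarith [neg_abs_le (Real.log c), abs_nonneg (Real.log C)]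
    · linarith [le_abs_self (Real.log C), abs_nonneg (Real.log c)]
  have hul : ∀ w, c ≤ w → w ≤ C → |u * Real.log w| ≤ C * (|Real.log c| + |Real.log C|) := by
    intro w h1 h2
    rw [abs_mul, abs_of_pos (hc.trans_le hu)]
    have := hl w h1 h2
    have hC : 0 ≤ C := by linarith
    gcongr
  unfold Bfun
  refine (abs_sub _ _).trans ?_
  rw [abs_mul (ρ ^ 2), abs_of_nonneg (sq_nonneg ρ)]
  have := hul v hv hv'
  have := hul u hu hu'
  gcongr

lemma Nice.integrable_B {Ω : Type*} [TopologicalSpace Ω] [MeasurableSpace Ω] [OpensMeasurableSpace Ω]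
    (P : Measure Ω) [IsFiniteMeasure P] {c C K ρ : ℝ} (hc : 0 < c) {F G : E → ℝ}
    {L₁ L₂ : E → (E →L[ℝ] ℝ)} (hF : Nice c C K F L₁) (hG : Nice c C K G L₂) {f g : Ω → E}
    (hf : Continuous f) (hg : Continuous g) :
    Integrable (fun p => Bfun ρ (F (f p)) (G (g p))) P := by
  have hs : SecondCountableTopology E := second_countable_of_fd
  have cF := hF.cont
  have cG := hG.cont
  refine Integrable.of_bound ?_ _ (Filter.Eventually.of_forall fun p =>
    Bfun_bound hc (hF.lb _) (hF.ub _) (hG.lb _) (hG.ub _))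
  have h1 : Measurable (fun p => F (f p)) := (cF.comp hf).measurable
  have h2 : Measurable (fun p => G (g p)) := (cG.comp hg).measurable
  unfold Bfun
  exact Measurable.aestronglyMeasurable (by fun_prop)

lemma Nice.osc {c C K : ℝ} (hc : 0 < c) {F : E → ℝ} {L : E → (E →L[ℝ] ℝ)} (hF : Nice c C K F L)
    (ν : Measure E) [IsGaussian ν] {e : ℝ} (he : 0 ≤ e) (x t : E) :
    |F (x + e • t) - ∫ z, F (x + e • z) ∂ν| ≤ K * e * (‖t‖ + ∫ z, ‖z‖ ∂ν) := by
  have hs : SecondCountableTopology E := second_countable_of_fd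
  have hcs : CompleteSpace E := FiniteDimensional.complete ℝ E
  have cF := hF.cont
  have hK := hF.K_nonneg
  have im1 : Integrable (fun z : E => ‖z‖) ν := IsGaussian.integrable_id.norm
  have iF : Integrable (fun z => F (x + e • z)) ν :=
    Integrable.of_bound (by fun_prop) C (Filter.Eventually.of_forall fun p => hF.abs_le hc _)
  have e1 : F (x + e • t) - ∫ z, F (x + e • z) ∂ν = ∫ z, (F (x + e • t) - F (x + e • z)) ∂ν := by
    rw [integral_sub (integrable_const _) iF]; simp
  have e2 : K * e * (‖t‖ + ∫ z, ‖z‖ ∂ν) = ∫ z, K * e * (‖t‖ + ‖z‖) ∂ν := by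
    rw [integral_const_mul, integral_add (integrable_const _) im1]; simp
  rw [e1, e2, ← Real.norm_eq_abs]
  apply norm_integral_le_of_norm_le (by fun_prop)
  refine Filter.Eventually.of_forall fun z => ?_
  rw [Real.norm_eq_abs]
  refine (hF.lip _ _).trans ?_
  rw [add_sub_add_left_eq_sub, ← smul_sub, norm_smul, Real.norm_eq_abs, abs_of_nonneg he, mul_assoc]
  gcongr
  exact norm_sub_le _ _

lemma Nice.osc2 {c C K : ℝ} (hc : 0 < c) {F : E → ℝ} {L : E → (E →L[ℝ] ℝ)} (hF : Nice c C K F L)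
    (ν : Measure E) [IsGaussian ν] (h0 : ν[id] = 0) {e : ℝ} (x t : E) :
    |F (x + e • t) - (∫ z, F (x + e • z) ∂ν) - e * L x t| ≤ K * e ^ 2 * (‖t‖ ^ 2 + ∫ z, ‖z‖ ^ 2 ∂ν) := by
  have hs : SecondCountableTopology E := second_countable_of_fd
  have hcs : CompleteSpace E := FiniteDimensional.complete ℝ E
  have cF := hF.cont
  have hK := hF.K_nonneg
  have im2 : Integrable (fun z : E => ‖z‖ ^ 2) ν :=
    (IsGaussian.memLp_two_id (μ := ν)).integrable_norm_pow (by norm_num)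
  have iF : Integrable (fun z => F (x + e • z)) ν :=
    Integrable.of_bound (by fun_prop) C (Filter.Eventually.of_forall fun p => hF.abs_le hc _)
  have iL : Integrable (fun z => L x z) ν := IsGaussian.integrable_dual ν (L x)
  have zL : ∫ z, L x z ∂ν = 0 := by
    have h := IsGaussian.integral_dual (μ := ν) (L x)
    simp only [id_eq] at h0
    rw [h0, map_zero] at h
    exact h
  have hT : ∀ z, |F (x + e • z) - F x - e * L x z| ≤ K * e ^ 2 * ‖z‖ ^ 2 := by
    intro z
    have := hF.taylor x (e • z)
    rw [map_smul, smul_eq_mul, norm_smul, mul_pow, Real.norm_eq_abs, sq_abs, ← mul_assoc] at this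
    exact this
  have e1 : F (x + e • t) - (∫ z, F (x + e • z) ∂ν) - e * L x t =
      ∫ z, ((F (x + e • t) - F x - e * L x t) - (F (x + e • z) - F x - e * L x z)) ∂ν := by
    have i1 : Integrable (fun z => F (x + e • z) - F x) ν := iF.sub (integrable_const _)
    have i2 : Integrable (fun z => F (x + e • z) - F x - e * L x z) ν := i1.sub (iL.const_mul e)
    have j2 : ∫ z, (F (x + e • z) - F x - e * L x z) ∂ν = (∫ z, F (x + e • z) ∂ν) - F x := by
      rw [integral_sub i1 (iL.const_mul e), integral_sub iF (integrable_const _),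
        integral_const_mul, zL]
      simp
    rw [integral_sub (integrable_const _) i2, j2]
    simp
    ring
  have e2 : K * e ^ 2 * (‖t‖ ^ 2 + ∫ z, ‖z‖ ^ 2 ∂ν) = ∫ z, K * e ^ 2 * (‖t‖ ^ 2 + ‖z‖ ^ 2) ∂ν := by
    rw [integral_const_mul, integral_add (integrable_const _) im2]; simp
  rw [e1, e2, ← Real.norm_eq_abs]
  apply norm_integral_le_of_norm_le (by fun_prop)
  refine Filter.Eventually.of_forall fun z => ?_
  rw [Real.norm_eq_abs]
  refine (abs_sub _ _).trans ?_
  rw [mul_add]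
  exact add_le_add (hT t) (hT z)

lemma sq_sum_aux {a b m n t : ℝ} (ha : 0 ≤ a) (hb : 0 ≤ b) (hm : 0 ≤ m) (hn : 0 ≤ n) (ht : 0 ≤ t)
    (h : t ≤ a + b) : t ^ 2 + n ≤ (1 + a + b + m + n) ^ 2 := by
  have h1 : t ^ 2 ≤ (a + b) ^ 2 := by gcongr
  have h2 : (a + b) ^ 2 + n ≤ (1 + (a + b) + n) ^ 2 := by
    have : 0 ≤ (a + b) * n := by positivity
    nlinarith [sq_nonneg n]
  have h3 : (1 + (a + b) + n) ^ 2 ≤ (1 + a + b + m + n) ^ 2 := by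
    apply pow_le_pow_left₀ (by positivity); linarith
  linarith

set_option maxHeartbeats 1600000 in
lemma one_step (ν : Measure E) [IsGaussian ν] (h0 : ν[id] = 0) {ρ ρ' : ℝ} (hρ0 : 0 ≤ ρ)
    (hρ0' : 0 ≤ ρ') (hρ : ρ ^ 2 + ρ' ^ 2 = 1) {c C K : ℝ} (hc : 0 < c) {F G : E → ℝ}
    {L₁ L₂ : E → (E →L[ℝ] ℝ)} (hF : Nice c C K F L₁) (hG : Nice c C K G L₂) {e : ℝ} (he0 : 0 ≤ e)
    (he1 : e ≤ 1) (x y : E) :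
    ∫ p, Bfun ρ (F (x + e • p.1)) (G (y + e • (ρ • p.1 + ρ' • p.2))) ∂(ν.prod ν) ≤
      Bfun ρ (∫ z, F (x + e • z) ∂ν) (∫ z, G (y + e • z) ∂ν) +
        C * (4 * e ^ 3 * ((1 + K / c) ^ 4 * ∫ p, Sfun ν p ^ 4 ∂(ν.prod ν))) := by
  have hs : SecondCountableTopology E := second_countable_of_fd
  have hcs : CompleteSpace E := FiniteDimensional.complete ℝ E
  have hK := hF.K_nonneg
  have cF := hF.cont
  have cG := hG.cont
  set P := ν.prod ν with hP
  set m1 := ∫ z, ‖z‖ ∂ν with hm1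
  set m2 := ∫ z, ‖z‖ ^ 2 ∂ν with hm2
  have im1 : Integrable (fun z : E => ‖z‖) ν := IsGaussian.integrable_id.norm
  have im2 : Integrable (fun z : E => ‖z‖ ^ 2) ν :=
    (IsGaussian.memLp_two_id (μ := ν)).integrable_norm_pow (by norm_num)
  have m1n : 0 ≤ m1 := integral_nonneg fun _ => norm_nonneg _
  have m2n : 0 ≤ m2 := integral_nonneg fun _ => by positivity
  set M := ∫ z, F (x + e • z) ∂ν with hM
  set N := ∫ z, G (y + e • z) ∂ν with hN
  have iF : Integrable (fun z => F (x + e • z)) ν :=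
    Integrable.of_bound (by fun_prop) C (Filter.Eventually.of_forall fun p => hF.abs_le hc _)
  have iG : Integrable (fun z => G (y + e • z)) ν :=
    Integrable.of_bound (by fun_prop) C (Filter.Eventually.of_forall fun p => hG.abs_le hc _)
  have cM : c ≤ M := by
    have := integral_mono (μ := ν) (integrable_const c) iF (fun w => hF.lb _)
    simpa using this
  have cN : c ≤ N := by
    have := integral_mono (μ := ν) (integrable_const c) iG (fun w => hG.lb _)
    simpa using this
  have MC : M ≤ C := by
    have := integral_mono (μ := ν) iF (integrable_const C) (fun w => hF.ub _)
    simpa using this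
  have M0 : 0 < M := hc.trans_le cM
  have N0 : 0 < N := hc.trans_le cN
  set ℓ : E →L[ℝ] ℝ := (e / N) • L₂ y with hℓ
  have iℓ : Integrable (fun z => ℓ z) ν := IsGaussian.integrable_dual ν ℓ
  have zL : ∀ L : E →L[ℝ] ℝ, ∫ z, L z ∂ν = 0 := by
    intro L
    have h := IsGaussian.integral_dual (μ := ν) L
    simp only [id_eq] at h0
    rw [h0, map_zero] at h
    exact h
  have iℓ2 : Integrable (fun z => ℓ z ^ 2) ν :=
    (IsGaussian.memLp_dual ν ℓ 2 (by simp)).integrable_sq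
  set u : E × E → ℝ := fun p => F (x + e • p.1) with hu
  set v : E × E → ℝ := fun p => G (y + e • (ρ • p.1 + ρ' • p.2)) with hv
  have iu : Integrable u P := iF.comp_fst ν
  have iv : Integrable v P :=
    Integrable.of_bound (by fun_prop) C (Filter.Eventually.of_forall fun p => hG.abs_le hc _)
  have Iu : ∫ p, u p ∂P = M := by
    have := integral_fun_fst (μ := ν) (ν := ν) (fun z => F (x + e • z))
    simpa using this
  have Iv : ∫ p, v p ∂P = N := by
    have h := gauss_comb ν h0 hρ
    rw [hN]; conv_rhs => rw [← h]
    rw [integral_map (by fun_prop) (by fun_prop)]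
  have ilz2 : Integrable (fun p : E × E => ℓ p.1 ^ 2) P := iℓ2.comp_fst ν
  have ilw2 : Integrable (fun p : E × E => ℓ p.2 ^ 2) P := iℓ2.comp_snd ν
  have ilw : Integrable (fun p : E × E => ℓ p.2) P := iℓ.comp_snd ν
  have Ilz2 : ∫ p, ℓ p.1 ^ 2 ∂P = ∫ z, ℓ z ^ 2 ∂ν := by
    have := integral_fun_fst (μ := ν) (ν := ν) (fun z => ℓ z ^ 2)
    simpa using this
  have Ilw2 : ∫ p, ℓ p.2 ^ 2 ∂P = ∫ z, ℓ z ^ 2 ∂ν := by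
    have := integral_fun_snd (μ := ν) (ν := ν) (fun z => ℓ z ^ 2)
    simpa using this
  have Ilw : ∫ p, ℓ p.2 ∂P = 0 := by
    have := integral_fun_snd (μ := ν) (ν := ν) (fun z => ℓ z)
    rw [zL] at this
    simpa using this
  have izw : Integrable (fun p : E × E => ℓ p.1 * ℓ p.2) P := iℓ.mul_prod iℓ
  have Izw : ∫ p, ℓ p.1 * ℓ p.2 ∂P = 0 := by
    rw [hP, integral_prod_mul (μ := ν) (ν := ν) (fun z => ℓ z) (fun z => ℓ z), zL, mul_zero]
  have iuw : Integrable (fun p : E × E => u p * ℓ p.2) P := iF.mul_prod iℓ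
  have Iuw : ∫ p, u p * ℓ p.2 ∂P = 0 := by
    rw [hP, hu, integral_prod_mul (μ := ν) (ν := ν) (fun z => F (x + e • z)) (fun z => ℓ z), zL, mul_zero]
  have iS := integrable_Sfun ν
  set κ := 1 + K / c with hκ
  have κ1 : 1 ≤ κ := by rw [hκ]; have : 0 ≤ K / c := by positivity
                        linarith
  have κK : K / c ≤ κ := by rw [hκ]; linarith
  have key : ∀ p, Bfun ρ (u p) (v p) ≤
      (Real.log N - ρ ^ 2 * Real.log M - ρ ^ 2) * u p + (M / N) * v p
       + (M * ρ' ^ 2 / 2) * (ℓ p.1 ^ 2) + (-(M * ρ' ^ 2 / 2)) * (ℓ p.2 ^ 2)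
       + (-(M * (ρ * ρ'))) * (ℓ p.1 * ℓ p.2) + ρ' * (u p * ℓ p.2) + (-(M * ρ')) * ℓ p.2
       + (M * (4 * e ^ 3 * κ ^ 4)) * Sfun ν p ^ 4 + (-M + ρ ^ 2 * M) := by
    intro p
    set t := ρ • p.1 + ρ' • p.2 with ht
    have hρ1 : ρ ≤ 1 := by nlinarith [sq_nonneg ρ']
    have hρ1' : ρ' ≤ 1 := by nlinarith [sq_nonneg ρ]
    have nt : ‖t‖ ≤ ‖p.1‖ + ‖p.2‖ := by
      refine (norm_add_le _ _).trans ?_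
      rw [norm_smul, norm_smul, Real.norm_of_nonneg hρ0, Real.norm_of_nonneg hρ0']
      exact add_le_add (mul_le_of_le_one_left (norm_nonneg _) hρ1)
        (mul_le_of_le_one_left (norm_nonneg _) hρ1')
    have hS : Sfun ν p = 1 + ‖p.1‖ + ‖p.2‖ + m1 + m2 := rfl
    have n1 := norm_nonneg p.1
    have n2 := norm_nonneg p.2
    have nt0 := norm_nonneg t
    have S1 : 1 ≤ Sfun ν p := by rw [hS]; linarith
    have hKe : ∀ A R B : ℝ, c ≤ R → |A| ≤ K * e * B → B ≤ Sfun ν p → 0 ≤ B →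
        |A / R| ≤ e * (κ * Sfun ν p) := by
      intro A R B hR hA hB hB0
      have hR0 : 0 < R := hc.trans_le hR
      rw [abs_div, abs_of_pos hR0, div_le_iff₀ hR0]
      calc |A| ≤ K * e * B := hA
        _ = (e * (K / c * B)) * c := by field_simp
        _ ≤ (e * (κ * Sfun ν p)) * R := by gcongr
    have hu0 : 0 < u p := hc.trans_le (hF.lb _)
    have hv0 : 0 < v p := hc.trans_le (hG.lb _)
    have hℓa : ∀ z, ℓ z = e * L₂ y z / N := by
      intro z
      show (e / N) * L₂ y z = _
      ring
    have hlt : ρ * ℓ p.1 + ρ' * ℓ p.2 = ℓ t := by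
      rw [ht, map_add, map_smul, map_smul, smul_eq_mul, smul_eq_mul]
    have ha : |(u p - M) / M| ≤ e * (κ * Sfun ν p) := by
      apply hKe _ _ _ cM (hF.osc hc ν he0 x p.1)
      · rw [hS]; linarith
      · linarith
    have hb : |(v p - N) / N| ≤ e * (κ * Sfun ν p) := by
      apply hKe _ _ _ cN (hG.osc hc ν he0 y t)
      · rw [hS]; linarith
      · linarith
    have hl : |ρ * ℓ p.1 + ρ' * ℓ p.2| ≤ e * (κ * Sfun ν p) := by
      rw [hlt, hℓa]
      apply hKe _ _ ‖t‖ cN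
      · rw [abs_mul, abs_of_nonneg he0]
        have := (L₂ y).le_of_opNorm_le (hG.Lb y) t
        rw [Real.norm_eq_abs] at this
        calc e * |L₂ y t| ≤ e * (K * ‖t‖) := by gcongr
          _ = K * e * ‖t‖ := by ring
      · rw [hS]; linarith
      · linarith
    have hss : |(v p - N) / N - (ρ * ℓ p.1 + ρ' * ℓ p.2)| ≤ e ^ 2 * (κ * Sfun ν p) ^ 2 := by
      rw [hlt, hℓa, ← sub_div, abs_div, abs_of_pos N0, div_le_iff₀ N0]
      have h2 := hG.osc2 hc ν h0 (e := e) y t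
      have hB : ‖t‖ ^ 2 + m2 ≤ Sfun ν p ^ 2 := by
        rw [hS]
        exact sq_sum_aux n1 n2 m1n m2n nt0 nt
      have hκ2 : K / c ≤ κ ^ 2 := κK.trans (le_self_pow₀ κ1 (by norm_num))
      calc |v p - N - e * L₂ y t| ≤ K * e ^ 2 * (‖t‖ ^ 2 + m2) := h2
        _ = (e ^ 2 * (K / c * (‖t‖ ^ 2 + m2))) * c := by field_simp
        _ ≤ (e ^ 2 * (κ ^ 2 * Sfun ν p ^ 2)) * N := by gcongr
        _ = _ := by ring
    have h1a : 1 + (u p - M) / M = u p / M := by field_simp; ring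
    have h1b : 1 + (v p - N) / N = v p / N := by field_simp; ring
    have hpa : -1 < (u p - M) / M := by have : 0 < u p / M := by positivity
                                        linarith
    have hpb : -1 < (v p - N) / N := by have : 0 < v p / N := by positivity
                                        linarith
    have hpw := pointwise_step (lz := ℓ p.1) (lw := ℓ p.2) (s := (v p - N) / N - (ρ * ℓ p.1 + ρ' * ℓ p.2))
      hρ hpa hpb (by ring) he0 he1 (one_le_mul_of_one_le_of_one_le κ1 S1) ha hb hl hss
    rw [h1a, h1b, Real.log_div hv0.ne' N0.ne', Real.log_div hu0.ne' M0.ne'] at hpw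
    have hpw2 := mul_le_mul_of_nonneg_left hpw M0.le
    have l1 : M * (u p / M * (Real.log (v p) - Real.log N) - ρ ^ 2 * (u p / M * (Real.log (u p) - Real.log M)))
      = Bfun ρ (u p) (v p) - (u p * Real.log N - ρ ^ 2 * (u p * Real.log M)) := by
      unfold Bfun; field_simp; ring
    rw [l1] at hpw2
    have l2 : M * ((v p - N) / N - ρ ^ 2 * ((u p - M) / M) + ρ' ^ 2 / 2 * (ℓ p.1 ^ 2 - ℓ p.2 ^ 2)
       - ρ * ρ' * (ℓ p.1 * ℓ p.2) + ρ' * ((u p - M) / M * ℓ p.2) + 4 * e ^ 3 * (κ * Sfun ν p) ^ 4)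
       = (- ρ ^ 2) * u p + (M / N) * v p
       + (M * ρ' ^ 2 / 2) * (ℓ p.1 ^ 2) + (-(M * ρ' ^ 2 / 2)) * (ℓ p.2 ^ 2)
       + (-(M * (ρ * ρ'))) * (ℓ p.1 * ℓ p.2) + ρ' * (u p * ℓ p.2) + (-(M * ρ')) * ℓ p.2
       + (M * (4 * e ^ 3 * κ ^ 4)) * Sfun ν p ^ 4 + (-M + ρ ^ 2 * M) := by
      field_simp; ring
    rw [l2] at hpw2
    linarith
  obtain ⟨hint, heq⟩ := int8 iu iv ilz2 ilw2 izw iuw ilw iS (Real.log N - ρ ^ 2 * Real.log M - ρ ^ 2)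
    (M / N) (M * ρ' ^ 2 / 2) (-(M * ρ' ^ 2 / 2)) (-(M * (ρ * ρ'))) ρ' (-(M * ρ'))
    (M * (4 * e ^ 3 * κ ^ 4)) (-M + ρ ^ 2 * M)
  have int := integral_mono (μ := P) (Nice.integrable_B (ρ := ρ) P hc hF hG (by fun_prop) (by fun_prop)) hint key
  refine int.trans ?_
  rw [heq, Iu, Iv, Ilz2, Ilw2, Ilw, Izw, Iuw]
  have : M / N * N = M := by field_simp
  rw [this]
  have D0 : 0 ≤ ∫ p, Sfun ν p ^ 4 ∂P := integral_nonneg fun _ => by positivity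
  have : M * (4 * e ^ 3 * κ ^ 4) * ∫ p, Sfun ν p ^ 4 ∂P ≤ C * (4 * e ^ 3 * (κ ^ 4 * ∫ p, Sfun ν p ^ 4 ∂P)) := by
    rw [mul_assoc, mul_assoc (4 * e ^ 3)]
    gcongr
  unfold Bfun
  linarith

end Gauss

section Iter
set_option linter.unusedSectionVars false
open ProbabilityTheory

variable {E : Type*} [NormedAddCommGroup E] [NormedSpace ℝ E] [FiniteDimensional ℝ E]
  [MeasurableSpace E] [BorelSpace E]

lemma prod_mean_zero (ν : Measure E) [IsGaussian ν] (h0 : ν[id] = 0) :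
    (ν.prod ν)[id] = 0 := by
  have hs : SecondCountableTopology E := second_countable_of_fd
  have hc : CompleteSpace E := FiniteDimensional.complete ℝ E
  have i : Integrable (id : E → E) ν := IsGaussian.integrable_id
  have h1 : ∫ p : E × E, p.1 ∂(ν.prod ν) = 0 := by
    have := integral_fun_fst (μ := ν) (ν := ν) (fun z : E => z)
    simp only [id_eq] at h0
    rw [h0] at this
    simpa using this
  have h2 : ∫ p : E × E, p.2 ∂(ν.prod ν) = 0 := by
    have := integral_fun_snd (μ := ν) (ν := ν) (fun z : E => z)
    simp only [id_eq] at h0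
    rw [h0] at this
    simpa using this
  have i1 : Integrable (fun p : E × E => p.1) (ν.prod ν) := i.comp_fst ν
  have i2 : Integrable (fun p : E × E => p.2) (ν.prod ν) := i.comp_snd ν
  have := integral_pair i1 i2
  rw [h1, h2] at this
  exact this

lemma cont_B {Ω : Type*} [TopologicalSpace Ω] {ρ : ℝ} {f g : Ω → ℝ} (hf : Continuous f)
    (hg : Continuous g) (hf0 : ∀ x, 0 < f x) (hg0 : ∀ x, 0 < g x) :
    Continuous (fun p => Bfun ρ (f p) (g p)) := by
  unfold Bfun
  exact (hf.mul (hg.log fun x => (hg0 x).ne')).sub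
    (continuous_const.mul (hf.mul (hf.log fun x => (hf0 x).ne')))

set_option maxHeartbeats 800000 in
lemma iter_step (ν : Measure E) [IsGaussian ν] (h0 : ν[id] = 0) {ρ ρ' : ℝ} (hρ0 : 0 ≤ ρ)
    (hρ0' : 0 ≤ ρ') (hρ : ρ ^ 2 + ρ' ^ 2 = 1) {c C K : ℝ} (hc : 0 < c) {h : ℝ} (hh0 : 0 < h)
    (hh1 : h ≤ 1) (k : ℕ) : ∀ {F G : E → ℝ}
    {L₁ L₂ : E → (E →L[ℝ] ℝ)} (_ : Nice c C K F L₁) (_ : Nice c C K G L₂),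
    ∫ p, Bfun ρ (F (√(k * h) • p.1)) (G (√(k * h) • (ρ • p.1 + ρ' • p.2))) ∂(ν.prod ν) ≤
      Bfun ρ (∫ z, F (√(k * h) • z) ∂ν) (∫ z, G (√(k * h) • z) ∂ν) +
        k * (C * (4 * √h ^ 3 * ((1 + K / c) ^ 4 * ∫ p, Sfun ν p ^ 4 ∂(ν.prod ν)))) := by
  have hs : SecondCountableTopology E := second_countable_of_fd
  have hcs : CompleteSpace E := FiniteDimensional.complete ℝ E
  induction k with
  | zero => intro F G L₁ L₂ hF hG; simp
  | succ k ih =>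
    intro F G L₁ L₂ hF hG
    set P := ν.prod ν with hP
    set err := (C * (4 * √h ^ 3 * ((1 + K / c) ^ 4 * ∫ p, Sfun ν p ^ 4 ∂P))) with herr
    set s := √(k * h) with hsdef
    set e := √h with hedef
    set r := √((k + 1 : ℕ) * h) with hrdef
    have hr0 : 0 < r := Real.sqrt_pos.2 (by positivity)
    have hr : s ^ 2 + e ^ 2 = r ^ 2 := by
      rw [hsdef, hedef, hrdef, Real.sq_sqrt (by positivity), Real.sq_sqrt hh0.le,
        Real.sq_sqrt (by positivity)]
      push_cast; ring
    have cF := hF.cont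
    have cG := hG.cont
    have hF1 := hF.avg hc ν (r := 1) (by simp) e
    simp only [one_smul] at hF1
    have hG1 := hG.avg hc ν (r := 1) (by simp) e
    simp only [one_smul] at hG1
    have hcφ : Continuous (fun q : E × E => Bfun ρ (F q.1) (G (ρ • q.1 + ρ' • q.2))) :=
      cont_B (by fun_prop) (by fun_prop) (fun x => hc.trans_le (hF.lb _))
        (fun x => hc.trans_le (hG.lb _))
    have hbd := fun q : E × E => Bfun_bound (ρ := ρ) hc (hF.lb q.1) (hF.ub q.1)
      (hG.lb (ρ • q.1 + ρ' • q.2)) (hG.ub (ρ • q.1 + ρ' • q.2))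
    have heat := gauss_heat P (prod_mean_zero ν h0) hr hr0
      (fun q : E × E => Bfun ρ (F q.1) (G (ρ • q.1 + ρ' • q.2))) hcφ _ hbd
    have heatF := gauss_heat ν h0 hr hr0 F cF C (hF.abs_le hc)
    have heatG := gauss_heat ν h0 hr hr0 G cG C (hG.abs_le hc)
    have e1 : ∫ p, Bfun ρ (F (r • p.1)) (G (r • (ρ • p.1 + ρ' • p.2))) ∂P =
        ∫ p, ∫ p', Bfun ρ (F (s • p.1 + e • p'.1))
          (G (s • (ρ • p.1 + ρ' • p.2) + e • (ρ • p'.1 + ρ' • p'.2))) ∂P ∂P := by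
      have q1 : ∀ p : E × E, r • (ρ • p.1 + ρ' • p.2) = ρ • (r • p).1 + ρ' • (r • p).2 := by
        intro p
        simp only [Prod.smul_fst, Prod.smul_snd]; module
      have q2 : ∀ p p' : E × E, s • (ρ • p.1 + ρ' • p.2) + e • (ρ • p'.1 + ρ' • p'.2) =
          ρ • (s • p + e • p').1 + ρ' • (s • p + e • p').2 := by
        intro p p'
        simp only [Prod.smul_fst, Prod.smul_snd, Prod.fst_add, Prod.snd_add]; module
      simp only [q1, q2]
      exact heat
    rw [e1, heatF, heatG]
    have hPP : Integrable (fun q : (E × E) × (E × E) => Bfun ρ (F (s • q.1.1 + e • q.2.1))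
          (G (s • (ρ • q.1.1 + ρ' • q.1.2) + e • (ρ • q.2.1 + ρ' • q.2.2)))) (P.prod P) :=
      Nice.integrable_B (P.prod P) hc hF hG (by fun_prop) (by fun_prop)
    have iB : Integrable (fun p : E × E => Bfun ρ (∫ z, F (s • p.1 + e • z) ∂ν)
        (∫ z, G (s • (ρ • p.1 + ρ' • p.2) + e • z) ∂ν)) P :=
      Nice.integrable_B P hc hF1 hG1 (f := fun p => s • p.1)
        (g := fun p => s • (ρ • p.1 + ρ' • p.2)) (by fun_prop) (by fun_prop)
    have m := integral_mono (μ := P) hPP.integral_prod_left (iB.add (integrable_const err))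
      (fun p => one_step ν h0 hρ0 hρ0' hρ hc hF hG (Real.sqrt_nonneg h)
        (Real.sqrt_le_one.2 hh1) (s • p.1) (s • (ρ • p.1 + ρ' • p.2)))
    refine m.trans ?_
    have := ih hF1 hG1
    simp only [Pi.add_apply]
    rw [integral_add iB (integrable_const err)]
    simp only [integral_const, probReal_univ, one_smul]
    push_cast
    linarith

lemma B_main (ν : Measure E) [IsGaussian ν] (h0 : ν[id] = 0) {ρ ρ' : ℝ} (hρ0 : 0 ≤ ρ)
    (hρ0' : 0 ≤ ρ') (hρ : ρ ^ 2 + ρ' ^ 2 = 1) {c C K : ℝ} (hc : 0 < c) {F G : E → ℝ}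
    {L₁ L₂ : E → (E →L[ℝ] ℝ)} (hF : Nice c C K F L₁) (hG : Nice c C K G L₂) :
    ∫ p, Bfun ρ (F p.1) (G (ρ • p.1 + ρ' • p.2)) ∂(ν.prod ν) ≤
      Bfun ρ (∫ z, F z ∂ν) (∫ z, G z ∂ν) := by
  set D := C * (4 * ((1 + K / c) ^ 4 * ∫ p, Sfun ν p ^ 4 ∂(ν.prod ν))) with hD
  have key : ∀ n : ℕ, ∫ p, Bfun ρ (F p.1) (G (ρ • p.1 + ρ' • p.2)) ∂(ν.prod ν) ≤
      Bfun ρ (∫ z, F z ∂ν) (∫ z, G z ∂ν) + √(1 / ((n : ℝ) + 1)) * D := by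
    intro n
    have hn : (0 : ℝ) < n + 1 := by positivity
    have h1 : 1 / ((n : ℝ) + 1) ≤ 1 := by
      rw [div_le_one hn]; linarith [(Nat.cast_nonneg n : (0:ℝ) ≤ n)]
    have := iter_step ν h0 hρ0 hρ0' hρ hc (h := 1 / ((n : ℝ) + 1)) (by positivity) h1 (n + 1) hF hG
    have e1 : ((n + 1 : ℕ) : ℝ) * (1 / ((n : ℝ) + 1)) = 1 := by push_cast; field_simp
    rw [e1, Real.sqrt_one] at this
    simp only [one_smul] at this
    refine this.trans (le_of_eq ?_)
    congr 1
    have e2 : √(1 / ((n : ℝ) + 1)) ^ 3 = (1 / ((n : ℝ) + 1)) * √(1 / ((n : ℝ) + 1)) := by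
      rw [pow_succ, Real.sq_sqrt (by positivity)]
    rw [e2, hD]
    calc _ = (((n + 1 : ℕ) : ℝ) * (1 / ((n : ℝ) + 1))) * (√(1 / ((n : ℝ) + 1)) * (C * (4 * ((1 + K / c) ^ 4 * ∫ p, Sfun ν p ^ 4 ∂(ν.prod ν))))) := by ring
      _ = _ := by rw [e1, one_mul]
  have lim : Filter.Tendsto (fun n : ℕ => Bfun ρ (∫ z, F z ∂ν) (∫ z, G z ∂ν) + √(1 / ((n : ℝ) + 1)) * D)
      Filter.atTop (nhds (Bfun ρ (∫ z, F z ∂ν) (∫ z, G z ∂ν) + √0 * D)) :=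
    ((tendsto_one_div_add_atTop_nhds_zero_nat.sqrt).mul_const D).const_add _
  have := ge_of_tendsto' lim key
  simpa using this

end Iter

section Nicer
set_option linter.unusedSectionVars false
open ProbabilityTheory InformationTheory

variable {E : Type*} [NormedAddCommGroup E] [NormedSpace ℝ E] [FiniteDimensional ℝ E]
  [MeasurableSpace E] [BorelSpace E]

/-- Ornstein-Uhlenbeck operator -/
def Pop (ν : Measure E) (ρ ρ' : ℝ) (f : E → ℝ) (y : E) : ℝ := ∫ w, f (ρ • y + (-ρ') • w) ∂ν

lemma Pop_rot (ν : Measure E) [IsGaussian ν] (h0 : ν[id] = 0) {ρ ρ' : ℝ}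
    (hρ : ρ ^ 2 + ρ' ^ 2 = 1) {f ψ : E → ℝ} (hf : Continuous f) (hψ : Continuous ψ) {C D : ℝ}
    (hC : ∀ x, |f x| ≤ C) (hD : ∀ x, |ψ x| ≤ D) :
    ∫ p, f p.1 * ψ (ρ • p.1 + ρ' • p.2) ∂(ν.prod ν) = ∫ y, Pop ν ρ ρ' f y * ψ y ∂ν := by
  have hs : SecondCountableTopology E := second_countable_of_fd
  have hcs : CompleteSpace E := FiniteDimensional.complete ℝ E
  have h := gauss_rot ν h0 hρ
  have e1 : ∫ p, f p.1 * ψ (ρ • p.1 + ρ' • p.2) ∂(ν.prod ν) =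
      ∫ q, f (ρ • q.1 + (-ρ') • q.2) * ψ q.1 ∂(ν.prod ν) := by
    conv_rhs => rw [← h]
    rw [integral_map (by fun_prop) (by fun_prop)]
    congr 1; ext p
    congr 2
    have : p.1 = (ρ ^ 2 + ρ' ^ 2) • p.1 := by rw [hρ, one_smul]
    simp only
    nth_rewrite 1 [this]
    module
  rw [e1, integral_prod]
  · congr 1; ext y
    simp only [Pop]
    rw [← integral_mul_const]
  · refine Integrable.of_bound (C := C * D) (by fun_prop) (Filter.Eventually.of_forall fun p => ?_)
    rw [Real.norm_eq_abs, abs_mul]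
    have := (abs_nonneg _).trans (hC 0)
    exact mul_le_mul (hC _) (hD _) (abs_nonneg _) this

lemma nice_ineq (ν : Measure E) [IsGaussian ν] (h0 : ν[id] = 0) {ρ ρ' : ℝ} (hρ0 : 0 ≤ ρ)
    (hρ0' : 0 ≤ ρ') (hρ : ρ ^ 2 + ρ' ^ 2 = 1) {c C K : ℝ} (hc : 0 < c) {F : E → ℝ}
    {L : E → (E →L[ℝ] ℝ)} (hF : Nice c C K F L) :
    ∫ y, klFun (Pop ν ρ ρ' F y) ∂ν ≤ ρ ^ 2 * ∫ x, klFun (F x) ∂ν +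
      (1 - ρ ^ 2) * klFun (∫ x, F x ∂ν) := by
  have hs : SecondCountableTopology E := second_countable_of_fd
  have hcs : CompleteSpace E := FiniteDimensional.complete ℝ E
  have hρ1 : ρ ≤ 1 := by nlinarith [sq_nonneg ρ']
  have hG : Nice c C K (Pop ν ρ ρ' F) _ := hF.avg hc ν (r := ρ) (by rwa [abs_of_nonneg hρ0]) (-ρ')
  have cF := hF.cont
  have cG := hG.cont
  have pF : ∀ x, 0 < F x := fun x => hc.trans_le (hF.lb x)
  have pG : ∀ x, 0 < Pop ν ρ ρ' F x := fun x => hc.trans_le (hG.lb x)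
  have clG : Continuous (fun y => Real.log (Pop ν ρ ρ' F y)) := cG.log fun x => (pG x).ne'
  have clF : Continuous (fun y => Real.log (F y)) := cF.log fun x => (pF x).ne'
  have hl : ∀ w, c ≤ w → w ≤ C → |Real.log w| ≤ |Real.log c| + |Real.log C| := by
    intro w h1 h2
    have e1 := Real.log_le_log hc h1
    have e2 := Real.log_le_log (hc.trans_le h1) h2
    rw [abs_le]
    constructor
    · linarith [neg_abs_le (Real.log c), abs_nonneg (Real.log C)]
    · linarith [le_abs_self (Real.log C), abs_nonneg (Real.log c)]
  set D := |Real.log c| + |Real.log C| with hD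
  have main := B_main ν h0 hρ0 hρ0' hρ hc hF hG
  have C0 := (abs_nonneg _).trans (hF.abs_le hc 0)
  have iFG : Integrable (fun p : E × E => F p.1 * Real.log (Pop ν ρ ρ' F (ρ • p.1 + ρ' • p.2))) (ν.prod ν) := by
    have cc : Continuous (fun p : E × E => F p.1 * Real.log (Pop ν ρ ρ' F (ρ • p.1 + ρ' • p.2))) :=
      (cF.comp continuous_fst).mul (clG.comp (by fun_prop : Continuous fun p : E × E => ρ • p.1 + ρ' • p.2))
    refine Integrable.of_bound (C := C * D) cc.aestronglyMeasurable (Filter.Eventually.of_forall fun p => ?_)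
    rw [Real.norm_eq_abs, abs_mul]
    exact mul_le_mul (hF.abs_le hc _) (hl _ (hG.lb _) (hG.ub _)) (abs_nonneg _) C0
  have iF1 : Integrable (fun x => F x * Real.log (F x)) ν := by
    refine Integrable.of_bound (C := C * D) (by fun_prop) (Filter.Eventually.of_forall fun p => ?_)
    rw [Real.norm_eq_abs, abs_mul]
    exact mul_le_mul (hF.abs_le hc _) (hl _ (hF.lb _) (hF.ub _)) (abs_nonneg _) C0
  have iG1 : Integrable (fun x => Pop ν ρ ρ' F x * Real.log (Pop ν ρ ρ' F x)) ν := by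
    refine Integrable.of_bound (C := C * D) (by fun_prop) (Filter.Eventually.of_forall fun p => ?_)
    rw [Real.norm_eq_abs, abs_mul]
    exact mul_le_mul (hG.abs_le hc _) (hl _ (hG.lb _) (hG.ub _)) (abs_nonneg _) C0
  have iF : Integrable F ν :=
    Integrable.of_bound (by fun_prop) C (Filter.Eventually.of_forall fun p => hF.abs_le hc _)
  have iG : Integrable (Pop ν ρ ρ' F) ν :=
    Integrable.of_bound (by fun_prop) C (Filter.Eventually.of_forall fun p => hG.abs_le hc _)
  have iFF : Integrable (fun p : E × E => F p.1 * Real.log (F p.1)) (ν.prod ν) := iF1.comp_fst ν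
  have IFF : ∫ p : E × E, F p.1 * Real.log (F p.1) ∂(ν.prod ν) = ∫ x, F x * Real.log (F x) ∂ν := by
    have := integral_fun_fst (μ := ν) (ν := ν) (fun z => F z * Real.log (F z))
    simpa using this
  have eM : ∫ y, Pop ν ρ ρ' F y ∂ν = ∫ x, F x ∂ν := by
    have := Pop_rot ν h0 hρ cF (continuous_const (y := (1:ℝ))) (hF.abs_le hc) (D := 1) (by simp)
    simp only [mul_one] at this
    rw [← this]
    have := integral_fun_fst (μ := ν) (ν := ν) (fun z => F z)
    simpa using this
  have rot := Pop_rot ν h0 hρ cF clG (hF.abs_le hc) (fun x => hl _ (hG.lb x) (hG.ub x))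
  unfold Bfun at main
  rw [integral_sub iFG (iFF.const_mul _), integral_const_mul, IFF, rot, eM] at main
  have e1 : ∫ y, klFun (Pop ν ρ ρ' F y) ∂ν = (∫ y, Pop ν ρ ρ' F y * Real.log (Pop ν ρ ρ' F y) ∂ν) + 1 -
      ∫ x, F x ∂ν := by
    simp only [klFun]
    have ii : Integrable (fun y => Pop ν ρ ρ' F y * Real.log (Pop ν ρ ρ' F y) + 1) ν :=
      iG1.add (integrable_const _)
    rw [integral_sub ii iG, integral_add iG1 (integrable_const _), eM]
    simp
  have e2 : ∫ y, klFun (F y) ∂ν = (∫ y, F y * Real.log (F y) ∂ν) + 1 - ∫ x, F x ∂ν := by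
    simp only [klFun]
    have ii : Integrable (fun y => F y * Real.log (F y) + 1) ν :=
      iF1.add (integrable_const _)
    rw [integral_sub ii iF, integral_add iF1 (integrable_const _)]
    simp
  rw [e1, e2, klFun]
  linarith

lemma Pop_meas (ν : Measure E) [IsProbabilityMeasure ν] (ρ ρ' : ℝ) {f : E → ℝ} (hf : Measurable f) :
    Measurable (Pop ν ρ ρ' f) := by
  have hs : SecondCountableTopology E := second_countable_of_fd
  have h : StronglyMeasurable (fun p : E × E => f (ρ • p.1 + (-ρ') • p.2)) :=
    (hf.comp (by fun_prop)).stronglyMeasurable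
  exact h.integral_prod_right.measurable

/-- closure under dominated a.e. convergence -/
lemma Pop_fatou (ν : Measure E) [IsGaussian ν] (h0 : ν[id] = 0) {ρ ρ' : ℝ}
    (hρ : ρ ^ 2 + ρ' ^ 2 = 1) {f : E → ℝ} {fk : ℕ → E → ℝ}
    (hfk : ∀ k, Measurable (fk k)) {D : E → ℝ} (hDi : Integrable D ν)
    (hD : ∀ k, ∀ᵐ x ∂ν, |fk k x| ≤ D x)
    (hlim : ∀ᵐ x ∂ν, Filter.Tendsto (fun k => fk k x) Filter.atTop (nhds (f x)))
    {A : ℕ → ℝ≥0∞} {A' : ℝ≥0∞} (hA : Filter.Tendsto A Filter.atTop (nhds A'))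
    (hk : ∀ k, ∫⁻ y, ENNReal.ofReal (klFun (Pop ν ρ ρ' (fk k) y)) ∂ν ≤ A k) :
    ∫⁻ y, ENNReal.ofReal (klFun (Pop ν ρ ρ' f y)) ∂ν ≤ A' := by
  have hs : SecondCountableTopology E := second_countable_of_fd
  have hcs : CompleteSpace E := FiniteDimensional.complete ℝ E
  have hcomb := gauss_comb ν h0 (a := ρ) (b := -ρ') (by rw [neg_sq]; exact hρ)
  have hmp : MeasurePreserving (fun p : E × E => ρ • p.1 + (-ρ') • p.2) (ν.prod ν) ν :=
    ⟨by fun_prop, hcomb⟩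
  have hDi2 : Integrable (fun p : E × E => D (ρ • p.1 + (-ρ') • p.2)) (ν.prod ν) :=
    hmp.integrable_comp_of_integrable hDi
  have a1 := hDi2.prod_right_ae
  have a2 : ∀ᵐ y ∂ν, ∀ᵐ w ∂ν, ∀ k, |fk k (ρ • y + (-ρ') • w)| ≤ D (ρ • y + (-ρ') • w) :=
    Measure.ae_ae_of_ae_prod (hmp.quasiMeasurePreserving.ae (ae_all_iff.2 hD))
  have a3 : ∀ᵐ y ∂ν, ∀ᵐ w ∂ν, Filter.Tendsto (fun k => fk k (ρ • y + (-ρ') • w)) Filter.atTop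
      (nhds (f (ρ • y + (-ρ') • w))) :=
    Measure.ae_ae_of_ae_prod (hmp.quasiMeasurePreserving.ae hlim)
  have hconv : ∀ᵐ y ∂ν, Filter.Tendsto (fun k => Pop ν ρ ρ' (fk k) y) Filter.atTop
      (nhds (Pop ν ρ ρ' f y)) := by
    filter_upwards [a1, a2, a3] with y h1 h2 h3
    unfold Pop
    refine tendsto_integral_of_dominated_convergence (fun w => D (ρ • y + (-ρ') • w)) (fun k => ?_)
      h1 (fun k => ?_) h3
    · exact ((hfk k).comp (by fun_prop)).aestronglyMeasurable
    · filter_upwards [h2] with w hw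
      exact hw k
  have hfat := lintegral_liminf_le (μ := ν) (u := Filter.atTop)
    (f := fun k y => ENNReal.ofReal (klFun (Pop ν ρ ρ' (fk k) y)))
    (fun k => (measurable_klFun.comp (Pop_meas ν ρ ρ' (hfk k))).ennreal_ofReal)
  calc ∫⁻ y, ENNReal.ofReal (klFun (Pop ν ρ ρ' f y)) ∂ν
      = ∫⁻ y, Filter.liminf (fun k => ENNReal.ofReal (klFun (Pop ν ρ ρ' (fk k) y))) Filter.atTop ∂ν := by
        apply lintegral_congr_ae
        filter_upwards [hconv] with y hy
        exact ((ENNReal.continuous_ofReal.comp continuous_klFun).continuousAt.tendsto.comp hy).liminf_eq.symm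
    _ ≤ _ := hfat
    _ ≤ Filter.liminf A Filter.atTop := Filter.liminf_le_liminf (Filter.Eventually.of_forall hk)
    _ = A' := hA.liminf_eq

end Nicer

section Approx
set_option linter.unusedSectionVars false
open ProbabilityTheory InformationTheory

variable {E : Type*} [NormedAddCommGroup E] [NormedSpace ℝ E] [FiniteDimensional ℝ E]
  [MeasurableSpace E] [BorelSpace E]

lemma nice_of_smooth {H : E → ℝ} (hs : HasCompactSupport H) (hH : ContDiff ℝ 2 H) {A B : ℝ}
    (hb : ∀ x, |H x| ≤ B) : ∃ K, Nice (A - B) (A + B) K (fun x => A + H x) (fderiv ℝ H) := by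
  have hd : ContDiff ℝ 1 (fderiv ℝ H) := hH.fderiv_right (by norm_num)
  obtain ⟨K1, hK1⟩ := (hs.fderiv ℝ).exists_bound_of_continuous hd.continuous
  obtain ⟨K2, hK2⟩ := ContDiff.lipschitzWith_of_hasCompactSupport (hs.fderiv ℝ) hd (by norm_num)
  have hK10 : 0 ≤ K1 := (norm_nonneg _).trans (hK1 0)
  have hK20 : 0 ≤ (K2 : ℝ) := K2.2
  have hdiff : ∀ x, DifferentiableAt ℝ H x := fun x => (hH.differentiable (by norm_num)) x
  refine ⟨K1 + K2, ?_, ?_, ?_, ?_, ?_, ?_⟩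
  · intro x; have := abs_le.1 (hb x); linarith
  · intro x; have := abs_le.1 (hb x); linarith
  · intro x y
    rw [add_sub_add_left_eq_sub]
    have := convex_univ.norm_image_sub_le_of_norm_fderiv_le (𝕜 := ℝ) (f := H) (C := K1)
      (fun x _ => hdiff x) (fun x _ => hK1 x) (mem_univ y) (mem_univ x)
    rw [Real.norm_eq_abs] at this
    nlinarith [norm_nonneg (x - y), mul_nonneg hK20 (norm_nonneg (x - y))]
  · intro x; linarith [hK1 x]
  · intro x y
    have := hK2.norm_sub_le x y
    nlinarith [norm_nonneg (x - y), mul_nonneg hK10 (norm_nonneg (x - y))]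
  · intro x v
    have := (convex_closedBall x ‖v‖).norm_image_sub_le_of_norm_fderiv_le' (𝕜 := ℝ) (f := H)
      (C := K2 * ‖v‖) (φ := fderiv ℝ H x) (x := x) (y := x + v)
      (fun x _ => hdiff x) (fun z hz => ?_) (by simp) (by simp)
    · rw [Real.norm_eq_abs, add_sub_cancel_left] at this
      rw [add_sub_add_left_eq_sub]
      nlinarith [mul_nonneg hK10 (sq_nonneg ‖v‖)]
    · refine (hK2.norm_sub_le z x).trans ?_
      rw [mem_closedBall_iff_norm] at hz
      gcongr

/-- smooth approximation of bounded measurable functions -/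
lemma exists_nice_seq (ν : Measure E) [IsProbabilityMeasure ν] {c C : ℝ} (hcC : c < C) {f : E → ℝ}
    (hf : Measurable f) (hfc : ∀ x, c ≤ f x) (hfC : ∀ x, f x ≤ C) :
    ∃ fk : ℕ → E → ℝ, (∀ k, ∃ K L, Nice c C K (fk k) L) ∧
      ∀ᵐ x ∂ν, Filter.Tendsto (fun k => fk k x) Filter.atTop (nhds (f x)) := by
  have hs : SecondCountableTopology E := second_countable_of_fd
  set A := (c + C) / 2 with hA
  set B := (C - c) / 2 with hB
  have hB0 : 0 < B := by rw [hB]; linarith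
  set q : E → ℝ := fun x => Real.arcsin ((f x - A) / B) with hq
  have hqm : Measurable q := by
    have : Measurable Real.arcsin := Real.continuous_arcsin.measurable
    exact this.comp (by fun_prop)
  have hfq : ∀ x, f x = A + B * Real.sin (q x) := by
    intro x
    have h1 := hfc x
    have h2 := hfC x
    rw [hq, Real.sin_arcsin]
    · field_simp; ring
    · rw [le_div_iff₀ hB0]; rw [hA, hB]; linarith
    · rw [div_le_iff₀ hB0]; rw [hA, hB]; linarith
  have hqL : MemLp q 1 ν := by
    refine MemLp.of_bound hqm.aestronglyMeasurable (Real.pi / 2) (Filter.Eventually.of_forall fun x => ?_)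
    rw [Real.norm_eq_abs, abs_le]
    exact ⟨Real.neg_pi_div_two_le_arcsin _, Real.arcsin_le_pi_div_two _⟩
  have hg : ∀ n : ℕ, ∃ g : E → ℝ, HasCompactSupport g ∧ ContDiff ℝ (↑(⊤ : ℕ∞)) g ∧
      eLpNorm (q - g) 1 ν ≤ ENNReal.ofReal (1 / ((n : ℝ) + 1)) := fun n =>
    hqL.exist_eLpNorm_sub_le (by simp) le_rfl (by positivity)
  choose g hg1 hg2 hg3 using hg
  have htend : Filter.Tendsto (fun n => eLpNorm (g n - q) 1 ν) Filter.atTop (nhds 0) := by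
    have h1 : Filter.Tendsto (fun n : ℕ => ENNReal.ofReal (1 / ((n : ℝ) + 1))) Filter.atTop (nhds 0) := by
      have := ENNReal.tendsto_ofReal tendsto_one_div_add_atTop_nhds_zero_nat
      simpa using this
    refine tendsto_of_tendsto_of_tendsto_of_le_of_le tendsto_const_nhds h1 (fun n => zero_le) (fun n => ?_)
    simp only
    rw [eLpNorm_sub_comm]
    exact hg3 n
  have hm := tendstoInMeasure_of_tendsto_eLpNorm (one_ne_zero)
    (fun n => ((hg2 n).continuous.aestronglyMeasurable)) hqm.aestronglyMeasurable htend
  obtain ⟨ns, -, hns⟩ := hm.exists_seq_tendsto_ae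
  refine ⟨fun k x => A + B * Real.sin (g (ns k) x), fun k => ?_, ?_⟩
  · have e1 : A - B = c := by rw [hA, hB]; ring
    have e2 : A + B = C := by rw [hA, hB]; ring
    have h1 : HasCompactSupport (fun x => B * Real.sin (g (ns k) x)) :=
      (hg1 (ns k)).comp_left (g := fun t => B * Real.sin t) (by simp)
    have h2 : ContDiff ℝ 2 (fun x => B * Real.sin (g (ns k) x)) := by
      have : ContDiff ℝ 2 (g (ns k)) := contDiff_infty.1 (hg2 (ns k)) 2
      exact contDiff_const.mul (Real.contDiff_sin.comp this)
    obtain ⟨K, hK⟩ := nice_of_smooth (A := A) (B := B) h1 h2 (fun x => by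
      rw [abs_mul, abs_of_pos hB0]
      exact mul_le_of_le_one_right hB0.le (Real.abs_sin_le_one _))
    rw [e1, e2] at hK
    exact ⟨K, _, hK⟩
  · filter_upwards [hns] with x hx
    rw [hfq x]
    exact ((Real.continuous_sin.continuousAt.tendsto.comp hx).const_mul B).const_add A

lemma klFun_bdd {c C : ℝ} : ∃ D, ∀ x, c ≤ x → x ≤ C → |klFun x| ≤ D := by
  obtain ⟨D, hD⟩ := (isCompact_Icc (a := c) (b := C)).exists_bound_of_continuousOn
    continuous_klFun.continuousOn
  exact ⟨D, fun x h1 h2 => hD x ⟨h1, h2⟩⟩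

lemma bdd_ineq (ν : Measure E) [IsGaussian ν] (h0 : ν[id] = 0) {ρ ρ' : ℝ} (hρ0 : 0 ≤ ρ)
    (hρ0' : 0 ≤ ρ') (hρ : ρ ^ 2 + ρ' ^ 2 = 1) {c C : ℝ} (hc : 0 < c) (hcC : c < C) {f : E → ℝ}
    (hf : Measurable f) (hfc : ∀ x, c ≤ f x) (hfC : ∀ x, f x ≤ C) :
    ∫⁻ y, ENNReal.ofReal (klFun (Pop ν ρ ρ' f y)) ∂ν ≤
      ENNReal.ofReal (ρ ^ 2 * ∫ x, klFun (f x) ∂ν + (1 - ρ ^ 2) * klFun (∫ x, f x ∂ν)) := by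
  have hs : SecondCountableTopology E := second_countable_of_fd
  have hcs : CompleteSpace E := FiniteDimensional.complete ℝ E
  obtain ⟨fk, hfk, hlim⟩ := exists_nice_seq ν hcC hf hfc hfC
  choose K L hN using hfk
  obtain ⟨D, hD⟩ := klFun_bdd (c := c) (C := C)
  have hfkm : ∀ k, Measurable (fk k) := fun k => (hN k).cont.measurable
  have t1 : Filter.Tendsto (fun k => ∫ x, fk k x ∂ν) Filter.atTop (nhds (∫ x, f x ∂ν)) :=
    tendsto_integral_of_dominated_convergence (fun _ => C) (fun k => (hfkm k).aestronglyMeasurable)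
      (integrable_const _) (fun k => Filter.Eventually.of_forall fun x => (hN k).abs_le hc x) hlim
  have t2 : Filter.Tendsto (fun k => ∫ x, klFun (fk k x) ∂ν) Filter.atTop (nhds (∫ x, klFun (f x) ∂ν)) := by
    refine tendsto_integral_of_dominated_convergence (fun _ => D)
      (fun k => (measurable_klFun.comp (hfkm k)).aestronglyMeasurable)
      (integrable_const _) (fun k => Filter.Eventually.of_forall fun x => hD _ ((hN k).lb x) ((hN k).ub x)) ?_
    filter_upwards [hlim] with x hx
    exact continuous_klFun.continuousAt.tendsto.comp hx
  have tA : Filter.Tendsto (fun k => ENNReal.ofReal (ρ ^ 2 * ∫ x, klFun (fk k x) ∂ν +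
      (1 - ρ ^ 2) * klFun (∫ x, fk k x ∂ν))) Filter.atTop (nhds (ENNReal.ofReal (ρ ^ 2 * ∫ x, klFun (f x) ∂ν +
      (1 - ρ ^ 2) * klFun (∫ x, f x ∂ν)))) :=
    ENNReal.tendsto_ofReal ((t2.const_mul _).add
      ((continuous_klFun.continuousAt.tendsto.comp t1).const_mul _))
  refine Pop_fatou ν h0 hρ hfkm (D := fun _ => C) (integrable_const _)
    (fun k => Filter.Eventually.of_forall fun x => (hN k).abs_le hc x) hlim tA (fun k => ?_)
  have hρ1 : ρ ≤ 1 := by nlinarith [sq_nonneg ρ']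
  have hG : Nice c C (K k) (Pop ν ρ ρ' (fk k)) _ :=
    (hN k).avg hc ν (r := ρ) (by rwa [abs_of_nonneg hρ0]) (-ρ')
  rw [← ofReal_integral_eq_lintegral_ofReal]
  · exact ENNReal.ofReal_le_ofReal (nice_ineq ν h0 hρ0 hρ0' hρ hc (hN k))
  · exact Integrable.of_bound (measurable_klFun.comp hG.cont.measurable).aestronglyMeasurable D
      (Filter.Eventually.of_forall fun x => hD _ (hG.lb x) (hG.ub x))
  · exact Filter.Eventually.of_forall fun x => klFun_nonneg (hc.le.trans (hG.lb x))

lemma klFun_clip {a b x : ℝ} (ha : a ≤ 1) (hb : 1 ≤ b) (hx : 0 ≤ x) :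
    klFun (max a (min x b)) ≤ klFun x := by
  have h1 : max a (min x b) ∈ segment ℝ 1 x := by
    rw [segment_eq_uIcc, mem_uIcc]
    rcases le_total x 1 with h | h
    · right
      rw [min_eq_left (h.trans hb)]
      exact ⟨le_max_right _ _, max_le ha h⟩
    · left
      have : 1 ≤ min x b := le_min h hb
      rw [max_eq_right (ha.trans this)]
      exact ⟨this, min_le_left _ _⟩
  have := convexOn_klFun.le_max_of_mem_segment (x := 1) (y := x) (by simp) hx h1
  rw [klFun_one, max_eq_right (klFun_nonneg hx)] at this
  exact this

lemma main_ineq (ν : Measure E) [IsGaussian ν] (h0 : ν[id] = 0) {ρ ρ' : ℝ} (hρ0 : 0 ≤ ρ)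
    (hρ0' : 0 ≤ ρ') (hρ : ρ ^ 2 + ρ' ^ 2 = 1) {f : E → ℝ}
    (hf : Measurable f) (hf0 : ∀ x, 0 ≤ f x) (hfi : Integrable f ν) (hf1 : ∫ x, f x ∂ν = 1)
    (hfk : Integrable (fun x => klFun (f x)) ν) :
    ∫⁻ y, ENNReal.ofReal (klFun (Pop ν ρ ρ' f y)) ∂ν ≤
      ENNReal.ofReal (ρ ^ 2 * ∫ x, klFun (f x) ∂ν) := by
  have hρ1 : ρ ≤ 1 := by nlinarith [sq_nonneg ρ']
  set a : ℕ → ℝ := fun k => 1 / ((k : ℝ) + 2) with ha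
  set b : ℕ → ℝ := fun k => (k : ℝ) + 2 with hb
  have ha0 : ∀ k, 0 < a k := fun k => by simp only [ha]; positivity
  have hb1 : ∀ k, 1 < b k := fun k => by simp only [hb]; linarith [(Nat.cast_nonneg k : (0:ℝ) ≤ k)]
  have ha1 : ∀ k, a k < 1 := fun k => by
    simp only [ha]; rw [div_lt_one (by positivity)]; exact hb1 k
  set fk : ℕ → E → ℝ := fun k x => max (a k) (min (f x) (b k)) with hfkd
  have hm : ∀ k, Measurable (fk k) := fun k => by
    simp only [hfkd]; fun_prop
  have hlow : ∀ k x, a k ≤ fk k x := fun k x => le_max_left _ _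
  have hup : ∀ k x, fk k x ≤ b k := fun k x =>
    max_le ((ha1 k).le.trans (hb1 k).le) (min_le_right _ _)
  have hdom : ∀ k x, |fk k x| ≤ 1 + f x := fun k x => by
    rw [abs_of_pos ((ha0 k).trans_le (hlow k x))]
    exact max_le (by linarith [ha1 k, hf0 x]) ((min_le_left _ _).trans (by linarith))
  have ta : Filter.Tendsto a Filter.atTop (nhds 0) := by
    have := (tendsto_one_div_add_atTop_nhds_zero_nat (𝕜 := ℝ)).comp (Filter.tendsto_add_atTop_nat 1)
    refine this.congr fun k => ?_
    simp only [Function.comp, ha]; push_cast; ring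
  have hlim : ∀ x, Filter.Tendsto (fun k => fk k x) Filter.atTop (nhds (f x)) := by
    intro x
    have t2 : Filter.Tendsto (fun k => min (f x) (b k)) Filter.atTop (nhds (f x)) := by
      obtain ⟨N, hN⟩ := exists_nat_ge (f x)
      refine tendsto_const_nhds.congr' ?_
      filter_upwards [Filter.eventually_ge_atTop N] with k hk
      have : (N : ℝ) ≤ k := by exact_mod_cast hk
      rw [min_eq_left]; simp only [hb]; linarith
    have := ta.max t2
    rwa [max_eq_right (hf0 x)] at this
  have hDi : Integrable (fun x => 1 + f x) ν := (integrable_const 1).add hfi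
  have t1 : Filter.Tendsto (fun k => ∫ x, fk k x ∂ν) Filter.atTop (nhds 1) := by
    rw [← hf1]
    exact tendsto_integral_of_dominated_convergence (fun x => 1 + f x)
      (fun k => (hm k).aestronglyMeasurable) hDi
      (fun k => Filter.Eventually.of_forall (hdom k)) (Filter.Eventually.of_forall hlim)
  have tA : Filter.Tendsto (fun k => ENNReal.ofReal (ρ ^ 2 * ∫ x, klFun (f x) ∂ν +
      (1 - ρ ^ 2) * klFun (∫ x, fk k x ∂ν))) Filter.atTop (nhds (ENNReal.ofReal (ρ ^ 2 * ∫ x, klFun (f x) ∂ν +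
      (1 - ρ ^ 2) * klFun 1))) :=
    ENNReal.tendsto_ofReal
      (((continuous_klFun.continuousAt.tendsto.comp t1).const_mul _).const_add _)
  rw [klFun_one, mul_zero, add_zero] at tA
  refine Pop_fatou ν h0 hρ hm hDi (fun k => Filter.Eventually.of_forall (hdom k))
    (Filter.Eventually.of_forall hlim) tA (fun k => ?_)
  refine (bdd_ineq ν h0 hρ0 hρ0' hρ (ha0 k) ((ha1 k).trans (hb1 k)) (hm k) (hlow k) (hup k)).trans ?_
  apply ENNReal.ofReal_le_ofReal
  obtain ⟨D, hD⟩ := klFun_bdd (c := a k) (C := b k)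
  have hi : ∫ x, klFun (fk k x) ∂ν ≤ ∫ x, klFun (f x) ∂ν := by
    apply integral_mono _ hfk
    · intro x
      exact klFun_clip (ha1 k).le (hb1 k).le (hf0 x)
    · exact Integrable.of_bound (measurable_klFun.comp (hm k)).aestronglyMeasurable D
        (Filter.Eventually.of_forall fun x => hD _ (hlow k x) (hup k x))
  linarith [mul_le_mul_of_nonneg_left hi (sq_nonneg ρ)]

end Approx

section Final
set_option linter.unusedSectionVars false
open ProbabilityTheory InformationTheory

variable {E : Type*} [NormedAddCommGroup E] [NormedSpace ℝ E] [FiniteDimensional ℝ E]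
  [MeasurableSpace E] [BorelSpace E]

lemma map_density (ν : Measure E) [IsGaussian ν] (h0 : ν[id] = 0) {ρ ρ' : ℝ}
    (hρ : ρ ^ 2 + ρ' ^ 2 = 1) {f : E → ℝ} (hf : Measurable f) (hf0 : ∀ x, 0 ≤ f x)
    (hfi : Integrable f ν) :
    Measure.map (fun p : E × E => ρ • p.1 + ρ' • p.2)
      ((ν.withDensity fun x => ENNReal.ofReal (f x)).prod ν) =
    ν.withDensity (fun y => ENNReal.ofReal (Pop ν ρ ρ' f y)) := by
  have hs : SecondCountableTopology E := second_countable_of_fd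
  have hcs : CompleteSpace E := FiniteDimensional.complete ℝ E
  have hrot := gauss_rot ν h0 hρ
  have hcomb := gauss_comb ν h0 (a := ρ) (b := -ρ') (by rw [neg_sq]; exact hρ)
  have hmp : MeasurePreserving (fun p : E × E => ρ • p.1 + (-ρ') • p.2) (ν.prod ν) ν :=
    ⟨by fun_prop, hcomb⟩
  have a1 := (hmp.integrable_comp_of_integrable hfi).prod_right_ae
  have hm : Measurable (fun p : E × E => ρ • p.1 + ρ' • p.2) := by fun_prop
  have hg : Measurable (fun x => ENNReal.ofReal (f x)) := hf.ennreal_ofReal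
  have hg2 : Measurable (fun q : E × E => ENNReal.ofReal (f (ρ • q.1 + (-ρ') • q.2))) :=
    hg.comp (by fun_prop : Measurable fun q : E × E => ρ • q.1 + (-ρ') • q.2)
  ext s hsm
  rw [Measure.map_apply hm hsm, prod_withDensity_left hg, withDensity_apply _ (hm hsm),
    withDensity_apply _ hsm, ← lintegral_indicator (hm hsm), ← lintegral_indicator hsm]
  have e1 : ∀ p : E × E, ((fun p : E × E => ρ • p.1 + ρ' • p.2) ⁻¹' s).indicator
      (fun a : E × E => ENNReal.ofReal (f a.1)) p =
      (fun q : E × E => s.indicator (fun _ => (1 : ℝ≥0∞)) q.1 *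
        ENNReal.ofReal (f (ρ • q.1 + (-ρ') • q.2)))
        (ρ • p.1 + ρ' • p.2, (-ρ') • p.1 + ρ • p.2) := by
    intro p
    have : ρ • (ρ • p.1 + ρ' • p.2) + (-ρ') • ((-ρ') • p.1 + ρ • p.2) = p.1 := by
      have h : p.1 = (ρ ^ 2 + ρ' ^ 2) • p.1 := by rw [hρ, one_smul]
      nth_rewrite 3 [h]
      module
    simp only [this, indicator, mem_preimage]
    split_ifs <;> simp
  rw [lintegral_congr e1]
  have hmeas : Measurable (fun q : E × E => s.indicator (fun _ => (1 : ℝ≥0∞)) q.1 *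
        ENNReal.ofReal (f (ρ • q.1 + (-ρ') • q.2))) :=
    ((measurable_const.indicator hsm).comp measurable_fst).mul hg2
  have hrm : Measurable (fun p : E × E => (ρ • p.1 + ρ' • p.2, (-ρ') • p.1 + ρ • p.2)) := by fun_prop
  have e2 := lintegral_map (μ := ν.prod ν) hmeas hrm
  rw [hrot] at e2
  rw [← e2, lintegral_prod _ hmeas.aemeasurable]
  apply lintegral_congr_ae
  filter_upwards [a1] with y hy
  have hgy : Measurable (fun w => ENNReal.ofReal (f (ρ • y + (-ρ') • w))) :=
    hg2.comp (by fun_prop : Measurable fun w : E => (y, w))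
  have hy' : Integrable (fun w => f (ρ • y + (-ρ') • w)) ν := hy
  rw [lintegral_const_mul _ hgy]
  rw [← ofReal_integral_eq_lintegral_ofReal hy' (Filter.Eventually.of_forall fun w => hf0 _)]
  simp only [indicator, Pop]
  split_ifs <;> simp

lemma kl_contract (ν : Measure E) [IsGaussian ν] (h0 : ν[id] = 0) {ρ ρ' : ℝ} (hρ0 : 0 ≤ ρ)
    (hρ0' : 0 ≤ ρ') (hρ : ρ ^ 2 + ρ' ^ 2 = 1) (μ : Measure E) [IsProbabilityMeasure μ]
    (hac : μ ≪ ν) (hint : Integrable (llr μ ν) μ) :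
    klDiv (Measure.map (fun p : E × E => ρ • p.1 + ρ' • p.2) (μ.prod ν)) ν ≤
      ENNReal.ofReal (ρ ^ 2) * klDiv μ ν := by
  have hs : SecondCountableTopology E := second_countable_of_fd
  set f : E → ℝ := fun x => (μ.rnDeriv ν x).toReal with hfd
  have hf : Measurable f := (Measure.measurable_rnDeriv μ ν).ennreal_toReal
  have hf0 : ∀ x, 0 ≤ f x := fun x => ENNReal.toReal_nonneg
  have hfi : Integrable f ν := Measure.integrable_toReal_rnDeriv
  have hf1 : ∫ x, f x ∂ν = 1 := by
    rw [hfd, Measure.integral_toReal_rnDeriv hac]; simp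
  have hμ : μ = ν.withDensity fun x => ENNReal.ofReal (f x) := by
    conv_lhs => rw [← Measure.withDensity_rnDeriv_eq μ ν hac]
    apply withDensity_congr_ae
    filter_upwards [Measure.rnDeriv_lt_top μ ν] with x hx
    rw [hfd, ENNReal.ofReal_toReal hx.ne]
  have hk : Integrable (fun x => klFun (f x)) ν := (integrable_klFun_rnDeriv_iff hac).2 hint
  have hkl : klDiv μ ν = ENNReal.ofReal (∫ x, klFun (f x) ∂ν) := by
    rw [klDiv_def, if_pos ⟨hac, hint⟩, ← integral_klFun_rnDeriv hac hint]
  have hm := map_density ν h0 hρ hf hf0 hfi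
  rw [← hμ] at hm
  have hprob : IsProbabilityMeasure (Measure.map (fun p : E × E => ρ • p.1 + ρ' • p.2) (μ.prod ν)) :=
    Measure.isProbabilityMeasure_map (by fun_prop)
  have hac' : Measure.map (fun p : E × E => ρ • p.1 + ρ' • p.2) (μ.prod ν) ≪ ν := by
    rw [hm]; exact withDensity_absolutelyContinuous _ _
  rw [klDiv_eq_lintegral_klFun_of_ac hac', hkl, ← ENNReal.ofReal_mul (sq_nonneg ρ)]
  refine le_trans (le_of_eq ?_) (main_ineq ν h0 hρ0 hρ0' hρ hf hf0 hfi hf1 hk)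
  apply lintegral_congr_ae
  rw [hm]
  filter_upwards [Measure.rnDeriv_withDensity ν ((Pop_meas ν ρ ρ' hf).ennreal_ofReal)] with y hy
  rw [hy, ENNReal.toReal_ofReal]
  exact integral_nonneg fun w => hf0 _

end Final

section Final2
open ProbabilityTheory InformationTheory

lemma KL_eq_klDiv {E : Type*} [MeasurableSpace E] (μ ν : Measure E) [IsProbabilityMeasure μ]
    [IsProbabilityMeasure ν] : KL μ ν = klDiv μ ν := by
  rw [klDiv_def, KL]
  simp only [llr_def, probReal_univ, add_sub_cancel_right]

lemma gauss_eq (d : ℕ) {σ : ℝ} (hσ : 0 < σ) :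
    gaussMeasure d (σ ^ 2) =
      Measure.map (fun x => σ • x) (stdGaussian (EuclideanSpace ℝ (Fin d))) := by
  set b : ℝ := 1 / (2 * σ ^ 2) with hb
  have hb0 : 0 < b := by positivity
  have hpb : π / b = 2 * π * σ ^ 2 := by rw [hb]; field_simp
  set cst : ℝ := (2 * π * σ ^ 2) ^ (-(d : ℝ) / 2) with hcst
  have hdens : ∀ x : EuclideanSpace ℝ (Fin d), gaussDensity d (σ ^ 2) x = cst * Real.exp (-b * ‖x‖ ^ 2) := by
    intro x
    rw [gaussDensity, hcst, hb]
    congr 2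
    field_simp
  have hm : Measurable (gaussDensity d (σ ^ 2)) := by
    have : gaussDensity d (σ ^ 2) = fun x => cst * Real.exp (-b * ‖x‖ ^ 2) := funext hdens
    rw [this]; fun_prop
  have hpos : ∀ x, 0 ≤ gaussDensity d (σ ^ 2) x := fun x => by rw [gaussDensity]; positivity
  have hint : Integrable (gaussDensity d (σ ^ 2)) := by
    have h1 := GaussianFourier.integral_rexp_neg_mul_sq_norm (V := EuclideanSpace ℝ (Fin d)) hb0
    have h2 : Integrable (fun v : EuclideanSpace ℝ (Fin d) => Real.exp (-b * ‖v‖ ^ 2)) := by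
      apply Integrable.of_integral_ne_zero
      rw [h1]
      have : 0 < π / b := by positivity
      positivity
    have : gaussDensity d (σ ^ 2) = fun x => cst * Real.exp (-b * ‖x‖ ^ 2) := funext hdens
    rw [this]
    exact h2.const_mul _
  have hfin : IsFiniteMeasure (gaussMeasure d (σ ^ 2)) :=
    isFiniteMeasure_withDensity_ofReal hint.2
  apply Measure.ext_of_charFun
  ext t
  rw [charFun_map_smul, charFun_stdGaussian, charFun_apply, gaussMeasure,
    integral_withDensity_eq_integral_toReal_smul hm.ennreal_ofReal (by simp)]
  have e1 : ∀ x : EuclideanSpace ℝ (Fin d), (ENNReal.ofReal (gaussDensity d (σ ^ 2) x)).toReal •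
      Complex.exp (↑(inner ℝ x t) * Complex.I) =
      (cst : ℂ) * Complex.exp (-(b : ℂ) * (‖x‖ : ℂ) ^ 2 + Complex.I * ↑(inner ℝ t x)) := by
    intro x
    rw [ENNReal.toReal_ofReal (hpos x), hdens, Complex.exp_add, Complex.real_smul, real_inner_comm]
    push_cast
    ring_nf
  simp only [e1]
  rw [integral_const_mul, GaussianFourier.integral_cexp_neg_mul_sq_norm_add (by simpa using hb0)]
  have e2 : (cst : ℂ) * ((π : ℂ) / (b : ℂ)) ^ ((Module.finrank ℝ (EuclideanSpace ℝ (Fin d)) : ℂ) / 2) = 1 := by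
    have h1 : ((π : ℂ) / (b : ℂ)) ^ ((Module.finrank ℝ (EuclideanSpace ℝ (Fin d)) : ℂ) / 2)
        = (((2 * π * σ ^ 2) ^ ((d : ℝ) / 2) : ℝ) : ℂ) := by
      rw [Complex.ofReal_cpow (by positivity), ← hpb]
      push_cast
      simp
    rw [h1, ← Complex.ofReal_mul, hcst, ← Real.rpow_add (by positivity)]
    rw [show -(d : ℝ) / 2 + (d : ℝ) / 2 = 0 by ring, Real.rpow_zero]
    simp
  rw [← mul_assoc, e2, one_mul]
  congr 1
  rw [norm_smul, Real.norm_of_nonneg hσ.le, hb, Complex.I_sq]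
  push_cast
  have : (σ : ℂ) ≠ 0 := by exact_mod_cast hσ.ne'
  field_simp
  ring

end Final2

/-- exponential contraction of the KL divergence along the forward flow:
`KL(μ_T ‖ γ_{σ²}) ≤ exp(−(1/σ²) ∫₀^T β(s) ds) · KL(μ ‖ γ_{σ²})` in `[0,∞]`. -/
theorem kl_forward_contraction (d : ℕ) (hd : 1 ≤ d) (σ T : ℝ) (hσ : 0 < σ) (hT : 0 < T)
    (β : ℝ → ℝ) (hβc : ContinuousOn β (Icc 0 T)) (hβpos : ∀ t ∈ Icc (0:ℝ) T, 0 < β t)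
    (hβmono : MonotoneOn β (Icc 0 T))
    (μ : Measure (EuclideanSpace ℝ (Fin d))) [IsProbabilityMeasure μ] :
    KL (forwardMarginal d (σ ^ 2) β μ T) (gaussMeasure d (σ ^ 2)) ≤
      ENNReal.ofReal (Real.exp (-(1 / σ ^ 2) * ∫ s in (0:ℝ)..T, β s)) *
        KL μ (gaussMeasure d (σ ^ 2)) := by
  set ν := gaussMeasure d (σ ^ 2) with hν
  have hν' : ν = Measure.map (fun x => σ • x)
      (ProbabilityTheory.stdGaussian (EuclideanSpace ℝ (Fin d))) := gauss_eq d hσ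
  have hstd : gaussMeasure d 1 = ProbabilityTheory.stdGaussian (EuclideanSpace ℝ (Fin d)) := by
    have := gauss_eq d (σ := 1) one_pos
    simpa using this
  have hG : ProbabilityTheory.IsGaussian ν := by
    rw [hν']
    exact ProbabilityTheory.isGaussian_map (μ := ProbabilityTheory.stdGaussian (EuclideanSpace ℝ (Fin d)))
      (σ • ContinuousLinearMap.id ℝ (EuclideanSpace ℝ (Fin d)))
  have h0 : ∫ x, id x ∂ν = 0 := by
    rw [hν', integral_map (by fun_prop) (by fun_prop)]
    simp only [id_eq]
    rw [integral_smul, ProbabilityTheory.integral_id_stdGaussian, smul_zero]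
  have hI : 0 ≤ ∫ s in (0:ℝ)..T, β s :=
    intervalIntegral.integral_nonneg hT.le fun u hu => (hβpos u hu).le
  set ρ := mcoef (σ ^ 2) β T with hρd
  have hρ0 : 0 < ρ := Real.exp_pos _
  have hρ1 : ρ ≤ 1 := by
    rw [hρd, mcoef, Real.exp_le_one_iff]
    have : 0 ≤ 1 / (2 * σ ^ 2) := by positivity
    nlinarith
  have hρ2 : ρ ^ 2 = Real.exp (-(1 / σ ^ 2) * ∫ s in (0:ℝ)..T, β s) := by
    rw [hρd, mcoef, ← Real.exp_nat_mul]
    congr 1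
    field_simp
    push_cast
    ring
  have hnn : 0 ≤ 1 - ρ ^ 2 := by nlinarith
  set ρ' := √(1 - ρ ^ 2) with hρ'd
  have hρρ : ρ ^ 2 + ρ' ^ 2 = 1 := by rw [hρ'd, Real.sq_sqrt hnn]; ring
  have hsc : scoef (σ ^ 2) β T = σ * ρ' := by
    rw [scoef, ← hρd, Real.sqrt_mul (by positivity), Real.sqrt_sq hσ.le]
  have hfm : forwardMarginal d (σ ^ 2) β μ T =
      Measure.map (fun p : EuclideanSpace ℝ (Fin d) × EuclideanSpace ℝ (Fin d) => ρ • p.1 + ρ' • p.2)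
        (μ.prod ν) := by
    have hp : μ.prod ν = Measure.map (Prod.map id (fun x => σ • x))
        (μ.prod (ProbabilityTheory.stdGaussian (EuclideanSpace ℝ (Fin d)))) := by
      rw [← Measure.map_prod_map _ _ measurable_id (by fun_prop), Measure.map_id, hν']
    rw [forwardMarginal, hstd, hsc, ← hρd, hp, Measure.map_map (by fun_prop) (by fun_prop)]
    congr 1
    ext p : 1
    simp only [Function.comp, Prod.map, id_eq, smul_smul]
    rw [mul_comm]
  have hprob : IsProbabilityMeasure (forwardMarginal d (σ ^ 2) β μ T) := by
    rw [hfm]; exact Measure.isProbabilityMeasure_map (by fun_prop)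
  by_cases hk : μ ≪ ν ∧ Integrable (fun x => Real.log (μ.rnDeriv ν x).toReal) μ
  · rw [KL_eq_klDiv, KL_eq_klDiv, hfm, ← hρ2]
    exact kl_contract ν h0 hρ0.le (Real.sqrt_nonneg _) hρρ μ hk.1 hk.2
  · have : KL μ ν = ⊤ := by rw [KL, if_neg hk]
    rw [this, ENNReal.mul_top]
    · exact le_top
    · simp only [ne_eq, ENNReal.ofReal_eq_zero, not_le]
      exact Real.exp_pos _
end
end

section
/- (Gaussian logarithmic Sobolev inequality.) Let σ² > 0 and let p : ℝ^d → (0, ∞) be a continuously differentiable probability density with respect to Lebesgue measure on ℝ^d. Then ∫_{ℝ^d} p(x) log(p(x)/φ_{σ²}(x)) dx ≤ (σ²/2) ∫_{ℝ^d} ‖∇ log p(x) + x/σ²‖² p(x) dx, i.e. the Kullback–Leibler divergence of the measure with density p from γ_{σ²} is bounded by (σ²/2) times its relative Fisher information, the inequality holding in [0, ∞]. -/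
open MeasureTheory Real Set
open scoped ENNReal Classical

noncomputable section

open ProbabilityTheory

namespace GLSI

lemma charFun_gaussMeasure (d : ℕ) (σ2 : ℝ) (hσ2 : 0 < σ2) (t : EuclideanSpace ℝ (Fin d)) :
    charFun (gaussMeasure d σ2) t = Complex.exp (-(σ2 * ‖t‖ ^ 2) / 2) := by
  rw [charFun_apply, gaussMeasure, integral_withDensity_eq_integral_toReal_smul]
  rotate_left
  · unfold gaussDensity
    exact (Continuous.measurable (by fun_prop)).ennreal_ofReal
  · exact Filter.Eventually.of_forall fun x => ENNReal.ofReal_lt_top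
  have h1 : ∀ x : EuclideanSpace ℝ (Fin d),
      (ENNReal.ofReal (gaussDensity d σ2 x)).toReal • Complex.exp (inner ℝ x t * Complex.I)
      = (((2 * π * σ2) ^ (-(d : ℝ) / 2) : ℝ) : ℂ) *
        Complex.exp (-((1 / (2 * σ2) : ℝ) : ℂ) * ‖x‖ ^ 2 + Complex.I * inner ℝ t x) := by
    intro x
    rw [ENNReal.toReal_ofReal (by unfold gaussDensity; positivity), gaussDensity,
      Complex.real_smul, Complex.ofReal_mul, mul_assoc, Complex.ofReal_exp, ← Complex.exp_add,
      real_inner_comm]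
    congr 2
    push_cast
    ring
  simp_rw [h1]
  rw [integral_const_mul, GaussianFourier.integral_cexp_neg_mul_sq_norm_add
    (by simp; positivity)]
  have h2 : (π / ((1 / (2 * σ2) : ℝ) : ℂ)) = ((2 * π * σ2 : ℝ) : ℂ) := by
    push_cast
    field_simp
  rw [h2, finrank_euclideanSpace_fin, Complex.ofReal_cpow (by positivity), ← mul_assoc,
    ← Complex.cpow_add _ _ (by exact_mod_cast (by positivity : (2 * π * σ2) ≠ 0))]
  have : (((-(d : ℝ) / 2 : ℝ) : ℂ) + (d : ℂ) / 2) = 0 := by push_cast; ring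
  rw [this, Complex.cpow_zero, one_mul]
  congr 1
  have : (σ2 : ℂ) ≠ 0 := by exact_mod_cast hσ2.ne'
  push_cast
  rw [Complex.I_sq]
  field_simp
  ring


/-- The abstract properties of the Gaussian measure that we use. -/
structure GProp {E : Type*} [NormedAddCommGroup E] [InnerProductSpace ℝ E] [MeasurableSpace E]
    (γ : Measure E) (v : ℝ) : Prop where
  prob : IsProbabilityMeasure γ
  rot : ∀ c s : ℝ, c ^ 2 + s ^ 2 = 1 →
    (γ.prod γ).map (fun z => c • z.1 + s • z.2) = γ
  cov : ∀ w : E, ∫ y, inner ℝ w y ^ 2 ∂γ = v * ‖w‖ ^ 2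
  mom : ∀ n : ℕ, Integrable (fun y => ‖y‖ ^ n) γ

lemma gauss_eq (d : ℕ) (σ2 : ℝ) (hσ2 : 0 < σ2) (hf : IsFiniteMeasure (gaussMeasure d σ2)) :
    gaussMeasure d σ2 = (stdGaussian (EuclideanSpace ℝ (Fin d))).map (√σ2 • ·) := by
  have : IsProbabilityMeasure ((stdGaussian (EuclideanSpace ℝ (Fin d))).map (√σ2 • ·)) :=
    Measure.isProbabilityMeasure_map (by fun_prop)
  apply Measure.ext_of_charFun
  ext t
  rw [charFun_gaussMeasure d σ2 hσ2, charFun_map_smul, charFun_stdGaussian, norm_smul]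
  congr 1
  have : ‖√σ2‖ ^ 2 = σ2 := by simp [Real.sq_sqrt hσ2.le]
  rw [Complex.ofReal_mul, mul_pow]
  rw [← Complex.ofReal_pow ‖√σ2‖, this]

lemma gauss_finite (d : ℕ) (σ2 : ℝ) (hσ2 : 0 < σ2) : IsFiniteMeasure (gaussMeasure d σ2) := by
  have h := charFun_gaussMeasure d σ2 hσ2 0
  rw [charFun_zero] at h
  constructor
  by_contra hc
  simp only [not_lt, top_le_iff] at hc
  simp [Measure.real, hc] at h

lemma gprop_gauss (d : ℕ) (σ2 : ℝ) (hσ2 : 0 < σ2) : GProp (gaussMeasure d σ2) σ2 := by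
  have hf := gauss_finite d σ2 hσ2
  have heq := gauss_eq d σ2 hσ2 hf
  have hp : IsProbabilityMeasure (gaussMeasure d σ2) := by
    rw [heq]; exact Measure.isProbabilityMeasure_map (by fun_prop)
  refine ⟨hp, ?_, ?_, ?_⟩
  · intro c s hcs
    have h1 : (fun z : EuclideanSpace ℝ (Fin d) × EuclideanSpace ℝ (Fin d) => c • z.1 + s • z.2)
        = (fun z => z.1 + z.2) ∘ (Prod.map (c • ·) (s • ·)) := by
      ext z; simp
    have h2 : ((gaussMeasure d σ2).prod (gaussMeasure d σ2)).map (fun z => c • z.1 + s • z.2)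
      = Measure.conv ((gaussMeasure d σ2).map (c • ·)) ((gaussMeasure d σ2).map (s • ·)) := by
      rw [Measure.conv, Measure.map_prod_map _ _ (by fun_prop) (by fun_prop),
        Measure.map_map (by fun_prop) (by fun_prop), h1]
    rw [h2]
    have : IsProbabilityMeasure ((gaussMeasure d σ2).map (c • ·)) :=
      Measure.isProbabilityMeasure_map (by fun_prop)
    have : IsProbabilityMeasure ((gaussMeasure d σ2).map (s • ·)) :=
      Measure.isProbabilityMeasure_map (by fun_prop)
    apply Measure.ext_of_charFun
    ext t
    rw [charFun_conv, charFun_map_smul, charFun_map_smul, charFun_gaussMeasure d σ2 hσ2,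
      charFun_gaussMeasure d σ2 hσ2, charFun_gaussMeasure d σ2 hσ2, ← Complex.exp_add]
    congr 1
    simp only [norm_smul, Real.norm_eq_abs]
    rw [← Complex.ofReal_pow, ← Complex.ofReal_pow, ← Complex.ofReal_pow, mul_pow, mul_pow,
      sq_abs, sq_abs, ← Complex.ofReal_mul, ← Complex.ofReal_mul, ← Complex.ofReal_mul]
    have : σ2 * ‖t‖ ^ 2 = σ2 * (c ^ 2 * ‖t‖ ^ 2) + σ2 * (s ^ 2 * ‖t‖ ^ 2) := by
      linear_combination (- σ2 * ‖t‖ ^ 2) * hcs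
    rw [this]
    push_cast
    ring
  · intro w
    rw [heq, integral_map (by fun_prop) (Continuous.aestronglyMeasurable (by fun_prop))]
    have hv := variance_dual_stdGaussian (E := EuclideanSpace ℝ (Fin d)) (innerSL ℝ w)
    rw [variance_eq_integral (by fun_prop), integral_strongDual_stdGaussian] at hv
    simp only [innerSL_apply_apply, sub_zero, innerSL_apply_norm] at hv
    simp_rw [inner_smul_right, mul_pow, Real.sq_sqrt hσ2.le, integral_const_mul]
    rw [hv]
  · intro n
    have : IsGaussian (gaussMeasure d σ2) := by
      rw [heq]
      exact isGaussian_map (μ := stdGaussian (EuclideanSpace ℝ (Fin d))) (√σ2 • ContinuousLinearMap.id ℝ _)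
    have := IsGaussian.memLp_id (gaussMeasure d σ2) n (by simp)
    exact this.integrable_norm_pow' 


section stepA

set_option linter.unusedSectionVars false

open Filter Topology

lemma mul_log_upper_one {t : ℝ} (ht : 0 < t) :
    t * log t ≤ (t - 1) + (t - 1) ^ 2 / 2 + |t - 1| ^ 3 / 2 := by
  rcases le_total 1 t with h | h
  · have h1 : log t ≤ sinh (log t) := Real.self_le_sinh_iff.2 (Real.log_nonneg h)
    rw [Real.sinh_eq, Real.exp_neg, Real.exp_log ht] at h1
    have h2 : t * log t ≤ t * ((t - t⁻¹) / 2) := mul_le_mul_of_nonneg_left h1 ht.le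
    have h3 : t * ((t - t⁻¹) / 2) = (t - 1) + (t - 1) ^ 2 / 2 := by
      field_simp
      ring
    have : 0 ≤ |t - 1| ^ 3 / 2 := by positivity
    linarith
  · have hx : 0 ≤ (1 - t) / t := div_nonneg (by linarith) ht.le
    have h1 := Real.le_log_one_add_of_nonneg hx
    have h2 : 1 + (1 - t) / t = t⁻¹ := by field_simp; ring
    have h3 : 2 * ((1 - t) / t) / ((1 - t) / t + 2) = 2 * (1 - t) / (1 + t) := by
      field_simp
      ring
    rw [h2, h3, Real.log_inv] at h1
    have h4 : t * log t ≤ t * (-(2 * (1 - t) / (1 + t))) :=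
      mul_le_mul_of_nonneg_left (by linarith) ht.le
    refine h4.trans ?_
    rw [abs_of_nonpos (by linarith)]
    rw [← sub_nonneg]
    have : (t - 1) + (t - 1) ^ 2 / 2 + (-(t - 1)) ^ 3 / 2 - t * (-(2 * (1 - t) / (1 + t)))
      = (1 - t) ^ 3 * t / (2 * (1 + t)) := by
      field_simp
      ring
    rw [this]
    have : 0 ≤ 1 - t := by linarith
    positivity

lemma mul_log_upper {h q : ℝ} (hh : 0 < h) (hq : 0 < q) :
    h * log h ≤ q * log q + (log q + 1) * (h - q) + (h - q) ^ 2 / (2 * q)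
      + |h - q| ^ 3 / (2 * q ^ 2) := by
  have h1 := mul_le_mul_of_nonneg_left (mul_log_upper_one (div_pos hh hq)) hq.le
  rw [Real.log_div hh.ne' hq.ne'] at h1
  have h2 : |h / q - 1| = |h - q| / q := by
    rw [← abs_of_pos hq, ← abs_div, abs_of_pos hq]
    congr 1
    field_simp
  rw [h2] at h1
  have h3 : q * (h / q * (log h - log q)) = h * log h - h * log q := by
    field_simp
  have h4 : q * (h / q - 1 + (h / q - 1) ^ 2 / 2 + (|h - q| / q) ^ 3 / 2)
     = (h - q) + (h - q) ^ 2 / (2 * q) + |h - q| ^ 3 / (2 * q ^ 2) := by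
    field_simp
  rw [h3, h4] at h1
  linarith

lemma mul_log_upper2 {h q : ℝ} (hh : 0 < h) (hq : 0 < q) :
    h * log h ≤ q * log q + (log q + 1) * (h - q) + (h - q) ^ 2 / q := by
  have h1 := mul_le_mul_of_nonneg_left (Real.log_le_sub_one_of_pos (div_pos hh hq)) hh.le
  rw [Real.log_div hh.ne' hq.ne'] at h1
  have h3 : h * (h / q - 1) = (h - q) + (h - q) ^ 2 / q := by
    field_simp
    ring
  rw [h3] at h1
  linarith

lemma mul_log_lower {h q : ℝ} (hh : 0 < h) (hq : 0 < q) :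
    q * log q + (log q + 1) * (h - q) ≤ h * log h := by
  have h1 := mul_le_mul_of_nonneg_left (Real.log_le_sub_one_of_pos (div_pos hq hh)) hh.le
  rw [Real.log_div hq.ne' hh.ne'] at h1
  have h3 : h * (q / h - 1) = q - h := by
    field_simp
  rw [h3] at h1
  linarith

variable {E : Type*} [NormedAddCommGroup E] [InnerProductSpace ℝ E] [FiniteDimensional ℝ E]
  [MeasurableSpace E] [BorelSpace E]

/-- Class of nice functions with gradient `G`. -/
structure Cls (a B L η M : ℝ) (g : E → ℝ) (G : E → E) : Prop where
  der : ∀ x, HasFDerivAt g (innerSL ℝ (G x)) x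
  lo : ∀ x, a ≤ g x
  hi : ∀ x, g x ≤ B
  cont : Continuous G
  bd : ∀ x, ‖G x‖ ≤ L
  mod : ∀ x y, ‖G x - G y‖ ≤ η + M * ‖x - y‖

lemma Cls.contg {a B L η M : ℝ} {g : E → ℝ} {G : E → E} (h : Cls a B L η M g G) :
    Continuous g := continuous_iff_continuousAt.2 fun x => (h.der x).continuousAt

lemma Cls.lip {a B L η M : ℝ} {g : E → ℝ} {G : E → E} (h : Cls a B L η M g G) (x z : E) :
    |g (x + z) - g x| ≤ L * ‖z‖ := by
  have := convex_univ.norm_image_sub_le_of_norm_hasFDerivWithin_le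
    (f := g) (f' := fun x => innerSL ℝ (G x)) (C := L)
    (fun x _ => (h.der x).hasFDerivWithinAt) (fun x _ => by simpa using h.bd x)
    (mem_univ x) (mem_univ (x + z))
  simpa using this

lemma Cls.taylor {a B L η M : ℝ} {g : E → ℝ} {G : E → E} (hM : 0 ≤ M) (h : Cls a B L η M g G)
    (x z : E) :
    |g (x + z) - g x - inner ℝ (G x) z| ≤ (η + M * ‖z‖) * ‖z‖ := by
  have := (convex_closedBall x ‖z‖).norm_image_sub_le_of_norm_hasFDerivWithin_le'
    (f := g) (f' := fun x => innerSL ℝ (G x)) (C := η + M * ‖z‖) (φ := innerSL ℝ (G x))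
    (fun x _ => (h.der x).hasFDerivWithinAt)
    (fun w hw => by
      rw [← map_sub, innerSL_apply_norm]
      refine (h.mod w x).trans ?_
      have : ‖w - x‖ ≤ ‖z‖ := by simpa [dist_eq_norm] using hw
      gcongr)
    (Metric.mem_closedBall_self (norm_nonneg _)) (y := x + z) (by simp)
  simpa using this

lemma intb {γ : Measure E} [IsProbabilityMeasure γ] {F : Type*} [NormedAddCommGroup F]
    [SecondCountableTopology F] {f : E → F} (hf : Continuous f) (C : ℝ) (h : ∀ x, ‖f x‖ ≤ C) :
    Integrable f γ := by
  borelize F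
  exact Integrable.of_bound hf.aestronglyMeasurable C (Eventually.of_forall h)

lemma rot_integral {γ : Measure E} {v : ℝ} (hγ : GProp γ v) {c s : ℝ} (hcs : c ^ 2 + s ^ 2 = 1)
    {F : E → ℝ} (hF : Continuous F) (C : ℝ) (h : ∀ x, ‖F x‖ ≤ C) :
    ∫ x, ∫ y, F (c • x + s • y) ∂γ ∂γ = ∫ x, F x ∂γ := by
  have := hγ.prob
  conv_rhs => rw [← hγ.rot c s hcs]
  rw [integral_map (by fun_prop) hF.aestronglyMeasurable]
  rw [integral_prod]
  exact Integrable.of_bound (Continuous.aestronglyMeasurable (by fun_prop)) C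
    (Eventually.of_forall fun z => h _)

lemma cont_P {γ : Measure E} [IsProbabilityMeasure γ] (c s : ℝ)
    {F : Type*} [NormedAddCommGroup F] [NormedSpace ℝ F] [SecondCountableTopology F]
    {f : E → F} (hf : Continuous f) (C : ℝ) (h : ∀ x, ‖f x‖ ≤ C) :
    Continuous (fun x => ∫ y, f (c • x + s • y) ∂γ) := by
  borelize F
  refine continuous_of_dominated (bound := fun _ => C) ?_ ?_ ?_ ?_
  · intro x
    exact Continuous.aestronglyMeasurable (by fun_prop)
  · exact fun x => Eventually.of_forall fun y => h _
  · exact integrable_const _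
  · exact Eventually.of_forall fun y => by fun_prop

lemma bound_P {γ : Measure E} [IsProbabilityMeasure γ] (c s : ℝ)
    {F : Type*} [NormedAddCommGroup F] [NormedSpace ℝ F]
    {f : E → F} (C : ℝ) (h : ∀ x, ‖f x‖ ≤ C) (x : E) :
    ‖∫ y, f (c • x + s • y) ∂γ‖ ≤ C := by
  simpa using norm_integral_le_of_norm_le_const (μ := γ) (f := fun y => f (c • x + s • y))
    (C := C) (Eventually.of_forall fun y => h _)

lemma integral_le_comb {γ : Measure E} {v : ℝ} (hγ : GProp γ v) {F h : E → ℝ}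
    (hF : Integrable F γ) (hh : Integrable h γ) (A B C C1 C2 C3 : ℝ) (w : E)
    (H : ∀ y, F y ≤ A + B * h y + C * inner ℝ w y ^ 2 + C1 * ‖y‖ ^ 1 + C2 * ‖y‖ ^ 2
      + C3 * ‖y‖ ^ 3) :
    ∫ y, F y ∂γ ≤ A + B * ∫ y, h y ∂γ + C * (v * ‖w‖ ^ 2) + C1 * ∫ y, ‖y‖ ^ 1 ∂γ
      + C2 * ∫ y, ‖y‖ ^ 2 ∂γ + C3 * ∫ y, ‖y‖ ^ 3 ∂γ := by
  have := hγ.prob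
  have hw : Integrable (fun y => inner ℝ w y ^ 2) γ := by
    refine ((hγ.mom 2).const_mul (‖w‖ ^ 2)).mono'
      (Continuous.aestronglyMeasurable (by fun_prop)) (Eventually.of_forall fun y => ?_)
    rw [Real.norm_eq_abs, abs_of_nonneg (sq_nonneg _), ← mul_pow, ← sq_abs]
    exact pow_le_pow_left₀ (abs_nonneg _) (abs_real_inner_le_norm w y) 2
  have i1 := (integrable_const (μ := γ) A).add (hh.const_mul B)
  have i2 := i1.add (hw.const_mul C)
  have i3 := i2.add ((hγ.mom 1).const_mul C1)
  have i4 := i3.add ((hγ.mom 2).const_mul C2)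
  have i5 := i4.add ((hγ.mom 3).const_mul C3)
  refine (integral_mono hF i5 H).trans (le_of_eq ?_)
  rw [integral_add' i4 ((hγ.mom 3).const_mul C3), integral_add' i3 ((hγ.mom 2).const_mul C2),
    integral_add' i2 ((hγ.mom 1).const_mul C1), integral_add' i1 (hw.const_mul C),
    integral_add' (integrable_const A) (hh.const_mul B)]
  simp only [integral_const_mul, hγ.cov]
  simp

lemma Cls.P {γ : Measure E} [IsProbabilityMeasure γ] {c s : ℝ} (hc0 : 0 ≤ c) (hc1 : c ≤ 1)
    {a B L η M : ℝ} (hM : 0 ≤ M) {g : E → ℝ} {G : E → E} (h : Cls a B L η M g G) :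
    Cls a B (c * L) (c * η) (c * M) (fun x => ∫ y, g (c • x + s • y) ∂γ)
      (fun x => c • ∫ y, G (c • x + s • y) ∂γ) := by
  have hg := h.contg
  have hG := h.cont
  have hgb : ∀ x, ‖g x‖ ≤ max |a| |B| := fun x => abs_le_max_abs_abs (h.lo x) (h.hi x)
  have hgi : ∀ x, Integrable (fun y => g (c • x + s • y)) γ := fun x =>
    intb (by fun_prop) _ (fun y => hgb _)
  have hGi : ∀ x, Integrable (fun y => G (c • x + s • y)) γ := fun x =>
    intb (by fun_prop) _ (fun y => h.bd _)
  refine ⟨?_, ?_, ?_, ?_, ?_, ?_⟩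
  · intro x
    have key := hasFDerivAt_integral_of_dominated_of_fderiv_le (𝕜 := ℝ) (μ := γ)
      (F := fun x y => g (c • x + s • y)) (F' := fun x y => c • innerSL ℝ (G (c • x + s • y)))
      (x₀ := x) (s := univ) (bound := fun _ => |c| * L) univ_mem
      (Eventually.of_forall fun x => (hgi x).aestronglyMeasurable) (hgi x)
      (Continuous.aestronglyMeasurable (by fun_prop))
      (Eventually.of_forall fun y x _ => by
        rw [norm_smul, innerSL_apply_norm, Real.norm_eq_abs]
        exact mul_le_mul_of_nonneg_left (h.bd _) (abs_nonneg _))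
      (integrable_const _)
      (Eventually.of_forall fun y x _ => by
        have h1 : HasFDerivAt (fun x : E => c • x + s • y) (c • ContinuousLinearMap.id ℝ E) x :=
          ((hasFDerivAt_id x).const_smul c).add_const _
        have h2 := (h.der (c • x + s • y)).comp x h1
        have h3 : (innerSL ℝ (G (c • x + s • y))).comp (c • ContinuousLinearMap.id ℝ E)
            = c • innerSL ℝ (G (c • x + s • y)) := by
          ext z
          simp [inner_smul_right]
        rw [h3] at h2
        exact h2)
    have hi : Integrable (fun y => c • innerSL ℝ (G (c • x + s • y))) γ := by
      refine intb (by fun_prop) (|c| * L) (fun y => ?_)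
      rw [norm_smul, innerSL_apply_norm, Real.norm_eq_abs]
      exact mul_le_mul_of_nonneg_left (h.bd _) (abs_nonneg _)
    have h4 : innerSL ℝ (c • ∫ y, G (c • x + s • y) ∂γ)
        = ∫ y, c • innerSL ℝ (G (c • x + s • y)) ∂γ := by
     ext z
     rw [ContinuousLinearMap.integral_apply hi]
     simp only [innerSL_apply_apply, ContinuousLinearMap.smul_apply, smul_eq_mul,
      integral_const_mul, inner_smul_left]
     rw [real_inner_comm, ← integral_inner (hGi x)]
     simp only [real_inner_comm]
     rfl
    rw [h4]
    exact key
  · intro x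
    have := integral_mono (integrable_const a) (hgi x) (fun y => h.lo _)
    simpa using this
  · intro x
    have := integral_mono (hgi x) (integrable_const B) (fun y => h.hi _)
    simpa using this
  · exact (cont_P c s hG L h.bd).const_smul c
  · intro x
    rw [norm_smul, Real.norm_eq_abs, abs_of_nonneg hc0]
    exact mul_le_mul_of_nonneg_left (bound_P c s L h.bd x) hc0
  · intro x x'
    rw [← smul_sub, norm_smul, Real.norm_eq_abs, abs_of_nonneg hc0, ← integral_sub (hGi x) (hGi x')]
    have h1 : ‖∫ y, (G (c • x + s • y) - G (c • x' + s • y)) ∂γ‖ ≤ η + M * ‖x - x'‖ := by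
      have := norm_integral_le_of_norm_le_const (μ := γ)
        (f := fun y => (G (c • x + s • y) - G (c • x' + s • y)))
        (C := η + M * ‖x - x'‖) (Eventually.of_forall fun y => by
          refine (h.mod _ _).trans ?_
          rw [add_sub_add_right_eq_sub, ← smul_sub, norm_smul, Real.norm_eq_abs,
            abs_of_nonneg hc0]
          gcongr
          exact mul_le_of_le_one_left (norm_nonneg _) hc1)
      simpa using this
    calc _ ≤ c * (η + M * ‖x - x'‖) := mul_le_mul_of_nonneg_left h1 hc0
      _ = _ := by ring

end stepA

section stepB

set_option linter.unusedSectionVars false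

open Filter Topology

variable {E : Type*} [NormedAddCommGroup E] [InnerProductSpace ℝ E] [FiniteDimensional ℝ E]
  [MeasurableSpace E] [BorelSpace E]

lemma Cls.bdH {a B L η M : ℝ} {g : E → ℝ} {G : E → E} (h : Cls a B L η M g G) :
    ∃ C, ∀ x, ‖g x * log (g x)‖ ≤ C := by
  obtain ⟨C, hC⟩ := (isCompact_Icc (a := a) (b := B)).exists_bound_of_continuousOn
    (f := fun t : ℝ => t * log t) Real.continuous_mul_log.continuousOn
  exact ⟨C, fun x => hC _ ⟨h.lo x, h.hi x⟩⟩

lemma Cls.contH {a B L η M : ℝ} {g : E → ℝ} {G : E → E} (h : Cls a B L η M g G) :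
    Continuous fun x => g x * log (g x) := Real.continuous_mul_log.comp h.contg

lemma Cls.bdI {a B L η M : ℝ} (ha : 0 < a) {g : E → ℝ} {G : E → E} (h : Cls a B L η M g G)
    (x : E) : ‖‖G x‖ ^ 2 / g x‖ ≤ L ^ 2 / a := by
  have h1 := h.lo x
  have h2 := h.bd x
  have : 0 < g x := ha.trans_le h1
  rw [Real.norm_eq_abs, abs_of_nonneg (by positivity)]
  gcongr

lemma Cls.contI {a B L η M : ℝ} (ha : 0 < a) {g : E → ℝ} {G : E → E} (h : Cls a B L η M g G) :
    Continuous fun x => ‖G x‖ ^ 2 / g x :=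
  (h.cont.norm.pow 2).div h.contg fun x => (ha.trans_le (h.lo x)).ne'

/-- The one-step error. -/
def errT (K2 K3 a s L η M : ℝ) : ℝ :=
  η * s ^ 2 * L * K2 / a + s ^ 3 * (L * M * K3 / a + L ^ 3 * K3 / (2 * a ^ 2))

lemma local_step {γ : Measure E} {v : ℝ} (hγ : GProp γ v) {s : ℝ} (hs : 0 ≤ s)
    {a B L η M : ℝ} (ha : 0 < a) (hL : 0 ≤ L) (hη : 0 ≤ η) (hM : 0 ≤ M)
    {g : E → ℝ} {G : E → E} (h : Cls a B L η M g G) (u : E) :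
    ∫ y, g (u + s • y) * log (g (u + s • y)) ∂γ ≤
      (∫ y, g (u + s • y) ∂γ) * log (∫ y, g (u + s • y) ∂γ)
      + s ^ 2 * v / 2 * (‖G u‖ ^ 2 / g u)
      + (L * s ^ 2 * η / a * (∫ y, ‖y‖ ^ 2 ∂γ)
        + (L * M * s ^ 3 / a + L ^ 3 * s ^ 3 / (2 * a ^ 2)) * ∫ y, ‖y‖ ^ 3 ∂γ) := by
  have := hγ.prob
  have hg := h.contg
  have hgb : ∀ x, ‖g x‖ ≤ max |a| |B| := fun x => abs_le_max_abs_abs (h.lo x) (h.hi x)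
  have hgi : Integrable (fun y => g (u + s • y)) γ := intb (by fun_prop) _ (fun y => hgb _)
  obtain ⟨C, hC⟩ := h.bdH
  have hHi : Integrable (fun y => g (u + s • y) * log (g (u + s • y))) γ :=
    intb (h.contH.comp (by fun_prop : Continuous fun y : E => u + s • y)) C (fun y => hC _)
  have hq : 0 < g u := ha.trans_le (h.lo u)
  set q := g u with hqdef
  have haq : a ≤ q := h.lo u
  have key := integral_le_comb hγ hHi hgi (q * log q - (log q + 1) * q) (log q + 1)
    (s ^ 2 / (2 * q)) 0 (L * s ^ 2 * η / a)
    (L * M * s ^ 3 / a + L ^ 3 * s ^ 3 / (2 * a ^ 2)) (G u) (by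
      intro y
      have h1 := mul_log_upper (ha.trans_le (h.lo (u + s • y))) hq
      have h2 := h.lip u (s • y)
      have h3 := h.taylor hM u (s • y)
      rw [norm_smul, Real.norm_eq_abs, abs_of_nonneg hs] at h2 h3
      rw [inner_smul_right] at h3
      have h4 := abs_real_inner_le_norm (G u) y
      have h5 : |inner ℝ (G u) y| ≤ L * ‖y‖ :=
        h4.trans (mul_le_mul_of_nonneg_right (h.bd u) (norm_nonneg _))
      rw [← hqdef] at h2 h3
      set k := g (u + s • y) with hk
      set i := (inner ℝ (G u) y : ℝ) with hi
      set n := ‖y‖ with hn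
      have hn0 : 0 ≤ n := norm_nonneg _
      have e1 : (k - q) ^ 2 ≤ s ^ 2 * i ^ 2
          + 2 * L * s ^ 2 * η * n ^ 2 + 2 * L * M * s ^ 3 * n ^ 3 := by
        have : (k - q) ^ 2 - (s * i) ^ 2 = (k - q - s * i) * (k - q + s * i) := by ring
        have b1 : |k - q + s * i| ≤ 2 * L * s * n := by
          refine (abs_add_le _ _).trans ?_
          rw [abs_mul, abs_of_nonneg hs]
          have := mul_le_mul_of_nonneg_left h5 hs
          linarith
        have b2 : (k - q - s * i) * (k - q + s * i)
            ≤ ((η + M * (s * n)) * (s * n)) * (2 * L * s * n) := by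
          refine (le_abs_self _).trans ?_
          rw [abs_mul]
          exact mul_le_mul h3 b1 (abs_nonneg _) (by positivity)
        nlinarith [b2, this]
      have e2 : |k - q| ^ 3 ≤ L ^ 3 * s ^ 3 * n ^ 3 := by
        calc |k - q| ^ 3 ≤ (L * (s * n)) ^ 3 := pow_le_pow_left₀ (abs_nonneg _) h2 3
          _ = _ := by ring
      have e3 : (k - q) ^ 2 / (2 * q) ≤ s ^ 2 / (2 * q) * i ^ 2 + (L * s ^ 2 * η / a) * n ^ 2
          + (L * M * s ^ 3 / a) * n ^ 3 := by
        calc (k - q) ^ 2 / (2 * q) ≤ (s ^ 2 * i ^ 2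
            + 2 * L * s ^ 2 * η * n ^ 2 + 2 * L * M * s ^ 3 * n ^ 3) / (2 * q) := by gcongr
          _ = s ^ 2 / (2 * q) * i ^ 2 + (2 * L * s ^ 2 * η * n ^ 2
              + 2 * L * M * s ^ 3 * n ^ 3) / (2 * q) := by ring
          _ ≤ s ^ 2 / (2 * q) * i ^ 2 + (2 * L * s ^ 2 * η * n ^ 2
              + 2 * L * M * s ^ 3 * n ^ 3) / (2 * a) := by gcongr
          _ = _ := by
            field_simp
            ring
      have e4 : |k - q| ^ 3 / (2 * q ^ 2) ≤ L ^ 3 * s ^ 3 / (2 * a ^ 2) * n ^ 3 := by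
        calc |k - q| ^ 3 / (2 * q ^ 2) ≤ L ^ 3 * s ^ 3 * n ^ 3 / (2 * a ^ 2) := by gcongr
          _ = _ := by ring
      linarith)
  have hpos : 0 < ∫ y, g (u + s • y) ∂γ := by
    have := integral_mono (integrable_const a) hgi (fun y => h.lo _)
    simp at this
    linarith
  have hlow := mul_log_lower hpos hq
  have : s ^ 2 / (2 * q) * (v * ‖G u‖ ^ 2) = s ^ 2 * v / 2 * (‖G u‖ ^ 2 / q) := by
    field_simp
  rw [this] at key
  linarith

lemma psi_step {γ : Measure E} {v : ℝ} (hγ : GProp γ v) {s : ℝ} (hs : 0 ≤ s)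
    {a B L η M : ℝ} (ha : 0 < a) (hL : 0 ≤ L) (hη : 0 ≤ η) (hM : 0 ≤ M)
    {g : E → ℝ} {G : E → E} (h : Cls a B L η M g G) (u : E) :
    ‖G u‖ ^ 2 / g u ≤ ∫ y, ‖G (u + s • y)‖ ^ 2 / g (u + s • y) ∂γ + 2 * L * η / a
      + (2 * L * M * s / a + L ^ 3 * s / a ^ 2) * ∫ y, ‖y‖ ^ 1 ∂γ := by
  have := hγ.prob
  have hi : Integrable (fun y => ‖G (u + s • y)‖ ^ 2 / g (u + s • y)) γ :=
    intb ((h.contI ha).comp (by fun_prop : Continuous fun y : E => u + s • y)) (L ^ 2 / a)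
      (fun y => h.bdI ha _)
  have key := integral_le_comb hγ (integrable_const (‖G u‖ ^ 2 / g u)) hi (2 * L * η / a) 1
    0 (2 * L * M * s / a + L ^ 3 * s / a ^ 2) 0 0 0 (by
      intro y
      have h2 := h.lip u (s • y)
      have h3 := h.mod u (u + s • y)
      have h4 := h.bd u
      have h5 := h.bd (u + s • y)
      have h6 := h.lo u
      have h7 := h.lo (u + s • y)
      rw [norm_smul, Real.norm_eq_abs, abs_of_nonneg hs] at h2
      have : ‖u - (u + s • y)‖ = s * ‖y‖ := by
        rw [sub_add_cancel_left, norm_neg, norm_smul, Real.norm_eq_abs, abs_of_nonneg hs]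
      rw [this] at h3
      have h8 : ‖G u‖ - ‖G (u + s • y)‖ ≤ η + M * (s * ‖y‖) :=
        (norm_sub_norm_le _ _).trans h3
      have n1 := norm_nonneg (G u)
      have n2 := norm_nonneg (G (u + s • y))
      set A := ‖G u‖
      set A' := ‖G (u + s • y)‖
      set q := g u
      set k := g (u + s • y)
      set n := ‖y‖ with hn
      have hn0 : 0 ≤ n := norm_nonneg _
      have hq : 0 < q := by linarith
      have hk : 0 < k := by linarith
      have e0 : A ^ 2 / q - A' ^ 2 / k = (A - A') * (A + A') / q + A' ^ 2 * (k - q) / (k * q) := by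
        field_simp
        ring
      have e1 : (A - A') * (A + A') / q ≤ (η + M * (s * n)) * (2 * L) / a := by
        have : (A - A') * (A + A') ≤ (η + M * (s * n)) * (2 * L) := by
          refine (mul_le_mul_of_nonneg_right h8 (by positivity)).trans ?_
          exact mul_le_mul_of_nonneg_left (by linarith) (by positivity)
        refine (div_le_div_of_nonneg_right this hq.le).trans ?_
        gcongr
      have e2 : A' ^ 2 * (k - q) / (k * q) ≤ L ^ 2 * (L * (s * n)) / (a * a) := by
        have : A' ^ 2 * (k - q) ≤ L ^ 2 * (L * (s * n)) := by
          calc A' ^ 2 * (k - q) ≤ A' ^ 2 * (L * (s * n)) :=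
                mul_le_mul_of_nonneg_left ((le_abs_self _).trans h2) (by positivity)
            _ ≤ _ := by gcongr
        refine (div_le_div_of_nonneg_right this (by positivity)).trans ?_
        gcongr
      have e3 : (η + M * (s * n)) * (2 * L) / a + L ^ 2 * (L * (s * n)) / (a * a)
        = 2 * L * η / a + (2 * L * M * s / a + L ^ 3 * s / a ^ 2) * n := by
        field_simp
        ring
      simp only [inner_zero_left, pow_one]
      linarith)
  simp only [integral_const, probReal_univ, one_smul] at key
  linarith

lemma fisher_step {γ : Measure E} {v : ℝ} (hγ : GProp γ v) {c s : ℝ}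
    (hcs : c ^ 2 + s ^ 2 = 1)
    {a B L η M : ℝ} (ha : 0 < a) 
    {g : E → ℝ} {G : E → E} (h : Cls a B L η M g G) :
    ∫ x, ‖c • ∫ y, G (c • x + s • y) ∂γ‖ ^ 2 / (∫ y, g (c • x + s • y) ∂γ) ∂γ
      ≤ c ^ 2 * ∫ x, ‖G x‖ ^ 2 / g x ∂γ := by
  have := hγ.prob
  have hg := h.contg
  have hG := h.cont
  have hgb : ∀ x, ‖g x‖ ≤ max |a| |B| := fun x => abs_le_max_abs_abs (h.lo x) (h.hi x)
  have hgi : ∀ x, Integrable (fun y => g (c • x + s • y)) γ := fun x =>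
    intb (by fun_prop) _ (fun y => hgb _)
  have hGi : ∀ x, Integrable (fun y => G (c • x + s • y)) γ := fun x =>
    intb (by fun_prop) _ (fun y => h.bd _)
  have hIi : ∀ x, Integrable (fun y => ‖G (c • x + s • y)‖ ^ 2 / g (c • x + s • y)) γ := fun x =>
    intb ((h.contI ha).comp (by fun_prop : Continuous fun y : E => c • x + s • y)) (L ^ 2 / a)
      (fun y => h.bdI ha _)
  have pt : ∀ x, ‖c • ∫ y, G (c • x + s • y) ∂γ‖ ^ 2 / (∫ y, g (c • x + s • y) ∂γ)
      ≤ c ^ 2 * ∫ y, ‖G (c • x + s • y)‖ ^ 2 / g (c • x + s • y) ∂γ := by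
    intro x
    have hpos : 0 < ∫ y, g (c • x + s • y) ∂γ := by
      have := integral_mono (integrable_const a) (hgi x) (fun y => h.lo _)
      simp at this
      linarith
    set m := ∫ y, g (c • x + s • y) ∂γ with hm
    set V := ∫ y, G (c • x + s • y) ∂γ with hV
    have e1 : ∀ y, 2 * inner ℝ (m⁻¹ • V) (G (c • x + s • y))
        - ‖m⁻¹ • V‖ ^ 2 * g (c • x + s • y)
        ≤ ‖G (c • x + s • y)‖ ^ 2 / g (c • x + s • y) := by
      intro y
      have hk : 0 < g (c • x + s • y) := ha.trans_le (h.lo _)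
      have h1 := real_inner_le_norm (m⁻¹ • V) (G (c • x + s • y))
      rw [le_div_iff₀ hk]
      nlinarith [sq_nonneg (‖m⁻¹ • V‖ * g (c • x + s • y) - ‖G (c • x + s • y)‖)]
    have hinn : Integrable (fun y => inner ℝ (m⁻¹ • V) (G (c • x + s • y))) γ :=
      (hGi x).const_inner _
    have e2 := integral_mono ((hinn.const_mul 2).sub ((hgi x).const_mul (‖m⁻¹ • V‖ ^ 2)))
      (hIi x) e1
    rw [integral_sub' (hinn.const_mul 2) ((hgi x).const_mul (‖m⁻¹ • V‖ ^ 2)),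
      integral_const_mul, integral_const_mul, integral_inner (hGi x), ← hV, ← hm,
      real_inner_smul_left, real_inner_self_eq_norm_sq, norm_smul, mul_pow, norm_inv,
      Real.norm_eq_abs, abs_of_pos hpos] at e2
    have e3 : 2 * (m⁻¹ * ‖V‖ ^ 2) - m⁻¹ ^ 2 * ‖V‖ ^ 2 * m = ‖V‖ ^ 2 / m := by
      field_simp
      ring
    rw [e3] at e2
    rw [norm_smul, mul_pow, Real.norm_eq_abs, sq_abs, mul_div_assoc]
    exact mul_le_mul_of_nonneg_left e2 (sq_nonneg _)
  have hcI := cont_P (γ := γ) c s (h.contI ha) (L ^ 2 / a) (h.bdI ha)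
  have hri : Integrable (fun x => c ^ 2 * ∫ y, ‖G (c • x + s • y)‖ ^ 2 / g (c • x + s • y) ∂γ) γ :=
    (intb hcI (L ^ 2 / a) (fun x => bound_P c s _ (h.bdI ha) x)).const_mul _
  have hfin := integral_mono_of_nonneg (μ := γ) (Eventually.of_forall fun x => by
    have : 0 ≤ ∫ y, g (c • x + s • y) ∂γ :=
      integral_nonneg fun y => ha.le.trans (h.lo _)
    simp only [Pi.zero_apply]
    positivity) hri (Eventually.of_forall pt)
  rw [integral_const_mul, rot_integral hγ hcs (h.contI ha) _ (h.bdI ha)] at hfin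
  exact hfin

lemma one_step {γ : Measure E} {v : ℝ} (hγ : GProp γ v) (hv : 0 ≤ v) {c s : ℝ}
    (hs : 0 ≤ s) (hc0 : 0 ≤ c) (hc1 : c ≤ 1) (hcs : c ^ 2 + s ^ 2 = 1)
    {a B L η M : ℝ} (ha : 0 < a) (hL : 0 ≤ L) (hη : 0 ≤ η) (hM : 0 ≤ M)
    {g : E → ℝ} {G : E → E} (h : Cls a B L η M g G) :
    ∫ x, g x * log (g x) ∂γ - v / 2 * ∫ x, ‖G x‖ ^ 2 / g x ∂γ ≤
      ∫ x, (∫ y, g (c • x + s • y) ∂γ) * log (∫ y, g (c • x + s • y) ∂γ) ∂γ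
      - v / 2 * ∫ x, ‖c • ∫ y, G (c • x + s • y) ∂γ‖ ^ 2 / (∫ y, g (c • x + s • y) ∂γ) ∂γ
      + errT (∫ y, ‖y‖ ^ 2 ∂γ + v) (∫ y, ‖y‖ ^ 3 ∂γ + v * ∫ y, ‖y‖ ^ 1 ∂γ) a s L η M := by
  have := hγ.prob
  have hP := h.P (γ := γ) (s := s) hc0 hc1 hM
  obtain ⟨C, hC⟩ := h.bdH
  obtain ⟨C', hC'⟩ := hP.bdH
  set er := errT (∫ y, ‖y‖ ^ 2 ∂γ + v) (∫ y, ‖y‖ ^ 3 ∂γ + v * ∫ y, ‖y‖ ^ 1 ∂γ) a s L η M with her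
  have pt : ∀ x, ∫ y, g (c • x + s • y) * log (g (c • x + s • y)) ∂γ ≤
      (∫ y, g (c • x + s • y) ∂γ) * log (∫ y, g (c • x + s • y) ∂γ)
      + (s ^ 2 * v / 2) * (∫ y, ‖G (c • x + s • y)‖ ^ 2 / g (c • x + s • y) ∂γ) + er := by
    intro x
    have h1 := local_step hγ hs ha hL hη hM h (c • x)
    have h2 := psi_step hγ hs ha hL hη hM h (c • x)
    have h3 := mul_le_mul_of_nonneg_left h2 (by positivity : 0 ≤ s ^ 2 * v / 2)
    have h4 : er = (L * s ^ 2 * η / a * (∫ y, ‖y‖ ^ 2 ∂γ)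
        + (L * M * s ^ 3 / a + L ^ 3 * s ^ 3 / (2 * a ^ 2)) * ∫ y, ‖y‖ ^ 3 ∂γ)
        + s ^ 2 * v / 2 * (2 * L * η / a
          + (2 * L * M * s / a + L ^ 3 * s / a ^ 2) * ∫ y, ‖y‖ ^ 1 ∂γ) := by
      rw [her, errT]
      field_simp
      ring
    rw [h4]
    linarith
  have i1 := intb (γ := γ) (cont_P (γ := γ) c s h.contH C hC) C (fun x => bound_P c s _ hC x)
  have i2 := intb (γ := γ) hP.contH C' hC'
  have i3 := (intb (γ := γ) (cont_P (γ := γ) c s (h.contI ha) (L ^ 2 / a) (h.bdI ha))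
    (L ^ 2 / a) (fun x => bound_P c s _ (h.bdI ha) x)).const_mul (s ^ 2 * v / 2)
  have key := integral_mono i1 ((i2.add i3).add (integrable_const er)) pt
  rw [rot_integral hγ hcs h.contH C hC, integral_add' (i2.add i3) (integrable_const er),
    integral_add' i2 i3, integral_const_mul, rot_integral hγ hcs (h.contI ha) _ (h.bdI ha)] at key
  simp only [integral_const, probReal_univ, one_smul] at key
  have hf := mul_le_mul_of_nonneg_left (fisher_step hγ hcs ha h) (by positivity : 0 ≤ v / 2)
  have : c ^ 2 = 1 - s ^ 2 := by linarith
  rw [this] at hf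
  nlinarith [key, hf]

lemma iterate_step {γ : Measure E} {v : ℝ} (hγ : GProp γ v) (hv : 0 ≤ v) {c s : ℝ}
    (hs : 0 < s) (hc0 : 0 ≤ c) (hc1 : c ≤ 1) (hcs : c ^ 2 + s ^ 2 = 1)
    {a B : ℝ} (ha : 0 < a) (n : ℕ) : ∀ (L η M : ℝ), 0 ≤ L → 0 ≤ η → 0 ≤ M →
    ∀ (g : E → ℝ) (G : E → E), Cls a B L η M g G →
    ∫ x, g x * log (g x) ∂γ - v / 2 * ∫ x, ‖G x‖ ^ 2 / g x ∂γ ≤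
      (∫ x, g x ∂γ) * log (∫ x, g x ∂γ) + (c ^ 2) ^ n * (L ^ 2 / a * ∫ y, ‖y‖ ^ 2 ∂γ)
      + errT (∫ y, ‖y‖ ^ 2 ∂γ + v) (∫ y, ‖y‖ ^ 3 ∂γ + v * ∫ y, ‖y‖ ^ 1 ∂γ) a s L η M / s ^ 2 := by
  have := hγ.prob
  set K2 := ∫ y, ‖y‖ ^ 2 ∂γ + v with hK2
  set K3 := ∫ y, ‖y‖ ^ 3 ∂γ + v * ∫ y, ‖y‖ ^ 1 ∂γ with hK3
  have k2 : 0 ≤ K2 := add_nonneg (integral_nonneg fun y => by positivity) hv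
  have k3 : 0 ≤ K3 := add_nonneg (integral_nonneg fun y => by positivity)
    (mul_nonneg hv (integral_nonneg fun y => by positivity))
  induction n with
  | zero =>
    intro L η M hL hη hM g G h
    have hgb : ∀ x, ‖g x‖ ≤ max |a| |B| := fun x => abs_le_max_abs_abs (h.lo x) (h.hi x)
    have hgi : Integrable g γ := intb h.contg _ hgb
    obtain ⟨C, hC⟩ := h.bdH
    have hHi := intb (γ := γ) h.contH C hC
    have hq : 0 < g 0 := ha.trans_le (h.lo 0)
    have key := integral_le_comb hγ hHi hgi (g 0 * log (g 0) - (log (g 0) + 1) * g 0)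
      (log (g 0) + 1) 0 0 (L ^ 2 / a) 0 0 (by
        intro y
        have h1 := mul_log_upper2 (ha.trans_le (h.lo y)) hq
        have h2 := h.lip 0 y
        rw [zero_add] at h2
        have h3 : (g y - g 0) ^ 2 / g 0 ≤ L ^ 2 / a * ‖y‖ ^ 2 := by
          have e : (g y - g 0) ^ 2 ≤ (L * ‖y‖) ^ 2 := by
            rw [← sq_abs]
            exact pow_le_pow_left₀ (abs_nonneg _) h2 2
          have := h.lo 0
          calc (g y - g 0) ^ 2 / g 0 ≤ (L * ‖y‖) ^ 2 / a := by gcongr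
            _ = _ := by ring
        simp only [inner_zero_left]
        linarith)
    have hpos : 0 < ∫ y, g y ∂γ := by
      have := integral_mono (integrable_const a) hgi (fun y => h.lo _)
      simp at this
      linarith
    have hlow := mul_log_lower hpos hq
    have hI : 0 ≤ v / 2 * ∫ x, ‖G x‖ ^ 2 / g x ∂γ :=
      mul_nonneg (by positivity) (integral_nonneg fun x => by
        have : 0 < g x := ha.trans_le (h.lo x)
        simp only [Pi.zero_apply]
        positivity)
    have he : 0 ≤ errT K2 K3 a s L η M / s ^ 2 := by
      unfold errT
      positivity
    simp only [pow_zero, one_mul]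
    linarith
  | succ n ih =>
    intro L η M hL hη hM g G h
    have hgb : ∀ x, ‖g x‖ ≤ max |a| |B| := fun x => abs_le_max_abs_abs (h.lo x) (h.hi x)
    have h1 := one_step hγ hv hs.le hc0 hc1 hcs ha hL hη hM h
    have h2 := ih (c * L) (c * η) (c * M) (by positivity) (by positivity) (by positivity) _ _
      (h.P (γ := γ) (s := s) hc0 hc1 hM)
    rw [rot_integral hγ hcs h.contg _ hgb] at h2
    have h3 : errT K2 K3 a s (c * L) (c * η) (c * M) ≤ c ^ 2 * errT K2 K3 a s L η M := by
      unfold errT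
      have : (c * L) ^ 3 ≤ c ^ 2 * L ^ 3 := by
        rw [mul_pow]
        apply mul_le_mul_of_nonneg_right _ (by positivity)
        exact pow_le_pow_of_le_one hc0 hc1 (by norm_num)
      calc _ ≤ c * η * s ^ 2 * (c * L) * K2 / a +
            s ^ 3 * (c * L * (c * M) * K3 / a + c ^ 2 * L ^ 3 * K3 / (2 * a ^ 2)) := by gcongr
        _ = _ := by ring
    have h4 : errT K2 K3 a s (c * L) (c * η) (c * M) / s ^ 2
        ≤ c ^ 2 * errT K2 K3 a s L η M / s ^ 2 := by gcongr
    have h5 : c ^ 2 * errT K2 K3 a s L η M / s ^ 2 + errT K2 K3 a s L η M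
        = errT K2 K3 a s L η M / s ^ 2 := by
      have : c ^ 2 = 1 - s ^ 2 := by linarith
      rw [this]
      field_simp
      ring
    have h6 : (c ^ 2) ^ n * ((c * L) ^ 2 / a * ∫ y, ‖y‖ ^ 2 ∂γ)
      = (c ^ 2) ^ (n + 1) * (L ^ 2 / a * ∫ y, ‖y‖ ^ 2 ∂γ) := by ring
    rw [h6] at h2
    linarith

lemma lsi_cls {γ : Measure E} {v : ℝ} (hγ : GProp γ v) (hv : 0 ≤ v)
    {a B : ℝ} (ha : 0 < a) {L η M : ℝ} (hL : 0 ≤ L) (hη : 0 ≤ η) (hM : 0 ≤ M)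
    {g : E → ℝ} {G : E → E} (h : Cls a B L η M g G) :
    ∫ x, g x * log (g x) ∂γ - v / 2 * ∫ x, ‖G x‖ ^ 2 / g x ∂γ ≤
      (∫ x, g x ∂γ) * log (∫ x, g x ∂γ) + η * (L * (∫ y, ‖y‖ ^ 2 ∂γ + v) / a) := by
  set K2 := ∫ y, ‖y‖ ^ 2 ∂γ + v with hK2
  set K3 := ∫ y, ‖y‖ ^ 3 ∂γ + v * ∫ y, ‖y‖ ^ 1 ∂γ with hK3
  set D := ∫ x, g x * log (g x) ∂γ - v / 2 * ∫ x, ‖G x‖ ^ 2 / g x ∂γ with hD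
  set m := (∫ x, g x ∂γ) * log (∫ x, g x ∂γ) with hm
  have step1 : ∀ s : ℝ, 0 < s → s < 1 → D ≤ m + errT K2 K3 a s L η M / s ^ 2 := by
    intro s hs0 hs1
    have hs2 : 0 ≤ 1 - s ^ 2 := by nlinarith
    have hc2 : √(1 - s ^ 2) ^ 2 = 1 - s ^ 2 := Real.sq_sqrt hs2
    have hc1 : √(1 - s ^ 2) ≤ 1 := by
      rw [Real.sqrt_le_iff]
      constructor <;> nlinarith
    have hn := fun n => iterate_step hγ hv (c := √(1 - s ^ 2)) hs0 (Real.sqrt_nonneg _) hc1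
      (by rw [hc2]; ring) (B := B) ha n L η M hL hη hM g G h
    rw [hc2] at hn
    have ht : Tendsto (fun n : ℕ => m + (1 - s ^ 2) ^ n * (L ^ 2 / a * ∫ y, ‖y‖ ^ 2 ∂γ)
        + errT K2 K3 a s L η M / s ^ 2) atTop
        (𝓝 (m + 0 * (L ^ 2 / a * ∫ y, ‖y‖ ^ 2 ∂γ) + errT K2 K3 a s L η M / s ^ 2)) := by
      refine ((tendsto_const_nhds.add (Tendsto.mul_const _ ?_)).add tendsto_const_nhds)
      exact tendsto_pow_atTop_nhds_zero_of_lt_one hs2 (by nlinarith [pow_pos hs0 2])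
    have := ge_of_tendsto' ht hn
    rw [zero_mul, add_zero] at this
    exact this
  have step2 : ∀ s : ℝ, 0 < s → s < 1 → D ≤ m + η * (L * K2 / a)
      + s * (L * M * K3 / a + L ^ 3 * K3 / (2 * a ^ 2)) := by
    intro s hs0 hs1
    refine (step1 s hs0 hs1).trans (le_of_eq ?_)
    unfold errT
    field_simp
    ring
  have ht : Tendsto (fun s : ℝ => m + η * (L * K2 / a)
      + s * (L * M * K3 / a + L ^ 3 * K3 / (2 * a ^ 2))) (𝓝[>] 0)
      (𝓝 (m + η * (L * K2 / a) + 0 * (L * M * K3 / a + L ^ 3 * K3 / (2 * a ^ 2)))) := by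
    apply Tendsto.mono_left _ nhdsWithin_le_nhds
    apply Continuous.tendsto
    fun_prop
  have := ge_of_tendsto ht (by
    filter_upwards [Ioo_mem_nhdsGT (zero_lt_one (α := ℝ))] with s hs
    exact step2 s hs.1 hs.2)
  simpa using this

/-- log-Sobolev for functions with uniformly continuous bounded gradient. -/
lemma lsi_nice {γ : Measure E} {v : ℝ} (hγ : GProp γ v) (hv : 0 ≤ v)
    {a B L : ℝ} (ha : 0 < a) {g : E → ℝ} {G : E → E}
    (hder : ∀ x, HasFDerivAt g (innerSL ℝ (G x)) x) (hlo : ∀ x, a ≤ g x) (hhi : ∀ x, g x ≤ B)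
    (hbd : ∀ x, ‖G x‖ ≤ L) (huc : UniformContinuous G) :
    ∫ x, g x * log (g x) ∂γ - (∫ x, g x ∂γ) * log (∫ x, g x ∂γ) ≤
      v / 2 * ∫ x, ‖G x‖ ^ 2 / g x ∂γ := by
  have hL : 0 ≤ L := (norm_nonneg _).trans (hbd 0)
  have key : ∀ η : ℝ, 0 < η → ∫ x, g x * log (g x) ∂γ - v / 2 * ∫ x, ‖G x‖ ^ 2 / g x ∂γ ≤
      (∫ x, g x ∂γ) * log (∫ x, g x ∂γ) + η * (L * (∫ y, ‖y‖ ^ 2 ∂γ + v) / a) := by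
    intro η hη
    obtain ⟨δ, hδ, hu⟩ := Metric.uniformContinuous_iff.1 huc η hη
    refine lsi_cls hγ hv ha (M := 2 * L / δ) (B := B) hL hη.le (by positivity)
      ⟨hder, hlo, hhi, huc.continuous, hbd, ?_⟩
    intro x y
    by_cases hxy : dist x y < δ
    · have := hu hxy
      rw [dist_eq_norm] at this
      have : 0 ≤ 2 * L / δ * ‖x - y‖ := by positivity
      linarith
    · rw [dist_eq_norm, not_lt] at hxy
      have h1 : ‖G x - G y‖ ≤ 2 * L := (norm_sub_le _ _).trans (by linarith [hbd x, hbd y])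
      have h2 : 2 * L ≤ 2 * L / δ * ‖x - y‖ := by
        calc 2 * L = 2 * L / δ * δ := by field_simp
          _ ≤ _ := by gcongr
      linarith
  have ht : Tendsto (fun η : ℝ => (∫ x, g x ∂γ) * log (∫ x, g x ∂γ)
      + η * (L * (∫ y, ‖y‖ ^ 2 ∂γ + v) / a)) (𝓝[>] 0)
      (𝓝 ((∫ x, g x ∂γ) * log (∫ x, g x ∂γ) + 0 * (L * (∫ y, ‖y‖ ^ 2 ∂γ + v) / a))) := by
    apply Tendsto.mono_left _ nhdsWithin_le_nhds
    apply Continuous.tendsto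
    fun_prop
  have := ge_of_tendsto ht (by
    filter_upwards [self_mem_nhdsWithin] with η hη
    exact key η hη)
  linarith

end stepB

section stepC

set_option linter.unusedSectionVars false

open Filter Topology InformationTheory

variable {E : Type*} [NormedAddCommGroup E] [InnerProductSpace ℝ E] [FiniteDimensional ℝ E]
  [MeasurableSpace E] [BorelSpace E]

lemma approx_k {γ : Measure E} {v : ℝ} (hγ : GProp γ v) (hv : 0 ≤ v)
    {f : E → ℝ} {W : E → E} (hpos : ∀ x, 0 < f x) (hW : Continuous W)
    (hder : ∀ x, HasFDerivAt f (innerSL ℝ (f x • W x)) x)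
    (hfi : Integrable f γ) (hf1 : ∫ x, f x ∂γ = 1)
    (hJ : Integrable (fun x => ‖W x‖ ^ 2 * f x) γ)
    {χ : E → ℝ} {X : E → E} (hχd : ∀ x, HasFDerivAt χ (innerSL ℝ (X x)) x)
    (hχs : HasCompactSupport χ) (hX : Continuous X)
    (hχ0 : ∀ x, 0 ≤ χ x) (hχ1 : ∀ x, χ x ≤ 1) {G0 : ℝ} (hG0 : ∀ x, ‖X x‖ ≤ G0)
    {k : ℝ} (hk : 0 < k) :
    ∫⁻ x, ENNReal.ofReal (klFun (χ (k • x) ^ 2 * f x + k)) ∂γ ≤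
      ENNReal.ofReal (v / 2 * ((1 + k) * (∫ x, ‖W x‖ ^ 2 * f x ∂γ) + 4 * G0 ^ 2 * (k ^ 2 + k))
        + klFun (∫ x, (χ (k • x) ^ 2 * f x + k) ∂γ)) := by
  have := hγ.prob
  have hf : Continuous f := continuous_iff_continuousAt.2 fun x => (hder x).continuousAt
  have hχ : Continuous χ := continuous_iff_continuousAt.2 fun x => (hχd x).continuousAt
  have hχk : HasCompactSupport (fun x => χ (k • x)) := hχs.comp_smul hk.ne'
  have hG00 : 0 ≤ G0 := (norm_nonneg _).trans (hG0 0)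
  set g : E → ℝ := fun x => χ (k • x) ^ 2 * f x + k with hg
  set G : E → E := fun x => χ (k • x) • (f x • (χ (k • x) • W x + (2 * k) • X (k • x))) with hG
  have hgc : Continuous g := by fun_prop
  have hGc : Continuous G := by fun_prop
  have hGs : HasCompactSupport G := hχk.smul_right
  have hgder : ∀ x, HasFDerivAt g (innerSL ℝ (G x)) x := by
    intro x
    have h1 : HasFDerivAt (fun x : E => k • x) (k • ContinuousLinearMap.id ℝ E) x :=
      (hasFDerivAt_id x).const_smul k
    have h2 := (hχd (k • x)).comp x h1
    have h3 := ((h2.pow 2).mul (hder x)).add_const k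
    have h4 : innerSL ℝ (G x) = ((χ ∘ fun x => k • x) ^ 2) x • innerSL ℝ (f x • W x) +
        f x • ((2 : ℕ) • (χ ∘ fun x => k • x) x ^ (2 - 1)) •
          (innerSL ℝ (X (k • x))).comp (k • ContinuousLinearMap.id ℝ E) := by
      ext z
      simp [hG, inner_smul_left, inner_add_left, inner_smul_right]
      ring
    rw [h4]
    exact h3
  have hlo : ∀ x, k ≤ g x := fun x => by
    have : 0 ≤ χ (k • x) ^ 2 * f x := mul_nonneg (sq_nonneg _) (hpos x).le
    simp only [hg]
    linarith
  have hgpos : ∀ x, 0 < g x := fun x => hk.trans_le (hlo x)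
  obtain ⟨B, hB⟩ : ∃ B, ∀ x, g x ≤ B := by
    have hs : HasCompactSupport (fun x => χ (k • x) * (χ (k • x) * f x)) := hχk.mul_right
    obtain ⟨B, hB⟩ := hs.exists_bound_of_continuous (by fun_prop)
    refine ⟨B + k, fun x => ?_⟩
    have := (le_abs_self _).trans (hB x)
    simp only [hg]
    nlinarith
  obtain ⟨L, hL⟩ := hGs.exists_bound_of_continuous hGc
  have key := lsi_nice hγ hv hk hgder hlo hB hL (hGs.uniformContinuous_of_continuous hGc)
  -- the Fisher information bound
  have fpt : ∀ x, ‖G x‖ ^ 2 / g x ≤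
      (1 + k) * (‖W x‖ ^ 2 * f x) + 4 * G0 ^ 2 * (k ^ 2 + k) * f x := by
    intro x
    have e1 : ‖χ (k • x) • W x + (2 * k) • X (k • x)‖ ≤ ‖W x‖ + 2 * k * G0 := by
      refine (norm_add_le _ _).trans ?_
      rw [norm_smul, norm_smul, Real.norm_eq_abs, Real.norm_eq_abs, abs_of_nonneg (hχ0 _),
        abs_of_nonneg (by positivity)]
      have := mul_le_mul_of_nonneg_right (hχ1 (k • x)) (norm_nonneg (W x))
      have := mul_le_mul_of_nonneg_left (hG0 (k • x)) (by positivity : 0 ≤ 2 * k)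
      linarith
    set U := χ (k • x) • W x + (2 * k) • X (k • x)
    have e2 : ‖U‖ ^ 2 ≤ (1 + k) * ‖W x‖ ^ 2 + 4 * G0 ^ 2 * (k ^ 2 + k) := by
      have h1 := pow_le_pow_left₀ (norm_nonneg _) e1 2
      have h2 : 0 ≤ k * (‖W x‖ - 2 * G0) ^ 2 := by positivity
      nlinarith
    have e3 : ‖G x‖ ^ 2 = χ (k • x) ^ 2 * f x ^ 2 * ‖U‖ ^ 2 := by
      simp only [hG]
      rw [norm_smul, norm_smul, Real.norm_eq_abs, Real.norm_eq_abs, mul_pow, mul_pow, sq_abs,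
        sq_abs]
      ring
    have e4 : ‖G x‖ ^ 2 / g x ≤ f x * ‖U‖ ^ 2 := by
      rw [div_le_iff₀ (hgpos x), e3]
      simp only [hg]
      have : 0 ≤ f x * ‖U‖ ^ 2 * k := mul_nonneg (mul_nonneg (hpos x).le (by positivity)) hk.le
      nlinarith
    have e5 := mul_le_mul_of_nonneg_left e2 (hpos x).le
    linarith
  have hI : ∫ x, ‖G x‖ ^ 2 / g x ∂γ ≤
      (1 + k) * (∫ x, ‖W x‖ ^ 2 * f x ∂γ) + 4 * G0 ^ 2 * (k ^ 2 + k) := by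
    have h1 := integral_mono_of_nonneg (μ := γ) (Eventually.of_forall fun x => by
      have := hgpos x
      simp only [Pi.zero_apply]
      positivity) ((hJ.const_mul (1 + k)).add (hfi.const_mul (4 * G0 ^ 2 * (k ^ 2 + k))))
      (Eventually.of_forall fpt)
    rw [integral_add' (hJ.const_mul (1 + k)) (hfi.const_mul (4 * G0 ^ 2 * (k ^ 2 + k))),
      integral_const_mul, integral_const_mul, hf1, mul_one] at h1
    exact h1
  -- integrability
  have hcls : Cls k B L 0 0 g G → True := fun _ => trivial
  have hgb : ∀ x, ‖g x‖ ≤ max |k| |B| := fun x => abs_le_max_abs_abs (hlo x) (hB x)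
  have hgi : Integrable g γ := intb hgc _ hgb
  obtain ⟨C, hC⟩ := (isCompact_Icc (a := k) (b := B)).exists_bound_of_continuousOn
    (f := fun t : ℝ => t * log t) Real.continuous_mul_log.continuousOn
  have hHi : Integrable (fun x => g x * log (g x)) γ :=
    intb (Real.continuous_mul_log.comp hgc) C fun x => hC _ ⟨hlo x, hB x⟩
  have hki : Integrable (fun x => klFun (g x)) γ :=
    (hHi.add (integrable_const 1)).sub hgi
  have hkint : ∫ x, klFun (g x) ∂γ = ∫ x, g x * log (g x) ∂γ + 1 - ∫ x, g x ∂γ := by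
    have : (fun x => klFun (g x)) = ((fun x => g x * log (g x)) + fun _ => (1 : ℝ)) - g := by
      ext x; simp [klFun_apply]
    rw [this, integral_sub' (hHi.add (integrable_const 1)) hgi,
      integral_add' hHi (integrable_const 1)]
    simp
  rw [← ofReal_integral_eq_lintegral_ofReal hki
    (Eventually.of_forall fun x => klFun_nonneg (hgpos x).le)]
  apply ENNReal.ofReal_le_ofReal
  rw [hkint, klFun_apply]
  have := mul_le_mul_of_nonneg_left hI (by positivity : 0 ≤ v / 2)
  linarith

lemma lsi_general {γ : Measure E} {v : ℝ} (hγ : GProp γ v) (hv : 0 < v)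
    {f : E → ℝ} {W : E → E} (hpos : ∀ x, 0 < f x) (hW : Continuous W)
    (hder : ∀ x, HasFDerivAt f (innerSL ℝ (f x • W x)) x)
    (hfi : Integrable f γ) (hf1 : ∫ x, f x ∂γ = 1) :
    ∫⁻ x, ENNReal.ofReal (klFun (f x)) ∂γ ≤
      ENNReal.ofReal (v / 2) * ∫⁻ x, ENNReal.ofReal (‖W x‖ ^ 2 * f x) ∂γ := by
  have := hγ.prob
  have hf : Continuous f := continuous_iff_continuousAt.2 fun x => (hder x).continuousAt
  have hnn : ∀ x, 0 ≤ ‖W x‖ ^ 2 * f x := fun x => mul_nonneg (by positivity) (hpos x).le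
  by_cases htop : ∫⁻ x, ENNReal.ofReal (‖W x‖ ^ 2 * f x) ∂γ = ⊤
  · rw [htop, ENNReal.mul_top (by simpa using hv)]
    exact le_top
  have hJ : Integrable (fun x => ‖W x‖ ^ 2 * f x) γ :=
    (lintegral_ofReal_ne_top_iff_integrable (Continuous.aestronglyMeasurable (by fun_prop))
      (Eventually.of_forall hnn)).1 htop
  rw [← ofReal_integral_eq_lintegral_ofReal hJ (Eventually.of_forall hnn),
    ← ENNReal.ofReal_mul (by positivity)]
  -- the cutoff
  let b : ContDiffBump (0 : E) := ⟨1, 2, one_pos, one_lt_two⟩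
  have hbs : ContDiff ℝ 1 (b : E → ℝ) := b.contDiff
  have hbc : HasCompactSupport (b : E → ℝ) := b.hasCompactSupport
  let X : E → E := fun x => (InnerProductSpace.toDual ℝ E).symm (fderiv ℝ b x)
  have hXc : Continuous X :=
    (InnerProductSpace.toDual ℝ E).symm.continuous.comp (hbs.continuous_fderiv one_ne_zero)
  have hbd : ∀ x, HasFDerivAt b (innerSL ℝ (X x)) x := by
    intro x
    have h1 : innerSL ℝ (X x) = fderiv ℝ b x := by
      ext z
      simp [X]
    rw [h1]
    exact ((hbs.differentiable one_ne_zero) x).hasFDerivAt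
  obtain ⟨G0, hG0⟩ := (hbc.fderiv (𝕜 := ℝ)).exists_bound_of_continuous
    (hbs.continuous_fderiv one_ne_zero)
  have hX0 : ∀ x, ‖X x‖ ≤ G0 := fun x => by
    simp only [X, LinearIsometryEquiv.norm_map]
    exact hG0 x
  let k : ℕ → ℝ := fun n => 1 / ((n : ℝ) + 1)
  have hkpos : ∀ n, 0 < k n := fun n => by simp only [k]; positivity
  have hk1 : ∀ n, k n ≤ 1 := fun n => by
    simp only [k]
    rw [div_le_one (by positivity)]
    linarith [Nat.cast_nonneg (α := ℝ) n]
  have hk0 : Tendsto k atTop (𝓝 0) := tendsto_one_div_add_atTop_nhds_zero_nat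
  have hglim : ∀ x, Tendsto (fun n => b (k n • x) ^ 2 * f x + k n) atTop (𝓝 (f x)) := by
    intro x
    have h1 : Tendsto (fun n => b (k n • x) ^ 2 * f x + k n) atTop
        (𝓝 (b ((0 : ℝ) • x) ^ 2 * f x + 0)) := by
      refine Tendsto.add (Tendsto.mul_const _ (Tendsto.pow ?_ 2)) hk0
      exact (b.continuous.tendsto _).comp (hk0.smul_const x)
    have h2 : b (0 : E) = 1 := b.one_of_mem_closedBall (by simp [b])
    simpa [h2] using h1
  have hbound : ∀ n x, ‖b (k n • x) ^ 2 * f x + k n‖ ≤ f x + 1 := by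
    intro n x
    have h1 : b (k n • x) ^ 2 ≤ 1 := pow_le_one₀ b.nonneg b.le_one
    have h2 := mul_le_mul_of_nonneg_right h1 (hpos x).le
    rw [Real.norm_eq_abs, abs_of_nonneg
      (add_nonneg (mul_nonneg (sq_nonneg _) (hpos x).le) (hkpos n).le)]
    linarith [hk1 n]
  have hbcont := b.continuous
  have hmlim : Tendsto (fun n => ∫ x, (b (k n • x) ^ 2 * f x + k n) ∂γ) atTop (𝓝 1) := by
    rw [← hf1]
    refine tendsto_integral_of_dominated_convergence (fun x => f x + 1) ?_
      (hfi.add (integrable_const 1)) ?_ (Eventually.of_forall hglim)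
    · intro n
      exact Continuous.aestronglyMeasurable (by fun_prop)
    · exact fun n => Eventually.of_forall (hbound n)
  have hR : Tendsto (fun n => v / 2 * ((1 + k n) * (∫ x, ‖W x‖ ^ 2 * f x ∂γ)
      + 4 * G0 ^ 2 * (k n ^ 2 + k n)) + klFun (∫ x, (b (k n • x) ^ 2 * f x + k n) ∂γ)) atTop
      (𝓝 (v / 2 * ∫ x, ‖W x‖ ^ 2 * f x ∂γ)) := by
    have h1 : Tendsto (fun n => v / 2 * ((1 + k n) * (∫ x, ‖W x‖ ^ 2 * f x ∂γ)
      + 4 * G0 ^ 2 * (k n ^ 2 + k n))) atTop (𝓝 (v / 2 * ((1 + 0) * (∫ x, ‖W x‖ ^ 2 * f x ∂γ)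
      + 4 * G0 ^ 2 * (0 ^ 2 + 0)))) :=
      ((by fun_prop : Continuous fun t : ℝ => v / 2 * ((1 + t) * (∫ x, ‖W x‖ ^ 2 * f x ∂γ)
      + 4 * G0 ^ 2 * (t ^ 2 + t))).tendsto 0).comp hk0
    have h2 := h1.add ((continuous_klFun.tendsto 1).comp hmlim)
    simpa [klFun_one] using h2
  have hR' := ENNReal.tendsto_ofReal hR
  calc ∫⁻ x, ENNReal.ofReal (klFun (f x)) ∂γ
      = ∫⁻ x, liminf (fun n => ENNReal.ofReal (klFun (b (k n • x) ^ 2 * f x + k n))) atTop ∂γ := by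
        refine lintegral_congr fun x => ?_
        exact (ENNReal.tendsto_ofReal
          ((continuous_klFun.tendsto _).comp (hglim x))).liminf_eq.symm
    _ ≤ liminf (fun n => ∫⁻ x, ENNReal.ofReal (klFun (b (k n • x) ^ 2 * f x + k n)) ∂γ) atTop := by
        refine lintegral_liminf_le fun n => ?_
        exact (continuous_klFun.comp (by fun_prop)).measurable.ennreal_ofReal
    _ ≤ liminf (fun n => ENNReal.ofReal (v / 2 * ((1 + k n) * (∫ x, ‖W x‖ ^ 2 * f x ∂γ)
      + 4 * G0 ^ 2 * (k n ^ 2 + k n)) + klFun (∫ x, (b (k n • x) ^ 2 * f x + k n) ∂γ))) atTop := by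
        refine liminf_le_liminf (Eventually.of_forall fun n => ?_)
        exact approx_k hγ hv.le hpos hW hder hfi hf1 hJ hbd hbc hXc (fun x => b.nonneg)
          (fun x => b.le_one) hX0 (hkpos n)
    _ = _ := hR'.liminf_eq

end stepC

end GLSI


/-- Gaussian logarithmic Sobolev inequality: for a `C¹` positive probability
density `p` on `ℝ^d`, the KL divergence of the measure of density `p` from `γ_{σ²}` is at most
`(σ²/2)` times its relative Fisher information
`∫ ‖∇ log p(x) + x/σ²‖² p(x) dx`, the inequality holding in `[0,∞]`. -/
theorem gaussian_logSobolev (d : ℕ) (hd : 1 ≤ d) (σ2 : ℝ) (hσ2 : 0 < σ2)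
    (p : EuclideanSpace ℝ (Fin d) → ℝ) (hp : ContDiff ℝ 1 p) (hpos : ∀ x, 0 < p x)
    (hint : ∫ x, p x = 1) :
    KL (volume.withDensity fun x => ENNReal.ofReal (p x)) (gaussMeasure d σ2) ≤
      ENNReal.ofReal (σ2 / 2) *
        ∫⁻ x, ENNReal.ofReal
          (‖gradient (fun y => Real.log (p y)) x + (1 / σ2) • x‖ ^ 2 * p x) := by
  set γ := gaussMeasure d σ2 with hγdef
  set φ := gaussDensity d σ2 with hφ
  have hγ := GLSI.gprop_gauss d σ2 hσ2
  rw [← hγdef] at hγ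
  have hγp := hγ.prob
  have hφpos : ∀ x, 0 < φ x := fun x => by
    simp only [hφ, gaussDensity]
    positivity
  have hφc : Continuous φ := by
    rw [hφ]; unfold gaussDensity; fun_prop
  have hpc : Continuous p := hp.continuous
  have hpi : Integrable p := by
    by_contra h
    rw [integral_undef h] at hint
    exact zero_ne_one hint
  set f : EuclideanSpace ℝ (Fin d) → ℝ := fun x => p x / φ x with hf
  have hfpos : ∀ x, 0 < f x := fun x => div_pos (hpos x) (hφpos x)
  have hfc : Continuous f := hpc.div hφc fun x => (hφpos x).ne'
  have hφm : Measurable fun x => ENNReal.ofReal (φ x) := hφc.measurable.ennreal_ofReal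
  have hfm : Measurable fun x => ENNReal.ofReal (f x) := hfc.measurable.ennreal_ofReal
  have hfp : ∀ x, φ x * f x = p x := fun x => by
    simp only [hf]
    have := (hφpos x).ne'
    field_simp
  set μ := (volume.withDensity fun x => ENNReal.ofReal (p x)) with hμ
  have hμγ : μ = γ.withDensity fun x => ENNReal.ofReal (f x) := by
    rw [hμ, hγdef, gaussMeasure, ← withDensity_mul _ hφm hfm]
    congr 1
    ext x
    rw [Pi.mul_apply, ← ENNReal.ofReal_mul (hφpos x).le, hfp]
  have hμp : IsProbabilityMeasure μ := by
    constructor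
    rw [hμ, withDensity_apply _ MeasurableSet.univ, Measure.restrict_univ,
      ← ofReal_integral_eq_lintegral_ofReal hpi (Filter.Eventually.of_forall fun x => (hpos x).le),
      hint, ENNReal.ofReal_one]
  have hac : μ ≪ γ := by
    rw [hμγ]; exact withDensity_absolutelyContinuous _ _
  have hrn : μ.rnDeriv γ =ᵐ[γ] fun x => ENNReal.ofReal (f x) := by
    rw [hμγ]; exact Measure.rnDeriv_withDensity _ hfm
  have hKL : KL μ γ = InformationTheory.klDiv μ γ := by
    rw [InformationTheory.klDiv, KL]
    simp [llr_def]
  set W : EuclideanSpace ℝ (Fin d) → EuclideanSpace ℝ (Fin d) :=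
    fun x => gradient (fun y => Real.log (p y)) x + (1 / σ2) • x with hW
  have hlp : ContDiff ℝ 1 (fun y => Real.log (p y)) := hp.log fun x => (hpos x).ne'
  have hWc : Continuous W := by
    refine Continuous.add ?_ (by fun_prop)
    exact (InnerProductSpace.toDual ℝ _).symm.continuous.comp
      (hlp.continuous_fderiv one_ne_zero)
  have hder : ∀ x, HasFDerivAt f (innerSL ℝ (f x • W x)) x := by
    intro x
    have h1 : HasFDerivAt (fun y => Real.log (p y))
        (innerSL ℝ (gradient (fun y => Real.log (p y)) x)) x := by
      have h := ((hlp.differentiable one_ne_zero) x).hasFDerivAt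
      have e : innerSL ℝ (gradient (fun y => Real.log (p y)) x)
          = fderiv ℝ (fun y => Real.log (p y)) x := by
        ext z
        simp [gradient]
      rw [e]
      exact h
    have h2 : HasFDerivAt (fun y : EuclideanSpace ℝ (Fin d) => ‖y‖ ^ 2)
        (2 • innerSL ℝ x) x := (hasStrictFDerivAt_norm_sq x).hasFDerivAt
    have h3 := ((h1.add (h2.const_mul (1 / (2 * σ2)))).exp).const_mul
      (((2 * π * σ2) ^ (-(d : ℝ) / 2))⁻¹)
    have hcpos : 0 < (2 * π * σ2) ^ (-(d : ℝ) / 2) := by positivity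
    have h4 : f = fun y => ((2 * π * σ2) ^ (-(d : ℝ) / 2))⁻¹ *
        Real.exp (Real.log (p y) + 1 / (2 * σ2) * ‖y‖ ^ 2) := by
      ext y
      simp only [hf, hφ, gaussDensity]
      rw [Real.exp_add, Real.exp_log (hpos y)]
      have e : -‖y‖ ^ 2 / (2 * σ2) = -(1 / (2 * σ2) * ‖y‖ ^ 2) := by ring
      rw [e, Real.exp_neg, div_eq_mul_inv, mul_inv, inv_inv]
      ring
    have h5 : innerSL ℝ (f x • W x) = ((2 * π * σ2) ^ (-(d : ℝ) / 2))⁻¹ •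
        Real.exp (Real.log (p x) + 1 / (2 * σ2) * ‖x‖ ^ 2) •
        (innerSL ℝ (gradient (fun y => Real.log (p y)) x) +
          (1 / (2 * σ2)) • (2 • innerSL ℝ x)) := by
      rw [show f x = _ from congrFun h4 x]
      ext z
      simp [hW, inner_smul_left, inner_add_left]
      ring
    rw [h5, h4]
    exact h3
  have hfi : Integrable f γ := by
    rw [hγdef, gaussMeasure, integrable_withDensity_iff_integrable_smul' hφm
      (Filter.Eventually.of_forall fun x => ENNReal.ofReal_lt_top)]
    refine hpi.congr (Filter.Eventually.of_forall fun x => ?_)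
    simp only [smul_eq_mul]
    rw [ENNReal.toReal_ofReal (hφpos x).le, hfp]
  have hf1 : ∫ x, f x ∂γ = 1 := by
    rw [hγdef, gaussMeasure, integral_withDensity_eq_integral_toReal_smul hφm
      (Filter.Eventually.of_forall fun x => ENNReal.ofReal_lt_top), ← hint]
    refine integral_congr_ae (Filter.Eventually.of_forall fun x => ?_)
    simp only [smul_eq_mul]
    rw [ENNReal.toReal_ofReal (hφpos x).le, hfp]
  have key := GLSI.lsi_general hγ hσ2 hfpos hWc hder hfi hf1
  rw [hKL, InformationTheory.klDiv_eq_lintegral_klFun_of_ac hac]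
  have e1 : ∫⁻ x, ENNReal.ofReal (InformationTheory.klFun (μ.rnDeriv γ x).toReal) ∂γ
      = ∫⁻ x, ENNReal.ofReal (InformationTheory.klFun (f x)) ∂γ := by
    refine lintegral_congr_ae ?_
    filter_upwards [hrn] with x hx
    rw [hx, ENNReal.toReal_ofReal (hfpos x).le]
  have e2 : ∫⁻ x, ENNReal.ofReal (‖W x‖ ^ 2 * f x) ∂γ
      = ∫⁻ x, ENNReal.ofReal (‖W x‖ ^ 2 * p x) := by
    rw [hγdef, gaussMeasure, lintegral_withDensity_eq_lintegral_mul _ hφm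
      (Continuous.measurable (by fun_prop)).ennreal_ofReal]
    refine lintegral_congr fun x => ?_
    rw [Pi.mul_apply, ← ENNReal.ofReal_mul (hφpos x).le, ← hfp x]
    congr 1
    ring
  rw [e1, ← e2]
  exact key
end
end

section
/- Assume the data distribution is Gaussian N(μ₀, Σ₀) with Σ₀ symmetric positive definite and λ_max(Σ₀) < σ². Then for every t ∈ [0, T] the score ∇ log p̃_t of the renormalized density is L_t-Lipschitz continuous, where L_t := min{ 1/(σ²(1 − m_t²)) ; 1/(λ_min(Σ₀) m_t²) } + 1/σ², λ_min(Σ₀) denoting the smallest eigenvalue of Σ₀ (the first term in the minimum being interpreted as +∞ when m_t = 1). -/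
open MeasureTheory Real Set Matrix
open scoped ENNReal Classical

noncomputable section

/-- Density of the Gaussian measure `N(μ₀, Σ)` on `ℝ^d`. -/
def gaussDensityM (d : ℕ) (μ0 : EuclideanSpace ℝ (Fin d)) (S : Matrix (Fin d) (Fin d) ℝ)
    (x : EuclideanSpace ℝ (Fin d)) : ℝ :=
  (2 * π) ^ (-(d : ℝ) / 2) * S.det ^ (-(1 : ℝ) / 2) *
    Real.exp (-(1 / 2) * ∑ i, ∑ j, (x i - μ0 i) * S⁻¹ i j * (x j - μ0 j))

/-- The density `p_t` of the forward marginal at time `t` of the Gaussian data distribution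
`N(μ₀, Σ₀)`, namely the density of `N(m_t μ₀, m_t² Σ₀ + σ_t² I_d)`. -/
def gaussForwardDensity (d : ℕ) (σ2 : ℝ) (β : ℝ → ℝ) (μ0 : EuclideanSpace ℝ (Fin d))
    (S0 : Matrix (Fin d) (Fin d) ℝ) (t : ℝ) (x : EuclideanSpace ℝ (Fin d)) : ℝ :=
  gaussDensityM d (mcoef σ2 β t • μ0)
    (mcoef σ2 β t ^ 2 • S0 + scoef σ2 β t ^ 2 • (1 : Matrix (Fin d) (Fin d) ℝ)) x

/-- The Lipschitz constant `L_t = min{1/(σ²(1−m_t²)); 1/(λ_min m_t²)} + 1/σ²`, the first term of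
the minimum being interpreted as `+∞` when `m_t = 1` (here `σ2 = σ²`). -/
def lipConst (σ2 : ℝ) (β : ℝ → ℝ) (lmin t : ℝ) : ℝ :=
  (if mcoef σ2 β t = 1 then 1 / (lmin * mcoef σ2 β t ^ 2)
    else min (1 / (σ2 * (1 - mcoef σ2 β t ^ 2))) (1 / (lmin * mcoef σ2 β t ^ 2))) + 1 / σ2

/-- The matrix operator of a symmetric matrix is symmetric for the inner product. -/
lemma aux_symm {d : ℕ} {A : Matrix (Fin d) (Fin d) ℝ} (hA : A.IsHermitian)
    (x y : EuclideanSpace ℝ (Fin d)) :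
    inner ℝ (toEuclideanCLM (𝕜 := ℝ) A x) y = inner ℝ x (toEuclideanCLM (𝕜 := ℝ) A y) := by
  have h := (isSymmetric_toEuclideanLin_iff.mpr hA) x y
  exact h

/-- Rayleigh quotient lower bound. -/
lemma aux_rayleigh {d : ℕ} {A : Matrix (Fin d) (Fin d) ℝ} (hA : A.IsHermitian) (l : ℝ)
    (hl : ∀ i, l ≤ hA.eigenvalues i) (v : EuclideanSpace ℝ (Fin d)) :
    l * ‖v‖ ^ 2 ≤ inner ℝ v (toEuclideanCLM (𝕜 := ℝ) A v) := by
  have hb : ∀ i, toEuclideanCLM (𝕜 := ℝ) A (hA.eigenvectorBasis i) =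
      hA.eigenvalues i • hA.eigenvectorBasis i := by
    intro i
    ext j
    have := congrFun (hA.mulVec_eigenvectorBasis i) j
    simpa using this
  rw [← real_inner_self_eq_norm_sq, ← hA.eigenvectorBasis.sum_inner_mul_inner v v,
    ← hA.eigenvectorBasis.sum_inner_mul_inner v (toEuclideanCLM (𝕜 := ℝ) A v), Finset.mul_sum]
  refine Finset.sum_le_sum fun i _ => ?_
  rw [← aux_symm hA, hb, real_inner_smul_left, real_inner_comm v]
  have := mul_le_mul_of_nonneg_right (hl i)
    (mul_self_nonneg (inner ℝ v (hA.eigenvectorBasis i) : ℝ))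
  linarith

/-- Operator bound for the inverse. -/
lemma aux_inv {d : ℕ} {S : Matrix (Fin d) (Fin d) ℝ} (hS : IsUnit S.det) (l : ℝ) (hl0 : 0 < l)
    (h : ∀ v, l * ‖v‖ ^ 2 ≤ inner ℝ v (toEuclideanCLM (𝕜 := ℝ) S v))
    (w : EuclideanSpace ℝ (Fin d)) :
    ‖toEuclideanCLM (𝕜 := ℝ) S⁻¹ w‖ ≤ 1 / l * ‖w‖ := by
  set v := toEuclideanCLM (𝕜 := ℝ) S⁻¹ w with hv
  have hw : toEuclideanCLM (𝕜 := ℝ) S v = w := by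
    rw [hv, ← mul_apply_eq_comp, ← map_mul, Matrix.mul_nonsing_inv _ hS, map_one]
    rfl
  have h1 := h v
  rw [hw] at h1
  have h2 := real_inner_le_norm v w
  rcases eq_or_lt_of_le (norm_nonneg v) with h0 | h0
  · rw [← h0]; positivity
  · have h3 : l * ‖v‖ ≤ ‖w‖ := by
      by_contra! hc
      nlinarith
    rw [one_div, ← div_eq_inv_mul, le_div_iff₀ hl0]
    linarith

/-- The gradient of the log-density ratio. -/
lemma aux_grad {d : ℕ} {A : Matrix (Fin d) (Fin d) ℝ} (hA : A.IsHermitian) (K c : ℝ)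
    (μ x : EuclideanSpace ℝ (Fin d)) :
    HasGradientAt (fun z : EuclideanSpace ℝ (Fin d) =>
        K + -(1 / 2) * inner ℝ (z - μ) (toEuclideanCLM (𝕜 := ℝ) A (z - μ)) + ‖z‖ ^ 2 / (2 * c))
      (-(toEuclideanCLM (𝕜 := ℝ) A (x - μ)) + (1 / c) • x) x := by
  rw [hasGradientAt_iff_hasFDerivAt]
  have h1 : HasFDerivAt (fun z : EuclideanSpace ℝ (Fin d) => z - μ)
      (ContinuousLinearMap.id ℝ _) x := (hasFDerivAt_id x).sub_const μ
  have h2 := (toEuclideanCLM (n := Fin d) (𝕜 := ℝ) A).hasFDerivAt.comp x h1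
  have h3 := (((h1.inner ℝ h2).const_mul (-(1 / 2))).const_add K).add
    (((hasFDerivAt_id x).norm_sq).mul_const (2 * c)⁻¹)
  refine (h3.congr_fderiv ?_)
  ext w
  have e1 : inner ℝ (x - μ) (toEuclideanCLM (𝕜 := ℝ) A w) =
    inner ℝ (toEuclideanCLM (𝕜 := ℝ) A (x - μ)) w := (aux_symm hA _ _).symm
  have e2 : inner ℝ w (toEuclideanCLM (𝕜 := ℝ) A (x - μ)) =
    inner ℝ (toEuclideanCLM (𝕜 := ℝ) A (x - μ)) w := real_inner_comm _ _
  simp [fderivInnerCLM_apply, inner_add_left, inner_neg_left, real_inner_smul_left] at e1 e2 ⊢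
  rw [e1, e2]
  simp only [inner_sub_left]
  ring

/-- if the data distribution is `N(μ₀, Σ₀)` with `λ_max(Σ₀) < σ²`, then the
score `∇ log p̃_t` of the renormalized density `p̃_t = p_t/φ_{σ²}` is `L_t`-Lipschitz with
`L_t = min{1/(σ²(1−m_t²)); 1/(λ_min(Σ₀) m_t²)} + 1/σ²`. -/
theorem gaussian_score_lipschitz (d : ℕ) (hd : 1 ≤ d) (σ T : ℝ) (hσ : 0 < σ) (hT : 0 < T)
    (β : ℝ → ℝ) (hβc : ContinuousOn β (Icc 0 T)) (hβpos : ∀ s ∈ Icc (0:ℝ) T, 0 < β s)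
    (hβmono : MonotoneOn β (Icc 0 T))
    (μ0 : EuclideanSpace ℝ (Fin d)) (S0 : Matrix (Fin d) (Fin d) ℝ) (hS0 : S0.PosDef)
    (lmax : ℝ) (hmaxmem : ∃ i, hS0.isHermitian.eigenvalues i = lmax)
    (hub : ∀ i, hS0.isHermitian.eigenvalues i ≤ lmax) (hlt : lmax < σ ^ 2)
    (lmin : ℝ) (hminmem : ∃ i, hS0.isHermitian.eigenvalues i = lmin)
    (hlb : ∀ i, lmin ≤ hS0.isHermitian.eigenvalues i) :
    ∀ t ∈ Icc (0:ℝ) T, ∀ x y : EuclideanSpace ℝ (Fin d),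
      ‖gradient (fun z => Real.log
            (gaussForwardDensity d (σ ^ 2) β μ0 S0 t z / gaussDensity d (σ ^ 2) z)) x -
          gradient (fun z => Real.log
            (gaussForwardDensity d (σ ^ 2) β μ0 S0 t z / gaussDensity d (σ ^ 2) z)) y‖ ≤
        lipConst (σ ^ 2) β lmin t * ‖x - y‖ := by
  intro t ht x y
  have hc : 0 < σ ^ 2 := by positivity
  have hm0 : 0 < mcoef (σ ^ 2) β t := Real.exp_pos _
  have hm1 : mcoef (σ ^ 2) β t ≤ 1 := by
    unfold mcoef
    rw [Real.exp_le_one_iff]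
    have : 0 ≤ ∫ s in (0:ℝ)..t, β s := intervalIntegral.integral_nonneg ht.1
      fun s hs => (hβpos s ⟨hs.1, hs.2.trans ht.2⟩).le
    have h2 : 0 ≤ 1 / (2 * σ ^ 2) := by positivity
    nlinarith [mul_nonneg h2 this]
  have hs2 : scoef (σ ^ 2) β t ^ 2 = σ ^ 2 * (1 - mcoef (σ ^ 2) β t ^ 2) := by
    unfold scoef
    rw [Real.sq_sqrt]
    exact mul_nonneg hc.le (by nlinarith)
  have hlmin : 0 < lmin := by
    obtain ⟨i, hi⟩ := hminmem
    rw [← hi]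
    exact hS0.eigenvalues_pos i
  simp only [gaussForwardDensity, lipConst]
  rw [hs2]
  set m := mcoef (σ ^ 2) β t with hm
  clear_value m
  have hm2 : 0 < m ^ 2 := by positivity
  have hr : 0 ≤ σ ^ 2 * (1 - m ^ 2) := mul_nonneg hc.le (by nlinarith)
  set r := σ ^ 2 * (1 - m ^ 2) with hrdef
  set S := m ^ 2 • S0 + r • (1 : Matrix (Fin d) (Fin d) ℝ) with hS
  have hSpd : S.PosDef :=
    (hS0.smul hm2).add_posSemidef (Matrix.PosSemidef.one.smul hr)
  have hSu : IsUnit S.det := hSpd.det_pos.ne'.isUnit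
  have hA : (S⁻¹).IsHermitian := hSpd.isHermitian.inv
  have hray : ∀ v, (m ^ 2 * lmin + r) * ‖v‖ ^ 2 ≤ inner ℝ v (toEuclideanCLM (𝕜 := ℝ) S v) := by
    intro v
    have h := aux_rayleigh hS0.isHermitian lmin hlb v
    have e : toEuclideanCLM (𝕜 := ℝ) S v = m ^ 2 • toEuclideanCLM (𝕜 := ℝ) S0 v + r • v := by
      rw [hS, map_add, map_smul, map_smul, map_one]
      rfl
    rw [e, inner_add_right, real_inner_smul_right, real_inner_smul_right,
      real_inner_self_eq_norm_sq]
    nlinarith [mul_le_mul_of_nonneg_left h hm2.le]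
  have hl0 : 0 < m ^ 2 * lmin + r := by positivity
  have hinv := aux_inv hSu _ hl0 hray (x - y)
  have hg : ∀ z, gradient (fun z => Real.log
      (gaussDensityM d (m • μ0) S z / gaussDensity d (σ ^ 2) z)) z =
      -(toEuclideanCLM (𝕜 := ℝ) S⁻¹ (z - m • μ0)) + (1 / σ ^ 2) • z := by
    intro z
    apply HasGradientAt.gradient
    have hf : (fun z => Real.log
        (gaussDensityM d (m • μ0) S z / gaussDensity d (σ ^ 2) z)) =
        fun z : EuclideanSpace ℝ (Fin d) =>
        (Real.log ((2 * π) ^ (-(d : ℝ) / 2) * S.det ^ (-(1 : ℝ) / 2)) -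
          Real.log ((2 * π * σ ^ 2) ^ (-(d : ℝ) / 2))) +
        -(1 / 2) * inner ℝ (z - m • μ0) (toEuclideanCLM (𝕜 := ℝ) S⁻¹ (z - m • μ0)) +
          ‖z‖ ^ 2 / (2 * σ ^ 2) := by
      funext z
      have hd0 := hSpd.det_pos
      have p1 : (2 * π) ^ (-(d : ℝ) / 2) * S.det ^ (-(1 : ℝ) / 2) ≠ 0 := by positivity
      have p2 : (2 * π * σ ^ 2) ^ (-(d : ℝ) / 2) ≠ 0 := by positivity
      have q : ∑ i, ∑ j, (z i - (m • μ0) i) * S⁻¹ i j * (z j - (m • μ0) j) =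
          inner ℝ (z - m • μ0) (toEuclideanCLM (𝕜 := ℝ) S⁻¹ (z - m • μ0)) := by
        rw [inner_toEuclideanCLM]
        simp only [dotProduct, mulVec, Finset.mul_sum]
        refine Finset.sum_congr rfl fun i _ => Finset.sum_congr rfl fun j _ => ?_
        simp
        ring
      unfold gaussDensityM gaussDensity
      rw [q, Real.log_div (mul_ne_zero p1 (Real.exp_ne_zero _))
        (mul_ne_zero p2 (Real.exp_ne_zero _)), Real.log_mul p1 (Real.exp_ne_zero _),
        Real.log_mul p2 (Real.exp_ne_zero _), Real.log_exp, Real.log_exp]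
      ring
    rw [hf]
    exact aux_grad hA _ _ _ _
  rw [hg, hg]
  have e : -(toEuclideanCLM (𝕜 := ℝ) S⁻¹ (x - m • μ0)) + (1 / σ ^ 2) • x -
      (-(toEuclideanCLM (𝕜 := ℝ) S⁻¹ (y - m • μ0)) + (1 / σ ^ 2) • y) =
      -(toEuclideanCLM (𝕜 := ℝ) S⁻¹ (x - y)) + (1 / σ ^ 2) • (x - y) := by
    simp only [map_sub, smul_sub]
    abel
  rw [e]
  have hn : ‖-(toEuclideanCLM (𝕜 := ℝ) S⁻¹ (x - y)) + (1 / σ ^ 2) • (x - y)‖ ≤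
      (1 / (m ^ 2 * lmin + r) + 1 / σ ^ 2) * ‖x - y‖ := by
    refine (norm_add_le _ _).trans ?_
    rw [norm_neg, norm_smul, Real.norm_of_nonneg (by positivity : (0:ℝ) ≤ 1 / σ ^ 2), add_mul]
    linarith
  refine hn.trans (mul_le_mul_of_nonneg_right ?_ (norm_nonneg _))
  have hb : 1 / (m ^ 2 * lmin + r) ≤ 1 / (lmin * m ^ 2) :=
    one_div_le_one_div_of_le (by positivity) (by linarith [mul_comm lmin (m ^ 2)])
  refine add_le_add ?_ le_rfl
  split_ifs with h1
  · exact hb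
  · refine le_min ?_ hb
    have : 0 < r := mul_pos hc (by
      have : m < 1 := lt_of_le_of_ne hm1 h1
      nlinarith)
    exact one_div_le_one_div_of_le this (by nlinarith [mul_pos hm2 hlmin])
end
end
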